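/- arXiv:1801.07891 — 3 statements merged into one kernel-verified Lean document; each statement's English description precedes it below -/
import Mathlib

section
/- Let d ≥ 1 and α ∈ (0,1). There exists a constant C ∈ (0,1), depending only on d and α, such that for every open set 𝒬 ⊆ ℝ × ℝ^d × ℝ^d and every g : 𝒬 → ℝ with [g]_{C_ℓ^{2+α}(𝒬)} < ∞, the following holds: at every z₀ = (t₀,x₀,v₀) ∈ 𝒬 the derivative Yg(z₀) := d/ds|_{s=0} g(t₀+s, x₀+s v₀, v₀), the gradient ∇_v g(z₀) and the Hessian D²_v g(z₀) exist, so the kinetic Taylor polynomial T_{z₀}[g] is defined, and moreover C · [g]_{C_{ℓ,0}^{2+α}(𝒬)} ≤ [g]_{C_ℓ^{2+α}(𝒬)} ≤ [g]_{C_{ℓ,0}^{2+α}(𝒬)}. -/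
open Real MeasureTheory
open scoped BigOperators ENNReal

noncomputable section

abbrev E (d : ℕ) := EuclideanSpace ℝ (Fin d)
abbrev Z (d : ℕ) := ℝ × E d × E d

variable {d : ℕ}

/-- The kinetic cylinder `Q_r(z₀)`. -/
def kCyl (r : ℝ) (z₀ : Z d) : Set (Z d) :=
  {z | z₀.1 - r ^ 2 < z.1 ∧ z.1 ≤ z₀.1 ∧
    ‖z.2.1 - z₀.2.1 - (z.1 - z₀.1) • z₀.2.2‖ < r ^ 3 ∧ ‖z.2.2 - z₀.2.2‖ < r}

/-- Partial derivative in the direction `v i`. -/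
def pv (g : Z d → ℝ) (i : Fin d) (z : Z d) : ℝ :=
  deriv (fun s : ℝ => g (z.1, z.2.1, z.2.2 + s • EuclideanSpace.single i (1 : ℝ))) 0

/-- Second partial derivative in `v i`, `v j`. -/
def pvv (g : Z d → ℝ) (i j : Fin d) : Z d → ℝ := pv (pv g j) i

/-- Derivative along the free transport flow:
`Yg(z₀) = d/ds|_{s=0} g(t₀+s, x₀+s v₀, v₀)`. -/
def Yflow (g : Z d → ℝ) (z : Z d) : ℝ :=
  deriv (fun s : ℝ => g (z.1 + s, z.2.1 + s • z.2.2, z.2.2)) 0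

/-- The kinetic Taylor polynomial of `g` at `z₀`, of kinetic degree 2. -/
def kTaylor (g : Z d → ℝ) (z₀ z : Z d) : ℝ :=
  g z₀ + (z.1 - z₀.1) * Yflow g z₀ + (∑ i, pv g i z₀ * (z.2.2 i - z₀.2.2 i))
    + (1 / 2) * ∑ i, ∑ j, pvv g i j z₀ * (z.2.2 i - z₀.2.2 i) * (z.2.2 j - z₀.2.2 j)

/-- Polynomial of kinetic degree at most 2. -/
def kpoly (a b : ℝ) (q : Fin d → ℝ) (M : Matrix (Fin d) (Fin d) ℝ) (z : Z d) : ℝ :=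
  a + b * z.1 + ∑ i, q i * z.2.2 i + (1 / 2) * ∑ i, ∑ j, M i j * z.2.2 i * z.2.2 j

/-- Kinetic Hölder seminorm of order `2 + α` on `Q`, by approximation with polynomials of
kinetic degree at most 2. -/
def kSemi2 (α : ℝ) (Q : Set (Z d)) (g : Z d → ℝ) : ℝ≥0∞ :=
  ⨆ (z₀ ∈ Q) (r : ℝ) (_ : 0 < r) (_ : kCyl r z₀ ⊆ Q),
    (⨅ (a : ℝ) (b : ℝ) (q : Fin d → ℝ) (M : Matrix (Fin d) (Fin d) ℝ),
      ⨆ z ∈ kCyl r z₀, ENNReal.ofReal |g z - kpoly a b q M z|)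
      / ENNReal.ofReal (r ^ (2 + α))

/-- Kinetic Hölder seminorm of order `2 + α` on `Q` defined through the kinetic Taylor
expansion. -/
def kSemiT (α : ℝ) (Q : Set (Z d)) (g : Z d → ℝ) : ℝ≥0∞ :=
  ⨆ (z₀ ∈ Q) (r : ℝ) (_ : 0 < r) (_ : kCyl r z₀ ⊆ Q) (z ∈ kCyl r z₀),
    ENNReal.ofReal (|g z - kTaylor g z₀ z| / r ^ (2 + α))

lemma kpoly_recenter (a b : ℝ) (q : Fin d → ℝ) (M : Matrix (Fin d) (Fin d) ℝ) (z₀ : Z d) :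
    ∃ (a' b' : ℝ) (q' : Fin d → ℝ) (M' : Matrix (Fin d) (Fin d) ℝ), (∀ i j, M' i j = M' j i) ∧
      ∀ z, kpoly a b q M z = kpoly a' b' q' M' (z - z₀) := by
  let M' : Matrix (Fin d) (Fin d) ℝ := fun i j => (M i j + M j i) / 2
  have hM' : ∀ i j, M' i j = M' j i := fun i j => by simp only [M']; ring
  have h1 : ∀ w : Fin d → ℝ, ∑ i, ∑ j, M i j * w i * w j = ∑ i, ∑ j, M' i j * w i * w j := by
    intro w
    have : ∑ i, ∑ j, M j i * w i * w j = ∑ i, ∑ j, M i j * w i * w j := by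
      rw [Finset.sum_comm]
      refine Finset.sum_congr rfl fun i _ => Finset.sum_congr rfl fun j _ => by ring
    have h2 : ∑ i, ∑ j, M' i j * w i * w j
        = (∑ i, ∑ j, M i j * w i * w j + ∑ i, ∑ j, M j i * w i * w j) / 2 := by
      rw [← Finset.sum_add_distrib, Finset.sum_div]
      refine Finset.sum_congr rfl fun i _ => ?_
      rw [← Finset.sum_add_distrib, Finset.sum_div]
      refine Finset.sum_congr rfl fun j _ => ?_
      simp only [M']; ring
    rw [h2, this]; ring
  refine ⟨kpoly a b q M z₀, b, fun i => q i + ∑ j, M' i j * z₀.2.2 j, M', hM', fun z => ?_⟩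
  simp only [kpoly, h1 (fun i => z.2.2 i), h1 (fun i => z₀.2.2 i)]
  simp only [Prod.fst_sub, Prod.snd_sub, PiLp.sub_apply]
  set v : Fin d → ℝ := fun i => z.2.2 i with hv
  set u : Fin d → ℝ := fun i => z₀.2.2 i with hu
  have e1 : ∑ i, (q i + ∑ j, M' i j * z₀.2.2 j) * (z.2.2 i - z₀.2.2 i)
      = ∑ i, q i * v i - ∑ i, q i * u i + ∑ i, ∑ j, M' i j * v i * u j
        - ∑ i, ∑ j, M' i j * u i * u j := by
    rw [← Finset.sum_sub_distrib, ← Finset.sum_add_distrib, ← Finset.sum_sub_distrib]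
    refine Finset.sum_congr rfl fun i _ => ?_
    have s1 : ∑ j, M' i j * v i * u j = v i * ∑ j, M' i j * u j := by
      rw [Finset.mul_sum]; exact Finset.sum_congr rfl fun j _ => by ring
    have s2 : ∑ j, M' i j * u i * u j = u i * ∑ j, M' i j * u j := by
      rw [Finset.mul_sum]; exact Finset.sum_congr rfl fun j _ => by ring
    rw [s1, s2]; simp only [hv, hu]; ring
  have e2 : ∑ i, ∑ j, M' i j * (z.2.2 i - z₀.2.2 i) * (z.2.2 j - z₀.2.2 j)
      = ∑ i, ∑ j, M' i j * v i * v j - ∑ i, ∑ j, M' i j * v i * u j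
        - ∑ i, ∑ j, M' i j * u i * v j + ∑ i, ∑ j, M' i j * u i * u j := by
    simp only [← Finset.sum_sub_distrib, ← Finset.sum_add_distrib]
    refine Finset.sum_congr rfl fun i _ => Finset.sum_congr rfl fun j _ => ?_
    simp only [hv, hu]; ring
  have e3 : ∑ i, ∑ j, M' i j * u i * v j = ∑ i, ∑ j, M' i j * v i * u j := by
    rw [Finset.sum_comm]
    refine Finset.sum_congr rfl fun i _ => Finset.sum_congr rfl fun j _ => ?_
    rw [hM' j i]; ring
  rw [e1, e2, e3]; ring

lemma kpoly_sub (a b : ℝ) (q : Fin d → ℝ) (M : Matrix (Fin d) (Fin d) ℝ)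
    (a' b' : ℝ) (q' : Fin d → ℝ) (M' : Matrix (Fin d) (Fin d) ℝ) (z : Z d) :
    kpoly a b q M z - kpoly a' b' q' M' z = kpoly (a - a') (b - b') (q - q') (M - M') z := by
  simp only [kpoly, Pi.sub_apply, Matrix.sub_apply, sub_mul, Finset.sum_sub_distrib]
  ring

lemma kpoly_eval_t (a b : ℝ) (q : Fin d → ℝ) (M : Matrix (Fin d) (Fin d) ℝ) (τ : ℝ) (x : E d) :
    kpoly a b q M (τ, x, 0) = a + b * τ := by
  simp [kpoly]

lemma kpoly_eval_v (a b : ℝ) (q : Fin d → ℝ) (M : Matrix (Fin d) (Fin d) ℝ) (x : E d)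
    (i j : Fin d) (s s' : ℝ) :
    kpoly a b q M (0, x, s • EuclideanSpace.single i (1 : ℝ) + s' • EuclideanSpace.single j (1 : ℝ))
      = a + q i * s + q j * s' +
        (1 / 2) * (M i i * s ^ 2 + M i j * s * s' + M j i * s * s' + M j j * s' ^ 2) := by
  simp only [kpoly, PiLp.add_apply, PiLp.smul_apply, PiLp.single_apply, smul_eq_mul,
    mul_add, add_mul, Finset.sum_add_distrib, mul_ite, ite_mul, mul_one, mul_zero, zero_mul,
    Finset.sum_ite_eq', Finset.mem_univ, if_true]
  ring

lemma norm_two_single (i j : Fin d) (s s' : ℝ) :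
    ‖s • EuclideanSpace.single i (1 : ℝ) + s' • EuclideanSpace.single j (1 : ℝ)‖ ≤ |s| + |s'| := by
  refine (norm_add_le _ _).trans ?_
  simp [norm_smul]

lemma kpoly_coef {a b : ℝ} {q : Fin d → ℝ} {M : Matrix (Fin d) (Fin d) ℝ}
    (hM : ∀ i j, M i j = M j i) {r ε : ℝ} (hr : 0 < r) (y : E d)
    (H : ∀ (τ : ℝ) (w : E d), -r ^ 2 < τ → τ ≤ 0 → ‖w‖ < r →
      |kpoly a b q M (τ, τ • y, w)| ≤ ε) :
    |a| ≤ ε ∧ |b| * r ^ 2 ≤ 4 * ε ∧ (∀ i, |q i| * r ≤ 2 * ε) ∧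
      ∀ i j, |M i j| * r ^ 2 ≤ 36 * ε := by
  have hr2 : 0 < r ^ 2 := by positivity
  have h0 := H 0 0 (by linarith) le_rfl (by simpa using hr)
  rw [kpoly_eval_t] at h0
  have ht := H (-r ^ 2 / 2) 0 (by linarith) (by linarith) (by simpa using hr)
  rw [kpoly_eval_t] at ht
  have hv : ∀ i j s s', |s| + |s'| < r → |a + q i * s + q j * s' +
        (1 / 2) * (M i i * s ^ 2 + M i j * s * s' + M j i * s * s' + M j j * s' ^ 2)| ≤ ε := by
    intro i j s s' h
    have := H 0 (s • EuclideanSpace.single i (1 : ℝ) + s' • EuclideanSpace.single j (1 : ℝ))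
      (by linarith) le_rfl ((norm_two_single i j s s').trans_lt h)
    rwa [kpoly_eval_v] at this
  have ha : |a| ≤ ε := by simpa using h0
  refine ⟨ha, ?_, ?_, ?_⟩
  · rw [← abs_of_pos hr2, ← abs_mul]
    rw [abs_le] at *
    constructor <;> nlinarith
  · intro i
    have h1 := hv i i (r / 2) 0 (by rw [abs_of_pos (by positivity)]; simp; linarith)
    have h2 := hv i i (-(r / 2)) 0 (by rw [abs_neg, abs_of_pos (by positivity)]; simp; linarith)
    rw [← abs_of_pos hr, ← abs_mul]
    rw [abs_le] at *
    constructor <;> nlinarith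
  · intro i j
    have hp : |r / 3| = r / 3 := abs_of_pos (by positivity)
    have h1 := hv i j (r / 3) (r / 3) (by rw [hp]; linarith)
    have h2 := hv i j (r / 3) 0 (by rw [hp]; simp; linarith)
    have h3 := hv i j 0 (r / 3) (by rw [hp]; simp; linarith)
    rw [hM j i] at h1 h2 h3
    rw [← abs_of_pos hr2, ← abs_mul]
    rw [abs_le] at *
    constructor <;> nlinarith

lemma kpoly_bound {a b : ℝ} {q : Fin d → ℝ} {M : Matrix (Fin d) (Fin d) ℝ}
    {r e : ℝ} (hr : 0 < r) (ha : |a| ≤ e) (hb : |b| * r ^ 2 ≤ e) (hq : ∀ i, |q i| * r ≤ e)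
    (hM : ∀ i j, |M i j| * r ^ 2 ≤ e) (z : Z d) (hz : |z.1| ≤ r ^ 2) (hw : ‖z.2.2‖ ≤ r) :
    |kpoly a b q M z| ≤ e * (2 + d + d ^ 2) := by
  have he : 0 ≤ e := (abs_nonneg _).trans ha
  have hwi : ∀ i, |z.2.2 i| ≤ r := fun i => by
    have := PiLp.norm_apply_le z.2.2 i
    rw [Real.norm_eq_abs] at this; linarith
  have h1 : |b * z.1| ≤ e := by
    rw [abs_mul]; exact (mul_le_mul_of_nonneg_left hz (abs_nonneg _)).trans hb
  have h2 : |∑ i, q i * z.2.2 i| ≤ d * e := by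
    refine (Finset.abs_sum_le_sum_abs _ _).trans ?_
    refine (Finset.sum_le_sum (g := fun _ => e) fun i _ => ?_).trans (by simp)
    rw [abs_mul]; exact (mul_le_mul_of_nonneg_left (hwi i) (abs_nonneg _)).trans (hq i)
  have h3 : |∑ i, ∑ j, M i j * z.2.2 i * z.2.2 j| ≤ d * (d * e) := by
    refine (Finset.abs_sum_le_sum_abs _ _).trans ?_
    refine (Finset.sum_le_sum (g := fun _ => d * e) fun i _ => ?_).trans (by simp)
    refine (Finset.abs_sum_le_sum_abs _ _).trans ?_
    refine (Finset.sum_le_sum (g := fun _ => e) fun j _ => ?_).trans (by simp)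
    rw [abs_mul, abs_mul, mul_assoc]
    refine (mul_le_mul_of_nonneg_left ?_ (abs_nonneg _)).trans (hM i j)
    rw [pow_two]
    exact mul_le_mul (hwi i) (hwi j) (abs_nonneg _) hr.le
  have h4 : 0 ≤ d * (d * e) := by positivity
  unfold kpoly
  rw [abs_le] at *
  constructor <;> nlinarith

lemma kCyl_mono {r R : ℝ} (hr : 0 < r) (h : r ≤ R) (z₀ : Z d) : kCyl r z₀ ⊆ kCyl R z₀ := by
  rintro z ⟨h1, h2, h3, h4⟩
  have e2 : r ^ 2 ≤ R ^ 2 := by gcongr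
  have e3 : r ^ 3 ≤ R ^ 3 := by gcongr
  exact ⟨by linarith, h2, by linarith, by linarith⟩

lemma kCyl_pt {r : ℝ} (hr : 0 < r) (z₀ : Z d) {τ : ℝ} {w : E d} (h1 : -r ^ 2 < τ) (h2 : τ ≤ 0)
    (h3 : ‖w‖ < r) : ((z₀.1 + τ, z₀.2.1 + τ • z₀.2.2, z₀.2.2 + w) : Z d) ∈ kCyl r z₀ := by
  refine ⟨by simp only; linarith, by simp only; linarith, ?_, by simpa using h3⟩
  simp only [add_sub_cancel_left, sub_self, norm_zero]
  positivity

lemma kCyl_v {r : ℝ} (hr : 0 < r) (z₀ : Z d) {w : E d} 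
    (h3 : ‖w‖ < r) : ((z₀.1, z₀.2.1, z₀.2.2 + w) : Z d) ∈ kCyl r z₀ := by
  have := kCyl_pt hr z₀ (τ := 0) (w := w) (by nlinarith) le_rfl h3
  simpa using this

lemma self_mem_kCyl {r : ℝ} (hr : 0 < r) (z₀ : Z d) : z₀ ∈ kCyl r z₀ := by
  have := kCyl_v hr z₀ (w := 0) (by simpa using hr)
  simpa using this

lemma lim_geom {α β R A : ℝ} (hα : 0 < α) (hβ : α ≤ β) (hR : 0 < R) (hA : 0 ≤ A) (c : ℕ → ℝ)
    (h : ∀ k, |c k - c (k + 1)| ≤ A * (R / 2 ^ k) ^ β) :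
    ∃ L, ∀ k, |c k - L| ≤ A * (1 / (1 - (2 : ℝ) ^ (-α))) * (R / 2 ^ k) ^ β := by
  have e : ∀ k : ℕ, (R / 2 ^ k) ^ β = R ^ β * ((2 : ℝ) ^ (-β)) ^ k := by
    intro k
    rw [Real.div_rpow hR.le (by positivity), ← Real.rpow_natCast, ← Real.rpow_natCast,
      ← Real.rpow_mul (by norm_num), ← Real.rpow_mul (by norm_num), div_eq_mul_inv,
      ← Real.rpow_neg (by norm_num)]
    congr 2; ring
  have h1 : (2 : ℝ) ^ (-β) ≤ (2 : ℝ) ^ (-α) :=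
    Real.rpow_le_rpow_of_exponent_le (by norm_num) (by linarith)
  have h2 : (2 : ℝ) ^ (-α) < 1 := Real.rpow_lt_one_of_one_lt_of_neg (by norm_num) (by linarith)
  have hd : ∀ k, dist (c k) (c (k + 1)) ≤ A * R ^ β * ((2 : ℝ) ^ (-β)) ^ k := by
    intro k; rw [Real.dist_eq, mul_assoc, ← e]; exact h k
  have hlt : (2 : ℝ) ^ (-β) < 1 := h1.trans_lt h2
  obtain ⟨L, hL⟩ := cauchySeq_tendsto_of_complete (cauchySeq_of_le_geometric _ _ hlt hd)
  refine ⟨L, fun k => ?_⟩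
  have := dist_le_of_le_geometric_of_tendsto _ _ hlt hd hL k
  rw [Real.dist_eq] at this
  refine this.trans ?_
  rw [e, div_eq_mul_one_div]
  have : 1 / (1 - (2 : ℝ) ^ (-β)) ≤ 1 / (1 - (2 : ℝ) ^ (-α)) :=
    one_div_le_one_div_of_le (by linarith) (by linarith)
  calc _ ≤ A * R ^ β * ((2 : ℝ) ^ (-β)) ^ k * (1 / (1 - (2 : ℝ) ^ (-α))) := by gcongr
    _ = _ := by ring

lemma hasDerivAt_of_bound {f : ℝ → ℝ} {L C γ δ : ℝ} (hγ : 0 < γ) (hδ : 0 < δ)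
    (h : ∀ s, s ≠ 0 → |s| < δ → |f s - f 0 - s * L| ≤ C * |s| ^ (1 + γ)) : HasDerivAt f L 0 := by
  rw [hasDerivAt_iff_isLittleO, Asymptotics.isLittleO_iff]
  intro c hc
  have ht : Filter.Tendsto (fun s : ℝ => C * |s| ^ γ) (nhds 0) (nhds 0) := by
    have : Continuous (fun s : ℝ => C * |s| ^ γ) :=
      continuous_const.mul (continuous_abs.rpow_const fun _ => Or.inr hγ.le)
    have := this.tendsto 0
    simpa [Real.zero_rpow hγ.ne'] using this
  have h1 : ∀ᶠ s : ℝ in nhds 0, C * |s| ^ γ < c := ht.eventually (gt_mem_nhds hc)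
  have h2 : ∀ᶠ s : ℝ in nhds 0, |s| < δ := by
    have := Metric.ball_mem_nhds (0 : ℝ) hδ
    filter_upwards [this] with s hs
    simpa using hs
  filter_upwards [h1, h2] with s hs1 hs2
  by_cases h0 : s = 0
  · simp [h0]
  simp only [Real.norm_eq_abs, sub_zero, smul_eq_mul]
  refine (h s h0 hs2).trans ?_
  rw [Real.rpow_add (abs_pos.2 h0), Real.rpow_one]
  nlinarith [abs_nonneg s]

lemma open_unif {Q : Set (Z d)} (hQ : IsOpen Q) {z₀ : Z d} (hz : z₀ ∈ Q) :
    ∃ R, 0 < R ∧ R ≤ 1 ∧ ∀ z, dist z z₀ < R → kCyl R z ⊆ Q := by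
  obtain ⟨ε, hε, hb⟩ := Metric.isOpen_iff.1 hQ z₀ hz
  have hn := norm_nonneg z₀.2.2
  set R := min 1 (ε / (4 + ‖z₀.2.2‖)) with hRd
  have hR : 0 < R := lt_min one_pos (by positivity)
  have hR1 : R ≤ 1 := min_le_left _ _
  have hRε : R * (4 + ‖z₀.2.2‖) ≤ ε := by
    rw [← le_div_iff₀ (by positivity)]; exact min_le_right _ _
  refine ⟨R, hR, hR1, fun z hz y hy => hb ?_⟩
  obtain ⟨h1, h2, h3, h4⟩ := hy
  rw [Prod.dist_eq, Prod.dist_eq, max_lt_iff, max_lt_iff, Real.dist_eq, dist_eq_norm,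
    dist_eq_norm] at hz
  obtain ⟨g1, g2, g3⟩ := hz
  have hR2 : R ^ 2 ≤ R := by nlinarith
  have hR3 : R ^ 3 ≤ R := by nlinarith [pow_nonneg hR.le 2]
  rw [Metric.mem_ball, Prod.dist_eq, Prod.dist_eq, max_lt_iff, max_lt_iff, Real.dist_eq,
    dist_eq_norm, dist_eq_norm]
  have hτ : |y.1 - z.1| ≤ R ^ 2 := by rw [abs_le]; constructor <;> linarith
  have hvz : ‖z.2.2‖ ≤ ‖z₀.2.2‖ + R := by
    have := norm_add_le (z.2.2 - z₀.2.2) z₀.2.2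
    rw [sub_add_cancel] at this; linarith
  refine ⟨?_, ?_, ?_⟩
  · have := abs_add_le (y.1 - z.1) (z.1 - z₀.1)
    rw [sub_add_sub_cancel] at this
    nlinarith
  · have e : y.2.1 - z₀.2.1 = (y.2.1 - z.2.1 - (y.1 - z.1) • z.2.2) + (y.1 - z.1) • z.2.2
      + (z.2.1 - z₀.2.1) := by abel
    rw [e]
    refine (norm_add₃_le).trans_lt ?_
    rw [norm_smul, Real.norm_eq_abs]
    have : |y.1 - z.1| * ‖z.2.2‖ ≤ R * (‖z₀.2.2‖ + 1) := by
      apply mul_le_mul (by linarith) (by linarith) (norm_nonneg _) hR.le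
    nlinarith
  · have := norm_add_le (y.2.2 - z.2.2) (z.2.2 - z₀.2.2)
    rw [sub_add_sub_cancel] at this
    nlinarith

def kConst (d : ℕ) (α : ℝ) : ℝ :=
  8 * (1 + 288 * (1 / (1 - (2 : ℝ) ^ (-α))) * (2 + d + d ^ 2))

lemma kConst_pos (d : ℕ) {α : ℝ} (hα : 0 < α) : 0 < kConst d α := by
  have h2 : (2 : ℝ) ^ (-α) < 1 := Real.rpow_lt_one_of_one_lt_of_neg (by norm_num) (by linarith)
  have : 0 < 1 - (2 : ℝ) ^ (-α) := by linarith
  unfold kConst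
  positivity

def kGood (α K R : ℝ) (z₀ : Z d) (g : Z d → ℝ) (a b : ℝ) (q : Fin d → ℝ)
    (M : Matrix (Fin d) (Fin d) ℝ) : Prop :=
  ∀ r, 0 < r → r ≤ R → ∀ z ∈ kCyl r z₀, |g z - kpoly a b q M (z - z₀)| ≤ K * r ^ (2 + α)

lemma exists_kGood {α N R : ℝ} (hα0 : 0 < α) (hα1 : α < 1) (hN : 0 ≤ N) (hR : 0 < R)
    (z₀ : Z d) (g : Z d → ℝ)
    (H : ∀ r, 0 < r → r ≤ R → ∃ a b q M, ∀ z ∈ kCyl r z₀,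
      |g z - kpoly a b q M z| ≤ N * r ^ (2 + α)) :
    ∃ a b q M, (∀ i j, M i j = M j i) ∧ kGood α (kConst d α * N) R z₀ g a b q M := by
  set ρ : ℕ → ℝ := fun k => R / 2 ^ k with hρ
  have hρpos : ∀ k, 0 < ρ k := fun k => by simp only [hρ]; positivity
  have hρR : ∀ k, ρ k ≤ R := fun k => by
    simp only [hρ]; exact div_le_self hR.le (one_le_pow₀ (by norm_num))
  have hρs : ∀ k, ρ (k + 1) = ρ k / 2 := fun k => by
    simp only [hρ, pow_succ]; field_simp
  have H' : ∀ k, ∃ a b q M, (∀ i j, M i j = M j i) ∧ ∀ z ∈ kCyl (ρ k) z₀,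
      |g z - kpoly a b q M (z - z₀)| ≤ N * ρ k ^ (2 + α) := by
    intro k
    obtain ⟨a, b, q, M, h⟩ := H (ρ k) (hρpos k) (hρR k)
    obtain ⟨a', b', q', M', hs, h'⟩ := kpoly_recenter a b q M z₀
    exact ⟨a', b', q', M', hs, fun z hz => by rw [← h']; exact h z hz⟩
  choose a b q M hM hg using H'
  have hdiff : ∀ k, _ := fun k => kpoly_coef (a := a k - a (k + 1)) (b := b k - b (k + 1))
    (q := q k - q (k + 1)) (M := M k - M (k + 1)) (r := ρ (k + 1)) (ε := 2 * N * ρ k ^ (2 + α))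
    (fun i j => by simp only [Matrix.sub_apply]; rw [hM k i j, hM (k + 1) i j]) (hρpos _) z₀.2.2
    (by
      intro τ w h1 h2 h3
      have hm := kCyl_pt (hρpos (k + 1)) z₀ h1 h2 h3
      have g2 := hg (k + 1) _ hm
      have g1 := hg k _ (kCyl_mono (hρpos (k + 1)) (by rw [hρs]; linarith [hρpos k]) z₀ hm)
      have e : ((z₀.1 + τ, z₀.2.1 + τ • z₀.2.2, z₀.2.2 + w) : Z d) - z₀
          = (τ, τ • z₀.2.2, w) := by
        ext <;> simp
      rw [e] at g1 g2
      rw [← kpoly_sub]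
      have : ρ (k + 1) ^ (2 + α) ≤ ρ k ^ (2 + α) :=
        Real.rpow_le_rpow (hρpos _).le (by rw [hρs]; linarith [hρpos k]) (by linarith)
      have := mul_le_mul_of_nonneg_left this hN
      rw [abs_le] at *
      constructor <;> linarith)
  have p2 : ∀ k, ρ k ^ (2 + α) = ρ k ^ α * ρ k ^ 2 := fun k => by
    rw [add_comm, Real.rpow_add (hρpos k), Real.rpow_ofNat]
  have p1 : ∀ k, ρ k ^ (2 + α) = ρ k ^ (1 + α) * ρ k := fun k => by
    rw [show 2 + α = (1 + α) + 1 by ring, Real.rpow_add (hρpos k), Real.rpow_one]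
  have hpp : ∀ k (β : ℝ), 0 ≤ N * ρ k ^ β := fun k β =>
    mul_nonneg hN (Real.rpow_nonneg (hρpos k).le _)
  have hA : 0 ≤ 288 * N := by linarith
  obtain ⟨a', ha'⟩ := lim_geom (β := 2 + α) hα0 (by linarith) hR hA a (by
    intro k
    have := (hdiff k).1
    have h0 := hpp k (2 + α)
    change _ ≤ _ * ρ k ^ (2 + α)
    linarith)
  obtain ⟨b', hb'⟩ := lim_geom (β := α) hα0 le_rfl hR hA b (by
    intro k
    have := (hdiff k).2.1
    have h0 := hpp k α
    change _ ≤ _ * ρ k ^ α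
    rw [p2, hρs] at this
    have hs : 0 < ρ k ^ 2 := pow_pos (hρpos k) 2
    refine le_of_mul_le_mul_right ?_ hs
    nlinarith [mul_nonneg h0 hs.le])
  have hq' : ∀ i, ∃ L, _ := fun i => lim_geom (β := 1 + α) hα0 (by linarith) hR hA (fun k => q k i)
    (by
    intro k
    have := (hdiff k).2.2.1 i
    have h0 := hpp k (1 + α)
    change _ ≤ _ * ρ k ^ (1 + α)
    rw [p1, hρs, Pi.sub_apply] at this
    refine le_of_mul_le_mul_right ?_ (hρpos k)
    nlinarith [mul_nonneg h0 (hρpos k).le])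
  have hM' : ∀ i j, ∃ L, _ := fun i j => lim_geom (β := α) hα0 le_rfl hR hA (fun k => M k i j) (by
    intro k
    have := (hdiff k).2.2.2 i j
    have h0 := hpp k α
    change _ ≤ _ * ρ k ^ α
    rw [p2, hρs, Matrix.sub_apply] at this
    have hs : 0 < ρ k ^ 2 := pow_pos (hρpos k) 2
    refine le_of_mul_le_mul_right ?_ hs
    nlinarith [mul_nonneg h0 hs.le])
  choose q' hq' using hq'
  choose M'' hM'' using hM'
  let M' : Matrix (Fin d) (Fin d) ℝ := fun i j => (M'' i j + M'' j i) / 2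
  have hM' : ∀ k i j, |M k i j - M' i j| ≤
      288 * N * (1 / (1 - (2 : ℝ) ^ (-α))) * (R / 2 ^ k) ^ α := by
    intro k i j
    have h1 := hM'' i j k
    have h2 := hM'' j i k
    rw [hM k j i] at h2
    simp only [M']
    rw [abs_le] at *
    constructor <;> linarith
  refine ⟨a', b', q', M', fun i j => by simp only [M']; ring, ?_⟩
  set G := 1 / (1 - (2 : ℝ) ^ (-α)) with hG
  have key : ∀ k, ∀ z ∈ kCyl (ρ k) z₀, |g z - kpoly a' b' q' M' (z - z₀)|
      ≤ (1 + 288 * G * (2 + d + d ^ 2)) * N * ρ k ^ (2 + α) := by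
    intro k z hz
    have h1 := hg k z hz
    have h2 := kpoly_bound (a := a k - a') (b := b k - b') (q := q k - q') (M := M k - M')
      (r := ρ k) (e := 288 * N * G * ρ k ^ (2 + α)) (hρpos k) (ha' k)
      (by rw [p2, ← mul_assoc]; exact mul_le_mul_of_nonneg_right (hb' k) (sq_nonneg _))
      (by intro i; rw [p1, ← mul_assoc]; exact mul_le_mul_of_nonneg_right (hq' i k) (hρpos k).le)
      (by intro i j; rw [p2, ← mul_assoc]
          exact mul_le_mul_of_nonneg_right (hM' k i j) (sq_nonneg _)) (z - z₀)
      (by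
        have := hz.1; have := hz.2.1
        simp only [Prod.fst_sub]
        rw [abs_le]; constructor <;> linarith [sq_nonneg (ρ k)])
      (by simpa using hz.2.2.2.le)
    rw [← kpoly_sub] at h2
    rw [abs_le] at *
    constructor <;> nlinarith
  intro r hr hrR z hz
  obtain ⟨k, hk1, hk2⟩ : ∃ k, ρ (k + 1) < r ∧ r ≤ ρ k := by
    obtain ⟨n, h1, h2⟩ := exists_nat_pow_near (x := R / r) (y := 2)
      (by rw [le_div_iff₀ hr]; linarith) (by norm_num)
    refine ⟨n, ?_, ?_⟩
    · simp only [hρ]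
      rw [div_lt_iff₀ hr] at h2
      rw [div_lt_iff₀ (by positivity)]; linarith
    · simp only [hρ]
      rw [le_div_iff₀ hr] at h1
      rw [le_div_iff₀ (by positivity)]; linarith
  have h1 := key k z (kCyl_mono hr hk2 z₀ hz)
  refine h1.trans ?_
  have hG0 : 0 ≤ G := by
    have h2 : (2 : ℝ) ^ (-α) < 1 := Real.rpow_lt_one_of_one_lt_of_neg (by norm_num) (by linarith)
    exact one_div_nonneg.2 (by linarith)
  have h3 : ρ k ^ (2 + α) ≤ 8 * r ^ (2 + α) := by
    rw [hρs] at hk1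
    calc ρ k ^ (2 + α) ≤ (2 * r) ^ (2 + α) :=
          Real.rpow_le_rpow (hρpos _).le (by linarith) (by linarith)
      _ = 2 ^ (2 + α) * r ^ (2 + α) := Real.mul_rpow (by norm_num) hr.le
      _ ≤ 2 ^ (3 : ℝ) * r ^ (2 + α) := by
          gcongr
          · norm_num
          · linarith
      _ = _ := by norm_num
  have h4 : 0 ≤ (1 + 288 * G * (2 + d + d ^ 2)) * N := by positivity
  refine (mul_le_mul_of_nonneg_left h3 h4).trans (le_of_eq ?_)
  simp only [kConst, hG]; ring

lemma kGood_a {α K R : ℝ} (hα0 : 0 < α) (hR : 0 < R) {z₀ : Z d} {g : Z d → ℝ} {a b : ℝ}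
    {q : Fin d → ℝ} {M : Matrix (Fin d) (Fin d) ℝ} (h : kGood α K R z₀ g a b q M) : a = g z₀ := by
  have ht : Filter.Tendsto (fun s : ℝ => K * s ^ (2 + α)) (nhdsWithin 0 (Set.Ioi 0)) (nhds 0) := by
    have : Continuous (fun s : ℝ => K * s ^ (2 + α)) :=
      continuous_const.mul (continuous_id.rpow_const fun _ => Or.inr (by linarith))
    have := (this.tendsto 0).mono_left (nhdsWithin_le_nhds (s := Set.Ioi 0))
    simpa [Real.zero_rpow (show 2 + α ≠ 0 by linarith)] using this
  have h1 : |g z₀ - a| ≤ 0 := by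
    refine ge_of_tendsto ht ?_
    filter_upwards [Ioc_mem_nhdsGT hR] with r hr
    have := h r hr.1 hr.2 z₀ (self_mem_kCyl hr.1 z₀)
    rw [sub_self] at this
    have e : kpoly a b q M 0 = a := by simp [kpoly]
    rwa [e] at this
  have := abs_nonpos_iff.1 h1
  linarith

lemma kGood_v {α K R : ℝ} (hα0 : 0 < α) (hα1 : α < 1) (hK : 0 ≤ K) (hR : 0 < R) {z₀ : Z d}
    {g : Z d → ℝ} {a b : ℝ}
    {q : Fin d → ℝ} {M : Matrix (Fin d) (Fin d) ℝ} (h : kGood α K R z₀ g a b q M) (i : Fin d) :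
    HasDerivAt (fun s : ℝ => g (z₀.1, z₀.2.1, z₀.2.2 + s • EuclideanSpace.single i (1 : ℝ)))
      (q i) 0 := by
  have ha := kGood_a hα0 hR h
  refine hasDerivAt_of_bound (γ := 1) (δ := min (1 / 2) (R / 2)) (C := 8 * K + |M i i|) one_pos
    (by positivity) ?_
  intro s hs0 hs
  have hs1 : |s| < 1 / 2 := hs.trans_le (min_le_left _ _)
  have hs2 : |s| < R / 2 := hs.trans_le (min_le_right _ _)
  have hsp : 0 < |s| := abs_pos.2 hs0
  have h1 := h (2 * |s|) (by linarith) (by linarith) _ (kCyl_v (by linarith) z₀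
    (w := s • EuclideanSpace.single i (1 : ℝ) + (0 : ℝ) • EuclideanSpace.single i (1 : ℝ))
    ((norm_two_single _ _ _ _).trans_lt (by simp; linarith)))
  have e : ((z₀.1, z₀.2.1, z₀.2.2 + (s • EuclideanSpace.single i (1 : ℝ)
      + (0 : ℝ) • EuclideanSpace.single i (1 : ℝ))) : Z d) - z₀
      = (0, 0, s • EuclideanSpace.single i (1 : ℝ) + (0 : ℝ) • EuclideanSpace.single i (1 : ℝ)) := by
    ext <;> simp
  rw [e, kpoly_eval_v] at h1
  simp only [zero_smul, add_zero] at h1 ⊢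
  rw [← ha]
  have h2 : (2 * |s|) ^ (2 + α) ≤ 8 * |s| ^ (2 : ℝ) := by
    calc (2 * |s|) ^ (2 + α) ≤ (2 * |s|) ^ (2 : ℝ) :=
          Real.rpow_le_rpow_of_exponent_ge (by linarith) (by linarith) (by linarith)
      _ = 4 * |s| ^ (2 : ℝ) := by rw [Real.rpow_ofNat, Real.rpow_ofNat]; ring
      _ ≤ _ := by
        have : 0 ≤ |s| ^ (2 : ℝ) := by positivity
        linarith
  have h3 := mul_le_mul_of_nonneg_left h2 hK
  rw [show (1 : ℝ) + 1 = 2 by norm_num]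
  rw [Real.rpow_ofNat, sq_abs] at *
  have h4 : |M i i * s ^ 2| ≤ |M i i| * s ^ 2 := by rw [abs_mul, abs_of_nonneg (sq_nonneg s)]
  have h5 : 0 ≤ |M i i| * s ^ 2 := by positivity
  rw [abs_le] at h1 h4 ⊢
  constructor <;> nlinarith

lemma kGood_Y {α K N R : ℝ} (hα0 : 0 < α) (hα1 : α < 1) (hK : 0 ≤ K) (hN : 0 ≤ N)
    {Q : Set (Z d)} (hQ : IsOpen Q) (hR : 0 < R) {z₀ : Z d} (hz₀ : z₀ ∈ Q)
    {g : Z d → ℝ} {a b : ℝ}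
    (H : ∀ z ∈ Q, ∀ r, 0 < r → kCyl r z ⊆ Q → ∃ a b q M, ∀ y ∈ kCyl r z,
      |g y - kpoly a b q M y| ≤ N * r ^ (2 + α))
    {q : Fin d → ℝ} {M : Matrix (Fin d) (Fin d) ℝ} (h : kGood α K R z₀ g a b q M) :
    HasDerivAt (fun s : ℝ => g (z₀.1 + s, z₀.2.1 + s • z₀.2.2, z₀.2.2)) b 0 := by
  have ha := kGood_a hα0 hR h
  obtain ⟨R', hR', hR1', hopen⟩ := open_unif hQ hz₀
  have hn := norm_nonneg z₀.2.2
  have hsq : ∀ s : ℝ, 0 < s → (2 * √s) ^ (2 + α) ≤ 8 * s ^ (1 + α / 2) := by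
    intro s hs
    rw [Real.mul_rpow (by norm_num) (Real.sqrt_nonneg _), Real.sqrt_eq_rpow,
      ← Real.rpow_mul hs.le, show 1 / 2 * (2 + α) = 1 + α / 2 by ring]
    have : (2 : ℝ) ^ (2 + α) ≤ 2 ^ (3 : ℝ) :=
      Real.rpow_le_rpow_of_exponent_le (by norm_num) (by linarith)
    have e : (2 : ℝ) ^ (3 : ℝ) = 8 := by norm_num
    rw [e] at this
    gcongr
  -- backward bound
  have hback : ∀ s : ℝ, 0 < s → 2 * √s ≤ R →
      |g (z₀.1 + -s, z₀.2.1 + (-s) • z₀.2.2, z₀.2.2) - g z₀ + s * b| ≤ 8 * K * s ^ (1 + α / 2) := by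
    intro s hs hsR
    have hss := Real.sq_sqrt hs.le
    have hr : 0 < 2 * √s := by positivity
    have h1 := h (2 * √s) hr hsR _ (kCyl_pt hr z₀ (τ := -s) (w := 0) (by nlinarith) (by linarith)
      (by simpa using hs))
    have e : ((z₀.1 + -s, z₀.2.1 + (-s) • z₀.2.2, z₀.2.2 + 0) : Z d) - z₀
      = (-s, (-s) • z₀.2.2, 0) := by
      ext <;> simp
    rw [e, kpoly_eval_t, add_zero, ha] at h1
    have h2 := mul_le_mul_of_nonneg_left (hsq s hs) hK
    rw [abs_le] at h1 ⊢
    constructor <;> linarith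
  have hsec : ∀ s : ℝ, 0 < s → 2 * √s ≤ R' → s * (1 + ‖z₀.2.2‖) < R' →
      |g (z₀.1 + s, z₀.2.1 + s • z₀.2.2, z₀.2.2) - 2 * g z₀
        + g (z₀.1 + -s, z₀.2.1 + (-s) • z₀.2.2, z₀.2.2)| ≤ 32 * N * s ^ (1 + α / 2) := by
    intro s hs hsR hsR2
    have hss := Real.sq_sqrt hs.le
    have hr : 0 < 2 * √s := by positivity
    set z : Z d := (z₀.1 + s, z₀.2.1 + s • z₀.2.2, z₀.2.2) with hz
    have hd : dist z z₀ < R' := by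
      rw [Prod.dist_eq, Prod.dist_eq, max_lt_iff, max_lt_iff, Real.dist_eq, dist_eq_norm,
        dist_eq_norm]
      simp only [hz, add_sub_cancel_left, sub_self, norm_zero, norm_smul, Real.norm_eq_abs,
        abs_of_pos hs]
      exact ⟨by nlinarith, by nlinarith, hR'⟩
    have hc := hopen z hd
    obtain ⟨a1, b1, q1, M1, h1⟩ := H z (hc (self_mem_kCyl hR' z)) (2 * √s) hr
      ((kCyl_mono hr hsR z).trans hc)
    obtain ⟨a2, b2, q2, M2, -, h2⟩ := kpoly_recenter a1 b1 q1 M1 z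
    have f0 := h1 z (self_mem_kCyl hr z)
    have f1 := h1 _ (kCyl_pt hr z (τ := -s) (w := 0) (by nlinarith) (by linarith)
      (by simpa using hs))
    have f2 := h1 _ (kCyl_pt hr z (τ := -(2 * s)) (w := 0) (by nlinarith) (by linarith)
      (by simpa using hs))
    have e : ∀ τ : ℝ, ((z.1 + τ, z.2.1 + τ • z.2.2, z.2.2 + 0) : Z d) - z
      = (τ, τ • z.2.2, 0) := by
      intro τ; ext <;> simp
    have e0 : kpoly a2 b2 q2 M2 0 = a2 := by simp [kpoly]
    rw [h2, sub_self, e0] at f0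
    rw [h2, e, kpoly_eval_t] at f1 f2
    have e1 : ((z.1 + -s, z.2.1 + (-s) • z.2.2, z.2.2 + 0) : Z d) = z₀ := by
      ext <;> simp [hz]
    have e2 : ((z.1 + -(2 * s), z.2.1 + (-(2 * s)) • z.2.2, z.2.2 + 0) : Z d)
        = (z₀.1 + -s, z₀.2.1 + (-s) • z₀.2.2, z₀.2.2) := by
      ext
      · simp [hz]; ring
      · simp [hz]; ring
      · simp [hz]
    rw [e1] at f1
    rw [e2] at f2
    have h2 := mul_le_mul_of_nonneg_left (hsq s hs) hN
    rw [abs_le] at f0 f1 f2 ⊢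
    constructor <;> linarith
  set δ := min ((R / 2) ^ 2) (min ((R' / 2) ^ 2) (R' / (1 + ‖z₀.2.2‖))) with hδ
  have hδp : 0 < δ := by positivity
  refine hasDerivAt_of_bound (γ := α / 2) (δ := δ) (C := 8 * K + 32 * N) (by linarith) hδp ?_
  intro s hs0 hs
  have hsp : 0 < |s| := abs_pos.2 hs0
  have g1 : 2 * √|s| ≤ R := by
    have : √|s| ≤ R / 2 := Real.sqrt_le_iff.2 ⟨by linarith, (hs.trans_le (min_le_left _ _)).le⟩
    linarith
  have g2 : 2 * √|s| ≤ R' := by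
    have : √|s| ≤ R' / 2 := Real.sqrt_le_iff.2
      ⟨by linarith, (hs.trans_le ((min_le_right _ _).trans (min_le_left _ _))).le⟩
    linarith
  have g3 : |s| * (1 + ‖z₀.2.2‖) < R' := by
    rw [← lt_div_iff₀ (by positivity)]
    exact hs.trans_le ((min_le_right _ _).trans (min_le_right _ _))
  have k1 := hback _ hsp g1
  have k2 := hsec _ hsp g2 g3
  have hpow : 0 ≤ |s| ^ (1 + α / 2) := by positivity
  have n1 := mul_nonneg hN hpow
  have n2 := mul_nonneg hK hpow
  simp only [add_zero, zero_smul]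
  have ez : ((z₀.1, z₀.2.1, z₀.2.2) : Z d) = z₀ := rfl
  rw [ez]
  rcases lt_or_gt_of_ne hs0 with hneg | hpos
  · rw [abs_of_neg hneg] at *
    rw [neg_neg] at k1
    rw [abs_le] at k1 ⊢
    constructor <;> linarith
  · rw [abs_of_pos hpos] at *
    rw [abs_le] at k1 k2 ⊢
    constructor <;> linarith

lemma kGood_vv {α K R : ℝ} (hα0 : 0 < α) (hα1 : α < 1) (hK : 0 ≤ K)
    {Q : Set (Z d)} (hQ : IsOpen Q) (hR : 0 < R) {z₀ : Z d} (hz₀ : z₀ ∈ Q)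
    {g : Z d → ℝ} {a b : ℝ}
    (H : ∀ z, ∀ r, 0 < r → kCyl r z ⊆ Q → ∃ a b q M, kGood α K r z g a b q M)
    {q : Fin d → ℝ} {M : Matrix (Fin d) (Fin d) ℝ} (hM : ∀ i j, M i j = M j i)
    (h : kGood α K R z₀ g a b q M) (i j : Fin d) :
    HasDerivAt (fun s : ℝ => pv g j (z₀.1, z₀.2.1, z₀.2.2 + s • EuclideanSpace.single i (1 : ℝ)))
      (M i j) 0 := by
  obtain ⟨R', hR', hR1', hopen⟩ := open_unif hQ hz₀
  have hq0 : pv g j z₀ = q j := (kGood_v hα0 hα1 hK hR h j).deriv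
  refine hasDerivAt_of_bound (γ := α) (δ := min (R / 3) (R' / 3)) (C := 54 * K) hα0
    (by positivity) ?_
  intro s hs0 hs
  have hs1 : |s| < R / 3 := hs.trans_le (min_le_left _ _)
  have hs2 : |s| < R' / 3 := hs.trans_le (min_le_right _ _)
  have hsp : 0 < |s| := abs_pos.2 hs0
  set z : Z d := (z₀.1, z₀.2.1, z₀.2.2 + s • EuclideanSpace.single i (1 : ℝ)) with hz
  have hd : dist z z₀ < R' := by
    rw [Prod.dist_eq, Prod.dist_eq, max_lt_iff, max_lt_iff, Real.dist_eq, dist_eq_norm,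
      dist_eq_norm]
    simp only [hz, add_sub_cancel_left, sub_self, norm_zero, norm_smul, Real.norm_eq_abs, abs_zero]
    refine ⟨hR', hR', ?_⟩
    simp; linarith
  obtain ⟨a1, b1, q1, M1, h1⟩ := H z R' hR' (hopen z hd)
  have hq1 : pv g j z = q1 j := (kGood_v hα0 hα1 hK hR' h1 j).deriv
  have ez : ((z₀.1, z₀.2.1, z₀.2.2 + (0 : ℝ) • EuclideanSpace.single i (1 : ℝ)) : Z d) = z₀ := by
    simp
  rw [ez, hq0, hq1]
  have hr : 0 < 3 * |s| := by linarith
  have A : ∀ s', |s'| = |s| →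
      |g (z.1, z.2.1, z.2.2 + s' • EuclideanSpace.single j (1 : ℝ)) -
        (a1 + q1 j * s' + 1 / 2 * (M1 j j * s' ^ 2))| ≤ K * (3 * |s|) ^ (2 + α) := by
    intro s' hs'
    have := h1 (3 * |s|) hr (by linarith) _ (kCyl_v hr z
      (w := s' • EuclideanSpace.single j (1 : ℝ) + (0 : ℝ) • EuclideanSpace.single j (1 : ℝ))
      ((norm_two_single _ _ _ _).trans_lt (by simp; linarith)))
    have e : ((z.1, z.2.1, z.2.2 + (s' • EuclideanSpace.single j (1 : ℝ)
      + (0 : ℝ) • EuclideanSpace.single j (1 : ℝ))) : Z d) - z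
      = (0, 0, s' • EuclideanSpace.single j (1 : ℝ)
        + (0 : ℝ) • EuclideanSpace.single j (1 : ℝ)) := by
      ext <;> simp
    rw [e, kpoly_eval_v] at this
    simp only [zero_smul, add_zero, mul_zero] at this
    convert this using 4
    ring
  have B : ∀ s', |s'| = |s| →
      |g (z.1, z.2.1, z.2.2 + s' • EuclideanSpace.single j (1 : ℝ)) -
        (a + q i * s + q j * s' +
        (1 / 2) * (M i i * s ^ 2 + M i j * s * s' + M j i * s * s' + M j j * s' ^ 2))|
        ≤ K * (3 * |s|) ^ (2 + α) := by
    intro s' hs'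
    have := h (3 * |s|) hr (by linarith) _ (kCyl_v hr z₀
      (w := s • EuclideanSpace.single i (1 : ℝ) + s' • EuclideanSpace.single j (1 : ℝ))
      ((norm_two_single _ _ _ _).trans_lt (by linarith)))
    have e : ((z₀.1, z₀.2.1, z₀.2.2 + (s • EuclideanSpace.single i (1 : ℝ)
      + s' • EuclideanSpace.single j (1 : ℝ))) : Z d) - z₀
      = (0, 0, s • EuclideanSpace.single i (1 : ℝ)
        + s' • EuclideanSpace.single j (1 : ℝ)) := by
      ext <;> simp
    rw [e, kpoly_eval_v, ← add_assoc] at this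
    exact this
  have A1 := A s rfl
  have A2 := A (-s) (abs_neg s)
  have B1 := B s rfl
  have B2 := B (-s) (abs_neg s)
  rw [hM j i] at B1 B2
  have hp : (3 * |s|) ^ (2 + α) ≤ 27 * (|s| ^ (1 + α) * |s|) := by
    rw [Real.mul_rpow (by norm_num) hsp.le, show 2 + α = (1 + α) + 1 by ring,
      Real.rpow_add hsp, Real.rpow_one, show 1 + α + 1 = 2 + α by ring]
    have : (3 : ℝ) ^ (2 + α) ≤ 3 ^ (3 : ℝ) :=
      Real.rpow_le_rpow_of_exponent_le (by norm_num) (by linarith)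
    have e : (3 : ℝ) ^ (3 : ℝ) = 27 := by norm_num
    rw [e] at this
    gcongr
  have hp := mul_le_mul_of_nonneg_left hp hK
  have fin : |(q1 j - q j - s * M i j) * s| ≤ 54 * K * |s| ^ (1 + α) * |s| := by
    rw [abs_le] at A1 A2 B1 B2 ⊢
    constructor <;> nlinarith
  rw [abs_mul] at fin
  exact le_of_mul_le_mul_right fin hsp

lemma main_aux {α N : ℝ} (hα0 : 0 < α) (hα1 : α < 1) (hN : 0 ≤ N)
    {Q : Set (Z d)} (hQ : IsOpen Q) {g : Z d → ℝ}
    (H : ∀ z ∈ Q, ∀ r, 0 < r → kCyl r z ⊆ Q → ∃ a b q M, ∀ y ∈ kCyl r z,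
      |g y - kpoly a b q M y| ≤ N * r ^ (2 + α))
    {z₀ : Z d} {R : ℝ} (hR : 0 < R) (hRQ : kCyl R z₀ ⊆ Q) :
    ∃ a b q M, kGood α (kConst d α * N) R z₀ g a b q M ∧ a = g z₀ ∧
      HasDerivAt (fun s : ℝ => g (z₀.1 + s, z₀.2.1 + s • z₀.2.2, z₀.2.2)) b 0 ∧
      (∀ i, HasDerivAt
        (fun s : ℝ => g (z₀.1, z₀.2.1, z₀.2.2 + s • EuclideanSpace.single i (1 : ℝ))) (q i) 0) ∧
      (∀ i j, HasDerivAt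
        (fun s : ℝ => pv g j (z₀.1, z₀.2.1, z₀.2.2 + s • EuclideanSpace.single i (1 : ℝ)))
          (M i j) 0) := by
  have hK : 0 ≤ kConst d α * N := mul_nonneg (kConst_pos d hα0).le hN
  have HG : ∀ z, ∀ r, 0 < r → kCyl r z ⊆ Q → ∃ a b q M, (∀ i j, M i j = M j i) ∧
      kGood α (kConst d α * N) r z g a b q M := by
    intro z r hr hrQ
    exact exists_kGood hα0 hα1 hN hr z g fun r' h1 h2 =>
      H z (hrQ (self_mem_kCyl hr z)) r' h1 ((kCyl_mono h1 h2 z).trans hrQ)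
  obtain ⟨a, b, q, M, hM, hg⟩ := HG z₀ R hR hRQ
  have hz₀ := hRQ (self_mem_kCyl hR z₀)
  refine ⟨a, b, q, M, hg, kGood_a hα0 hR hg, kGood_Y hα0 hα1 hK hN hQ hR hz₀ H hg,
    kGood_v hα0 hα1 hK hR hg, kGood_vv hα0 hα1 hK hQ hR hz₀ ?_ hM hg⟩
  intro z r hr hrQ
  obtain ⟨a, b, q, M, -, h⟩ := HG z r hr hrQ
  exact ⟨a, b, q, M, h⟩

lemma kTaylor_eq (g : Z d → ℝ) (z₀ z : Z d) :
    kTaylor g z₀ z = kpoly (g z₀) (Yflow g z₀) (fun i => pv g i z₀) (fun i j => pvv g i j z₀)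
      (z - z₀) := by
  simp only [kTaylor, kpoly, Prod.fst_sub, Prod.snd_sub, PiLp.sub_apply]
  ring

lemma kTaylor_poly (g : Z d → ℝ) (z₀ : Z d) :
    ∃ a b q M, ∀ z, kTaylor g z₀ z = kpoly a b q M z := by
  obtain ⟨a, b, q, M, -, h⟩ := kpoly_recenter (g z₀) (Yflow g z₀) (fun i => pv g i z₀)
    (fun i j => pvv g i j z₀) (-z₀)
  refine ⟨a, b, q, M, fun z => ?_⟩
  rw [kTaylor_eq, h, sub_neg_eq_add, sub_add_cancel]

lemma semi_le (α : ℝ) (Q : Set (Z d)) (g : Z d → ℝ) : kSemi2 α Q g ≤ kSemiT α Q g := by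
  refine iSup₂_le fun z₀ hz₀ => iSup_le fun r => iSup₂_le fun hr hrQ => ?_
  have hp : 0 < r ^ (2 + α) := Real.rpow_pos_of_pos hr _
  refine ENNReal.div_le_of_le_mul ?_
  obtain ⟨a, b, q, M, h⟩ := kTaylor_poly g z₀
  refine iInf_le_of_le a <| iInf_le_of_le b <| iInf_le_of_le q <| iInf_le_of_le M ?_
  refine iSup₂_le fun z hz => ?_
  have : ENNReal.ofReal (|g z - kTaylor g z₀ z| / r ^ (2 + α)) ≤ kSemiT α Q g :=
    le_iSup₂_of_le z₀ hz₀ <| le_iSup_of_le r <| le_iSup₂_of_le hr hrQ <|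
      le_iSup₂_of_le z hz le_rfl
  rw [ENNReal.ofReal_div_of_pos hp] at this
  rw [← h]
  rwa [ENNReal.div_le_iff (by simpa using hp) ENNReal.ofReal_ne_top] at this

lemma semi_approx {α N : ℝ} (hN : 0 ≤ N) {Q : Set (Z d)} {g : Z d → ℝ}
    (h : kSemi2 α Q g < ENNReal.ofReal N) :
    ∀ z ∈ Q, ∀ r, 0 < r → kCyl r z ⊆ Q → ∃ a b q M, ∀ y ∈ kCyl r z,
      |g y - kpoly a b q M y| ≤ N * r ^ (2 + α) := by
  intro z₀ hz₀ r hr hrQ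
  have hp : 0 < r ^ (2 + α) := Real.rpow_pos_of_pos hr _
  have h1 : (⨅ (a : ℝ) (b : ℝ) (q : Fin d → ℝ) (M : Matrix (Fin d) (Fin d) ℝ),
      ⨆ z ∈ kCyl r z₀, ENNReal.ofReal |g z - kpoly a b q M z|)
      / ENNReal.ofReal (r ^ (2 + α)) ≤ kSemi2 α Q g :=
    le_iSup₂_of_le z₀ hz₀ <| le_iSup_of_le r <| le_iSup₂_of_le hr hrQ le_rfl
  have h2 := h1.trans_lt h
  rw [ENNReal.div_lt_iff (Or.inl (by simpa using hp)) (Or.inl ENNReal.ofReal_ne_top),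
    ← ENNReal.ofReal_mul hN] at h2
  simp only [iInf_lt_iff] at h2
  obtain ⟨a, b, q, M, h3⟩ := h2
  refine ⟨a, b, q, M, fun y hy => ?_⟩
  have h4 := (le_iSup₂ (f := fun z (_ : z ∈ kCyl r z₀) =>
    ENNReal.ofReal |g z - kpoly a b q M z|) y hy).trans h3.le
  exact (ENNReal.ofReal_le_ofReal_iff (by positivity)).1 h4

/-- If `[g]_{C_ℓ^{2+α}(𝒬)} < ∞` then at every point of `𝒬` the flow derivative, the
velocity gradient and the velocity Hessian of `g` exist, and the seminorms defined via
polynomial approximation and via the kinetic Taylor expansion are comparable: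
`C [g]_{C_{ℓ,0}^{2+α}} ≤ [g]_{C_ℓ^{2+α}} ≤ [g]_{C_{ℓ,0}^{2+α}}` with `C ∈ (0,1)`. -/
theorem kinetic_taylor_seminorm_equivalence
    (d : ℕ) (hd : 1 ≤ d) (α : ℝ) (hα0 : 0 < α) (hα1 : α < 1) :
    ∃ C : ℝ, 0 < C ∧ C < 1 ∧
      ∀ (Q : Set (Z d)), IsOpen Q → ∀ g : Z d → ℝ, kSemi2 α Q g < ⊤ →
        (∀ z₀ ∈ Q,
          DifferentiableAt ℝ (fun s : ℝ => g (z₀.1 + s, z₀.2.1 + s • z₀.2.2, z₀.2.2)) 0 ∧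
          (∀ i, DifferentiableAt ℝ
            (fun s : ℝ => g (z₀.1, z₀.2.1, z₀.2.2 + s • EuclideanSpace.single i (1 : ℝ))) 0) ∧
          (∀ i j, DifferentiableAt ℝ
            (fun s : ℝ => pv g j (z₀.1, z₀.2.1, z₀.2.2 + s • EuclideanSpace.single i (1 : ℝ))) 0)) ∧
        ENNReal.ofReal C * kSemiT α Q g ≤ kSemi2 α Q g ∧
        kSemi2 α Q g ≤ kSemiT α Q g := by
  have hC := kConst_pos d hα0
  refine ⟨1 / (kConst d α + 1), by positivity, by rw [div_lt_one (by linarith)]; linarith, ?_⟩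
  intro Q hQ g hfin
  refine ⟨?_, ?_, semi_le α Q g⟩
  · intro z₀ hz₀
    have hN : 0 ≤ (kSemi2 α Q g).toReal + 1 := by positivity
    have hlt : kSemi2 α Q g < ENNReal.ofReal ((kSemi2 α Q g).toReal + 1) := by
      rw [ENNReal.lt_ofReal_iff_toReal_lt hfin.ne]; linarith
    obtain ⟨R, hR, -, hop⟩ := open_unif hQ hz₀
    obtain ⟨a, b, q, M, -, -, h1, h2, h3⟩ := main_aux hα0 hα1 hN hQ (semi_approx hN hlt) hR
      (hop z₀ (by simpa using hR))
    exact ⟨h1.differentiableAt, fun i => (h2 i).differentiableAt,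
      fun i j => (h3 i j).differentiableAt⟩
  · refine le_of_forall_gt fun c hc => ?_
    obtain ⟨c', hc1, hc2⟩ := exists_between hc
    have hc't : c' ≠ ⊤ := (hc2.trans_le le_top).ne
    set N := c'.toReal with hNd
    have hN : 0 ≤ N := ENNReal.toReal_nonneg
    have hcN : ENNReal.ofReal N = c' := ENNReal.ofReal_toReal hc't
    refine lt_of_le_of_lt ?_ hc2
    have hT : kSemiT α Q g ≤ ENNReal.ofReal (kConst d α * N) := by
      refine iSup₂_le fun z₀ hz₀ => iSup_le fun r => iSup₂_le fun hr hrQ =>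
        iSup₂_le fun z hz => ?_
      have hp : 0 < r ^ (2 + α) := Real.rpow_pos_of_pos hr _
      apply ENNReal.ofReal_le_ofReal
      rw [div_le_iff₀ hp]
      obtain ⟨a, b, q, M, h0, h1, h2, h3, h4⟩ := main_aux hα0 hα1 hN hQ
        (semi_approx hN (by rw [hcN]; exact hc1)) hr hrQ
      have e : kTaylor g z₀ z = kpoly a b q M (z - z₀) := by
        rw [kTaylor_eq]
        have e2 : Yflow g z₀ = b := h2.deriv
        have e3 : (fun i => pv g i z₀) = q := funext fun i => (h3 i).deriv
        have e4 : (fun i j => pvv g i j z₀) = M := funext fun i => funext fun j => (h4 i j).deriv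
        rw [e2, e3, e4, h1]
      rw [e]
      exact h0 r hr le_rfl z hz
    calc _ ≤ ENNReal.ofReal (1 / (kConst d α + 1)) * ENNReal.ofReal (kConst d α * N) := by gcongr
      _ = ENNReal.ofReal (1 / (kConst d α + 1) * (kConst d α * N)) :=
          (ENNReal.ofReal_mul (by positivity)).symm
      _ ≤ ENNReal.ofReal N := by
          apply ENNReal.ofReal_le_ofReal
          rw [one_div, inv_mul_le_iff₀ (by linarith)]
          nlinarith
      _ = c' := hcN
end
end

section
/- Let d ≥ 1. There exists a constant C depending only on d such that the following holds. Let U be an open set containing the closed cylinder [−1,0] × B̄₁ × B̄₁, let S : U → ℝ be continuously differentiable with S, ∂_{x_i} S and ∂_{v_i} S bounded on Q₁ for every i, and let g : U → ℝ be three times continuously differentiable and satisfy (∂_t + v·∇_x) g = Δ_v g + S at every point of U. Then for every i ∈ {1,…,d}: |∂_{x_i} g(0,0,0)| + |∂_{v_i} g(0,0,0)| ≤ C (‖g‖_{L^∞(Q₁)} + ‖S‖_{L^∞(Q₁)} + ‖∂_{x_i} S‖_{L^∞(Q₁)} + ‖∂_{v_i} S‖_{L^∞(Q₁)}). -/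
open Real MeasureTheory
open scoped BigOperators ENNReal

noncomputable section

variable {d : ℕ}

/-- Partial derivative in time. -/
def pt (g : Z d → ℝ) (z : Z d) : ℝ := deriv (fun s => g (s, z.2.1, z.2.2)) z.1

/-- Partial derivative in the direction `x i`. -/
def px (g : Z d → ℝ) (i : Fin d) (z : Z d) : ℝ :=
  deriv (fun s : ℝ => g (z.1, z.2.1 + s • EuclideanSpace.single i (1 : ℝ), z.2.2)) 0

/-- Transport derivative `∂_t g + v ⋅ ∇_x g`. -/
def Yop (g : Z d → ℝ) (z : Z d) : ℝ := pt g z + ∑ i, z.2.2 i * px g i z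

/-- Euclidean norm of the velocity gradient `∇_v g`. -/
def gradvNorm (g : Z d → ℝ) (z : Z d) : ℝ := Real.sqrt (∑ i, (pv g i z) ^ 2)

/-- (Frobenius) norm of the velocity Hessian `D²_v g`. -/
def hessvNorm (g : Z d → ℝ) (z : Z d) : ℝ := Real.sqrt (∑ i, ∑ j, (pvv g i j z) ^ 2)

/-- `g` is `C¹` in `(t,x)` and `C²` in `v` on `Q`, with continuous partial derivatives. -/
structure KinReg (g : Z d → ℝ) (Q : Set (Z d)) : Prop where
  cont : ContinuousOn g Q
  dt : ∀ z ∈ Q, DifferentiableAt ℝ (fun s => g (s, z.2.1, z.2.2)) z.1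
  dx : ∀ z ∈ Q, ∀ i, DifferentiableAt ℝ
    (fun s : ℝ => g (z.1, z.2.1 + s • EuclideanSpace.single i (1 : ℝ), z.2.2)) 0
  dv : ∀ z ∈ Q, ∀ i, DifferentiableAt ℝ
    (fun s : ℝ => g (z.1, z.2.1, z.2.2 + s • EuclideanSpace.single i (1 : ℝ))) 0
  dvv : ∀ z ∈ Q, ∀ i j, DifferentiableAt ℝ
    (fun s : ℝ => pv g j (z.1, z.2.1, z.2.2 + s • EuclideanSpace.single i (1 : ℝ))) 0
  ptc : ContinuousOn (pt g) Q
  pxc : ∀ i, ContinuousOn (px g i) Q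
  pvc : ∀ i, ContinuousOn (pv g i) Q
  pvvc : ∀ i j, ContinuousOn (pvv g i j) Q

/-- Sup norm (in `ℝ≥0∞`) of `h` over the set `Q`. -/
def supAbs (Q : Set (Z d)) (h : Z d → ℝ) : ℝ≥0∞ := ⨆ z ∈ Q, ENNReal.ofReal |h z|

/-- Kinetic Hölder seminorm of exponent `β` on `Q`. -/
def kHolder (β : ℝ) (Q : Set (Z d)) (h : Z d → ℝ) : ℝ≥0∞ :=
  ⨆ (z₀ ∈ Q) (r : ℝ) (_ : 0 < r) (_ : kCyl r z₀ ⊆ Q) (z ∈ kCyl r z₀),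
    ENNReal.ofReal (|h z - h z₀| / r ^ β)

/-- The origin of the kinetic phase space. -/
def zOrigin (d : ℕ) : Z d := ((0 : ℝ), (0 : E d), (0 : E d))

open Filter Topology in
lemma aux_second_test {h h1 : ℝ → ℝ} {c : ℝ} (hd : ∀ᶠ s in 𝓝 (0:ℝ), HasDerivAt h (h1 s) s)
    (hd2 : HasDerivAt h1 c 0) (hm : IsLocalMax h 0) : c ≤ 0 := by
  by_contra hc
  push Not at hc
  have e1 : deriv h =ᶠ[𝓝 0] h1 := hd.mono fun s hs => hs.deriv
  have e2 : deriv (deriv h) 0 = c := by rw [e1.deriv_eq, hd2.deriv]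
  have hmin : IsLocalMin h 0 := isLocalMin_of_deriv_deriv_pos (by rw [e2]; exact hc)
    hm.deriv_eq_zero hd.self_of_nhds.continuousAt
  have e3 : h =ᶠ[𝓝 0] fun _ => h 0 := by
    filter_upwards [hm, hmin] with s a b using le_antisymm a b
  have e4 : deriv h =ᶠ[𝓝 0] fun _ => 0 := by
    have := e3.deriv
    simpa using this
  have := e4.deriv_eq
  rw [e2] at this
  simp at this
  linarith

open Filter Topology in
lemma aux_left_test {h : ℝ → ℝ} {c : ℝ} (hd : HasDerivAt h c 0)
    (hm : ∀ᶠ s in 𝓝[<] (0:ℝ), h s ≤ h 0) : 0 ≤ c := by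
  have h1 : Tendsto (slope h 0) (𝓝[<] 0) (𝓝 c) :=
    (hasDerivAt_iff_tendsto_slope.1 hd).mono_left (nhdsWithin_mono _ (by
      intro x hx; simp at hx ⊢; exact hx.ne))
  refine ge_of_tendsto h1 ?_
  filter_upwards [hm, self_mem_nhdsWithin] with s hs hs0
  rw [slope_def_field]
  simp only [Set.mem_Iio] at hs0
  exact div_nonneg_of_nonpos (by linarith) (by linarith)

/-- first derivative formula -/
lemma aux_first {A b c K : ℝ} {G P Q F T : ℝ → ℝ} {g1 p1 q1 f1 t1 s : ℝ}
    (hG : HasDerivAt G g1 s) (hP : HasDerivAt P p1 s) (hQ : HasDerivAt Q q1 s)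
    (hF : HasDerivAt F f1 s) (hT : HasDerivAt T t1 s) :
    HasDerivAt (fun s => A * G s ^ 2 + (F s * Q s) ^ 2 + 2 * b * (F s ^ 3 * P s) * (F s * Q s)
      + c * (F s ^ 3 * P s) ^ 2 - K * T s)
      (2 * A * G s * g1 + 2 * (F s * Q s + b * (F s ^ 3 * P s)) * (f1 * Q s + F s * q1)
        + 2 * (b * (F s * Q s) + c * (F s ^ 3 * P s)) * (3 * F s ^ 2 * f1 * P s + F s ^ 3 * p1)
        - K * t1) s := by
  have h := (((((hG.pow 2).const_mul A).add ((hF.mul hQ).pow 2)).add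
    ((((hF.pow 3).mul hP).const_mul (2*b)).mul (hF.mul hQ))).add
    ((((hF.pow 3).mul hP).pow 2).const_mul c)).sub (hT.const_mul K)
  refine h.congr_deriv ?_
  try simp only [Pi.mul_apply, Pi.pow_apply, Pi.add_apply]
  push_cast
  ring

open Filter Topology in
lemma aux_second {A b c K t : ℝ} {G P Q F G1 P1 Q1 F1 : ℝ → ℝ} {g2 p2 q2 f2 : ℝ}
    (hG : ∀ᶠ s in 𝓝 (0:ℝ), HasDerivAt G (G1 s) s) (hP : ∀ᶠ s in 𝓝 (0:ℝ), HasDerivAt P (P1 s) s)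
    (hQ : ∀ᶠ s in 𝓝 (0:ℝ), HasDerivAt Q (Q1 s) s) (hF : ∀ᶠ s in 𝓝 (0:ℝ), HasDerivAt F (F1 s) s)
    (hG1 : HasDerivAt G1 g2 0) (hP1 : HasDerivAt P1 p2 0)
    (hQ1 : HasDerivAt Q1 q2 0) (hF1 : HasDerivAt F1 f2 0)
    (hm : IsLocalMax (fun s => A * G s ^ 2 + (F s * Q s) ^ 2
      + 2 * b * (F s ^ 3 * P s) * (F s * Q s) + c * (F s ^ 3 * P s) ^ 2 - K * t) 0) :
    2 * A * (G 0 * g2 + G1 0 ^ 2)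
    + 2 * (F1 0 * Q 0 + F 0 * Q1 0 + b * (3 * F 0 ^ 2 * F1 0 * P 0 + F 0 ^ 3 * P1 0))
        * (F1 0 * Q 0 + F 0 * Q1 0)
    + 2 * (F 0 * Q 0 + b * (F 0 ^ 3 * P 0)) * (f2 * Q 0 + 2 * F1 0 * Q1 0 + F 0 * q2)
    + 2 * (b * (F1 0 * Q 0 + F 0 * Q1 0) + c * (3 * F 0 ^ 2 * F1 0 * P 0 + F 0 ^ 3 * P1 0))
        * (3 * F 0 ^ 2 * F1 0 * P 0 + F 0 ^ 3 * P1 0)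
    + 2 * (b * (F 0 * Q 0) + c * (F 0 ^ 3 * P 0))
        * ((6 * F 0 * F1 0 ^ 2 + 3 * F 0 ^ 2 * f2) * P 0 + 6 * F 0 ^ 2 * F1 0 * P1 0
            + F 0 ^ 3 * p2) ≤ 0 := by
  have hd := (hG.and (hP.and (hQ.and hF))).mono fun s h =>
    aux_first (A := A) (b := b) (c := c) (K := K) h.1 h.2.1 h.2.2.1 h.2.2.2 (hasDerivAt_const s t)
  have a1 := hG.self_of_nhds
  have a2 := hP.self_of_nhds
  have a3 := hQ.self_of_nhds
  have a4 := hF.self_of_nhds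
  refine aux_second_test hd ?_ hm
  have aF2 := ((a4.pow 2).const_mul 3)
  have aF3 := (a4.pow 3).mul a2
  have aFQ := a4.mul a3
  have h := (((((a1.const_mul (2*A)).mul hG1).add
    (((aFQ.add (aF3.const_mul b)).const_mul 2).mul ((hF1.mul a3).add (a4.mul hQ1)))).add
    ((((aFQ.const_mul b).add (aF3.const_mul c)).const_mul 2).mul
      (((aF2.mul hF1).mul a2).add ((a4.pow 3).mul hP1))))).sub
      (hasDerivAt_const (0:ℝ) (K * 0))
  refine h.congr_deriv ?_
  try simp only [Pi.mul_apply, Pi.pow_apply, Pi.add_apply]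
  push_cast
  ring

/-- per-direction algebra -/
lemma aux_T {e m n u w : ℝ} (he : 0 < e) (he1 : 16 * e ≤ 1) :
    -2*m^2 - 2*e^3*n^2 - 4*e^2*m*n - 8*m*u - 16*e^2*m*w - 16*e^2*n*u - 24*e^3*n*w
      - 2*u^2 - 24*e^2*u*w - 30*e^3*w^2 ≤ 49*u^2 + 300*e^3*w^2 := by
  have k1 : 0 ≤ (m + 4*e^2*n)^2 := sq_nonneg _
  have k2 : 0 ≤ (m + 8*u)^2 := sq_nonneg _
  have k3 : 0 ≤ (m + 16*e^2*w)^2 := sq_nonneg _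
  have k4 : 0 ≤ e*(e*n + 16*u)^2 := by positivity
  have k5 : 0 ≤ e^3*(n + 24*w)^2 := by positivity
  have k6 : 0 ≤ e*(e*w + 12*u)^2 := by positivity
  have k7 : 0 ≤ e^3*n^2*(1-16*e) := mul_nonneg (by positivity) (by linarith)
  have k8 : 0 ≤ e^3*w^2*(1-16*e) := mul_nonneg (by positivity) (by linarith)
  have k9 : 0 ≤ u^2*(1-16*e) := mul_nonneg (by positivity) (by linarith)
  have k10 : 0 ≤ e^3*w^2 := by positivity
  have k11 : 0 ≤ e^3*n^2 := by positivity
  nlinarith [sq_nonneg m, sq_nonneg u]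

lemma aux_ab {x y B k : ℝ} (hk : 0 < k) (hy : |y| ≤ B) : x * y ≤ k * x^2 + B^2/(4*k) := by
  have hB : y^2 ≤ B^2 := sq_le_sq' (by linarith [neg_abs_le y]) (by linarith [le_abs_self y])
  have : x * y ≤ k * x^2 + y^2/(4*k) := by
    have h : k * x^2 + y^2/(4*k) - x*y = k * (x - y/(2*k))^2 := by field_simp; ring
    have : 0 ≤ k * (x - y/(2*k))^2 := by positivity
    linarith
  have : y^2/(4*k) ≤ B^2/(4*k) := by gcongr
  linarith

lemma aux_final {e B A M f p q g S Sx Sv l : ℝ} (he : 0 < e) (hB : 1 ≤ B) (heB : 2400 * e * B ≤ 1)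
    (hA : 100 * B ^ 2 + 8 / e ^ 2 ≤ A) (hf0 : 0 ≤ f) (hf1 : f ≤ 1) (hM : 0 < M)
    (hg : |g| ≤ M) (hS : |S| ≤ M) (hSx : |Sx| ≤ M) (hSv : |Sv| ≤ M) (hl : |l| ≤ B) :
    2*A*g*S + 2*(f*q + e^2*(f^3*p))*(f*(Sv - p) + q*l)
     + 2*(e^2*(f*q) + e^3*(f^3*p))*(f^3*Sx + 3*f^2*p*l) - 2*A*q^2
     + B*(49*q^2 + 300*e^3*(f^2*p)^2) ≤ (2*A + 20) * M^2 := by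
  set r := f^2*p with hr
  have he1 : 2400*e ≤ 1 := by nlinarith
  have hAp : 0 < A := by have : 0 < 8/e^2 := by positivity
                         nlinarith
  have hgS : g*S ≤ M^2 := by
    calc g*S ≤ |g*S| := le_abs_self _
      _ = |g| * |S| := abs_mul _ _
      _ ≤ M*M := by gcongr
      _ = M^2 := by ring
  have hf2 : f^2 ≤ 1 := pow_le_one₀ hf0 hf1
  have hf4 : f^4 ≤ 1 := pow_le_one₀ hf0 hf1
  have bd : ∀ (a y k : ℝ), 0 ≤ a → a ≤ 1 → |y| ≤ k → |a*y| ≤ k := by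
    intro a y k h0 h1 h2
    rw [abs_mul, abs_of_nonneg h0]
    nlinarith [abs_nonneg y]
  have e0 : 2*A*g*S + 2*(f*q + e^2*(f^3*p))*(f*(Sv - p) + q*l)
     + 2*(e^2*(f*q) + e^3*(f^3*p))*(f^3*Sx + 3*f^2*p*l) - 2*A*q^2
     + B*(49*q^2 + 300*e^3*(f^2*p)^2) = 2*A*(g*S) + 2*(q*(f^2*Sv)) + 2*e^2*(r*(f^2*Sv)) - 2*(q*r)
     - 2*e^2*r^2 + 2*q^2*(f*l) + 8*e^2*(r*q)*(f*l) + 2*e^2*(q*(f^4*Sx)) + 2*e^3*(r*(f^4*Sx))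
     + 6*e^3*r^2*(f*l) - 2*A*q^2 + B*(49*q^2 + 300*e^3*r^2) := by
    rw [hr]; ring
  rw [e0]
  have t1 : q*(f^2*Sv) ≤ 1*q^2 + (1/4)*M^2 :=
    (aux_ab one_pos (bd _ _ _ (by positivity) hf2 hSv)).trans_eq (by ring)
  have t2 : r*(f^2*Sv) ≤ (1/16)*r^2 + 4*M^2 :=
    (aux_ab (k := 1/16) (by norm_num) (bd _ _ _ (by positivity) hf2 hSv)).trans_eq (by ring)
  have t3 : q*(f^4*Sx) ≤ 1*q^2 + (1/4)*M^2 :=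
    (aux_ab one_pos (bd _ _ _ (by positivity) hf4 hSx)).trans_eq (by ring)
  have t4 : r*(f^4*Sx) ≤ (1/16)*r^2 + 4*M^2 :=
    (aux_ab (k := 1/16) (by norm_num) (bd _ _ _ (by positivity) hf4 hSx)).trans_eq (by ring)
  have hfl := bd _ _ _ hf0 hf1 hl
  have hfl' := abs_le.1 hfl
  have t5 : -2*(q*r) ≤ e^2/8*r^2 + 8/e^2*q^2 := by
    have h : e^2/8*r^2 + 8/e^2*q^2 + 2*(q*r) = (e*r + 8/e*q)^2/8 := by field_simp; ring
    have : 0 ≤ (e*r + 8/e*q)^2/8 := by positivity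
    linarith
  have t6 : q^2*(f*l) ≤ q^2*B := by gcongr; exact hfl'.2
  have t7 : r^2*(f*l) ≤ r^2*B := by gcongr; exact hfl'.2
  have t8 : 8*((r*q)*(f*l)) ≤ 1/8*r^2 + 128*q^2*B^2 := by
    have h1 : (f*l)^2 ≤ B^2 := sq_le_sq' hfl'.1 hfl'.2
    have h2 : q^2*(f*l)^2 ≤ q^2*B^2 := by gcongr
    nlinarith [sq_nonneg (r - 32*(q*(f*l)))]
  have s2 : e^2*(r*(f^2*Sv)) ≤ e^2*((1/16)*r^2 + 4*M^2) := by gcongr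
  have s3 : e^2*(q*(f^4*Sx)) ≤ e^2*(1*q^2 + (1/4)*M^2) := by gcongr
  have s4 : e^3*(r*(f^4*Sx)) ≤ e^3*((1/16)*r^2 + 4*M^2) := by gcongr
  have s7 : e^3*(r^2*(f*l)) ≤ e^3*(r^2*B) := by gcongr
  have s8 : e^2*(8*((r*q)*(f*l))) ≤ e^2*(1/8*r^2 + 128*q^2*B^2) := by gcongr
  have s1 : A*(g*S) ≤ A*M^2 := by gcongr
  have he2 : e ≤ 1/2400 := by linarith
  have c1 : e^2 ≤ 1/1000 := by
    have : e*e ≤ (1/2400)*(1/2400) := by gcongr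
    rw [pow_two]; linarith
  have c2 : e^3 ≤ e^2 := by
    have : e^2*e ≤ e^2*1 := by gcongr; linarith
    calc e^3 = e^2*e := by ring
      _ ≤ e^2 := by linarith
  have c3 : e^2*r^2*(2400*e*B) ≤ e^2*r^2*1 := by gcongr
  have c4 : e^3*r^2 ≤ e^2*r^2 := by gcongr
  have c5 : e^2*M^2 ≤ 1/1000*M^2 := by gcongr
  have c6 : e^3*M^2 ≤ e^2*M^2 := by gcongr
  have c7 : e^2*q^2 ≤ 1/1000*q^2 := by gcongr
  have c8 : e^2*(q^2*B^2) ≤ 1/1000*(q^2*B^2) := by gcongr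
  have c9 : (100 * B ^ 2 + 8 / e ^ 2)*q^2 ≤ A*q^2 := by gcongr
  have c10 : q^2*B ≤ q^2*B^2 := by gcongr; exact le_self_pow₀ hB two_ne_zero
  have c11 : q^2*1 ≤ q^2*B := by gcongr
  have c12 : 0 ≤ e^2*r^2 := by positivity
  have c13 : 0 ≤ 8/e^2*q^2 := by positivity
  have c14 : 0 ≤ M^2 := by positivity
  have c15 : 0 ≤ q^2 := by positivity
  clear hA e0
  generalize 8/e^2 = k at *
  linarith

/-- full algebra -/
lemma aux_alg {d : ℕ} {e B A M K f p q g S Sx Sv yf yg yp yq : ℝ}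
    {fj gj pj qj fjj gjj pjj qjj : Fin d → ℝ}
    (he : 0 < e) (hB : 1 ≤ B) (heB : 2400 * e * B ≤ 1)
    (hA : 100 * B ^ 2 + 8 / e ^ 2 ≤ A) (hf0 : 0 ≤ f) (hf1 : f ≤ 1) (hM : 0 < M)
    (hg : |g| ≤ M) (hS : |S| ≤ M) (hSx : |Sx| ≤ M) (hSv : |Sv| ≤ M)
    (hl : |yf - ∑ j, fjj j| ≤ B) (hfj : ∑ j, fj j ^ 2 ≤ B)
    (i : Fin d) (hi : gj i = q)
    (eg : yg = ∑ j, gjj j + S) (ep : yp = ∑ j, pjj j + Sx) (eq : yq = ∑ j, qjj j + Sv - p)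
    (hY : 0 ≤ 2 * A * g * yg + 2 * (f * q + e^2 * (f ^ 3 * p)) * (yf * q + f * yq)
        + 2 * (e^2 * (f * q) + e^3 * (f ^ 3 * p)) * (3 * f ^ 2 * yf * p + f ^ 3 * yp)
        - K * 1)
    (hJ : ∀ j, 2 * A * (g * gjj j + gj j ^ 2)
    + 2 * (fj j * q + f * qj j + e^2 * (3 * f ^ 2 * fj j * p + f ^ 3 * pj j))
        * (fj j * q + f * qj j)
    + 2 * (f * q + e^2 * (f ^ 3 * p)) * (fjj j * q + 2 * fj j * qj j + f * qjj j)
    + 2 * (e^2 * (fj j * q + f * qj j) + e^3 * (3 * f ^ 2 * fj j * p + f ^ 3 * pj j))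
        * (3 * f ^ 2 * fj j * p + f ^ 3 * pj j)
    + 2 * (e^2 * (f * q) + e^3 * (f ^ 3 * p))
        * ((6 * f * fj j ^ 2 + 3 * f ^ 2 * fjj j) * p + 6 * f ^ 2 * fj j * pj j
            + f ^ 3 * pjj j) ≤ 0) :
    K ≤ (2*A + 20) * M^2 := by
  have he1 : 16 * e ≤ 1 := by nlinarith
  have hAp : 0 < A := by have : 0 < 8/e^2 := by positivity
                         nlinarith
  have hj' : ∀ j, 2*A*g*gjj j + 2*A*gj j^2
      + 2 * (f * q + e^2 * (f ^ 3 * p)) * f * qjj j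
      + 2 * (e^2 * (f * q) + e^3 * (f ^ 3 * p)) * f^3 * pjj j
      + (2 * (f * q + e^2 * (f ^ 3 * p)) * q + 2 * (e^2 * (f * q) + e^3 * (f ^ 3 * p))*3*f^2*p)
        * fjj j - (49*q^2 + 300*e^3*(f^2*p)^2) * fj j^2 ≤ 0 := by
    intro j
    have h1 := hJ j
    have h2 := aux_T (m := f * qj j) (n := f^3*pj j) (u := fj j * q) (w := fj j * (f^2*p)) he he1
    linarith
  have hs := Finset.sum_nonpos (s := Finset.univ) fun j _ => hj' j
  simp only [Finset.sum_add_distrib, Finset.sum_sub_distrib, ← Finset.mul_sum] at hs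
  have h3 : gj i^2 ≤ ∑ j, gj j^2 :=
    Finset.single_le_sum (f := fun j => gj j^2) (fun j _ => sq_nonneg _) (Finset.mem_univ i)
  rw [hi] at h3
  have h4 : 2*A*q^2 ≤ 2*A*∑ j, gj j^2 := by gcongr
  have h5 : (49*q^2 + 300*e^3*(f^2*p)^2) * ∑ j, fj j^2 ≤ (49*q^2 + 300*e^3*(f^2*p)^2) * B := by
    gcongr
  have h6 := aux_final (p := p) (q := q) he hB heB hA hf0 hf1 hM hg hS hSx hSv hl
  subst eg ep eq
  linarith

def auxD {d : ℕ} (a : Z d) (f : Z d → ℝ) : Z d → ℝ := fun z => fderiv ℝ f z a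
def auxX {d : ℕ} (i : Fin d) : Z d := ((0:ℝ), (EuclideanSpace.single i (1:ℝ) : E d), (0 : E d))
def auxV {d : ℕ} (i : Fin d) : Z d := ((0:ℝ), (0 : E d), (EuclideanSpace.single i (1:ℝ) : E d))
def auxY {d : ℕ} (z : Z d) : Z d := ((1:ℝ), z.2.2, (0 : E d))

lemma auxD_contDiffOn {d : ℕ} {U : Set (Z d)} (hU : IsOpen U) {f : Z d → ℝ} {n m : WithTop ℕ∞}
    (hnm : m + 1 ≤ n) (hf : ContDiffOn ℝ n f U) (a : Z d) : ContDiffOn ℝ m (auxD a f) U :=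
  (hf.fderiv_of_isOpen hU hnm).clm_apply contDiffOn_const

lemma aux_diffAt {d : ℕ} {U : Set (Z d)} (hU : IsOpen U) {f : Z d → ℝ} 
    (hf : ContDiffOn ℝ 1 f U) {z : Z d} (hz : z ∈ U) : DifferentiableAt ℝ f z :=
  (hf.contDiffAt (hU.mem_nhds hz)).differentiableAt (by norm_num)

lemma aux_diffAt' {d : ℕ} {U : Set (Z d)} (hU : IsOpen U) {f : Z d → ℝ} 
    (hf : ContDiffOn ℝ 2 f U) {z : Z d} (hz : z ∈ U) : DifferentiableAt ℝ (fderiv ℝ f) z :=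
  ((hf.fderiv_of_isOpen (m := 1) hU (by norm_num)).contDiffAt
    (hU.mem_nhds hz)).differentiableAt (by norm_num)

lemma auxD_apply {d : ℕ} {U : Set (Z d)} (hU : IsOpen U) {f : Z d → ℝ}
    (hf : ContDiffOn ℝ 2 f U) {z : Z d} (hz : z ∈ U) (a b : Z d) :
    fderiv ℝ (auxD b f) z a = fderiv ℝ (fderiv ℝ f) z a b := by
  have := fderiv_clm_apply (aux_diffAt' hU hf hz) (differentiableAt_const (x := z) b)
  unfold auxD
  rw [this]; simp

lemma aux_symm {d : ℕ} {U : Set (Z d)} (hU : IsOpen U) {f : Z d → ℝ}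
    (hf : ContDiffOn ℝ 2 f U) {z : Z d} (hz : z ∈ U) (a b : Z d) :
    fderiv ℝ (fderiv ℝ f) z a b = fderiv ℝ (fderiv ℝ f) z b a :=
  ((hf.contDiffAt (hU.mem_nhds hz)).isSymmSndFDerivAt (by simp)).eq a b

lemma auxD_comm {d : ℕ} {U : Set (Z d)} (hU : IsOpen U) {f : Z d → ℝ}
    (hf : ContDiffOn ℝ 2 f U) {z : Z d} (hz : z ∈ U) (a b : Z d) :
    auxD a (auxD b f) z = auxD b (auxD a f) z := by
  show fderiv ℝ (auxD b f) z a = fderiv ℝ (auxD a f) z b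
  rw [auxD_apply hU hf hz, auxD_apply hU hf hz, aux_symm hU hf hz]

open Filter Topology in
lemma auxD_congr {d : ℕ} {U : Set (Z d)} (hU : IsOpen U) {f h : Z d → ℝ}
    (hfh : ∀ z ∈ U, f z = h z) {z : Z d} (hz : z ∈ U) (a : Z d) :
    auxD a f z = auxD a h z := by
  have : f =ᶠ[𝓝 z] h := by filter_upwards [hU.mem_nhds hz] with y hy using hfh y hy
  unfold auxD
  rw [this.fderiv_eq]

lemma aux_line {d : ℕ} {f : Z d → ℝ} {z a : Z d} {s : ℝ} (hf : DifferentiableAt ℝ f (z + s • a)) :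
    HasDerivAt (fun s : ℝ => f (z + s • a)) (auxD a f (z + s • a)) s := by
  have h1 : HasDerivAt (fun s : ℝ => z + s • a) a s := by
    simpa using ((hasDerivAt_id s).smul_const a).const_add z
  exact hf.hasFDerivAt.comp_hasDerivAt s h1

lemma aux_px_line {d : ℕ} (f : Z d → ℝ) (i : Fin d) (z : Z d) : px f i z = lineDeriv ℝ f z (auxX i) := by
  simp [px, lineDeriv, auxX, Prod.add_def]

lemma aux_pv_line {d : ℕ} (f : Z d → ℝ) (i : Fin d) (z : Z d) : pv f i z = lineDeriv ℝ f z (auxV i) := by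
  simp [pv, lineDeriv, auxV, Prod.add_def]

lemma aux_px {d : ℕ} {U : Set (Z d)} (hU : IsOpen U) {f : Z d → ℝ} 
    (hf : ContDiffOn ℝ 1 f U) {z : Z d} (hz : z ∈ U) (i : Fin d) : px f i z = auxD (auxX i) f z := by
  rw [aux_px_line, (aux_diffAt hU hf hz).lineDeriv_eq_fderiv]; rfl

lemma aux_pv {d : ℕ} {U : Set (Z d)} (hU : IsOpen U) {f : Z d → ℝ} 
    (hf : ContDiffOn ℝ 1 f U) {z : Z d} (hz : z ∈ U) (i : Fin d) : pv f i z = auxD (auxV i) f z := by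
  rw [aux_pv_line, (aux_diffAt hU hf hz).lineDeriv_eq_fderiv]; rfl

open Filter Topology in
lemma aux_pvv {d : ℕ} {U : Set (Z d)} (hU : IsOpen U) {f : Z d → ℝ} 
    (hf : ContDiffOn ℝ 2 f U) {z : Z d} (hz : z ∈ U) (i : Fin d) :
    pvv f i i z = auxD (auxV i) (auxD (auxV i) f) z := by
  have hf1 : ContDiffOn ℝ 1 f U := hf.of_le (by norm_num)
  have : pv f i =ᶠ[𝓝 z] auxD (auxV i) f := by
    filter_upwards [hU.mem_nhds hz] with y hy using aux_pv hU hf1 hy i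
  rw [pvv, aux_pv_line, this.lineDeriv_eq, ← aux_pv_line,
    aux_pv hU (auxD_contDiffOn hU (by norm_num) hf _) hz]

lemma aux_Yop {d : ℕ} {U : Set (Z d)} (hU : IsOpen U) {f : Z d → ℝ} 
    (hf : ContDiffOn ℝ 1 f U) {z : Z d} (hz : z ∈ U) :
    Yop f z = fderiv ℝ f z (auxY z) := by
  have h1 : pt f z = fderiv ℝ f z ((1:ℝ), (0 : E d), (0 : E d)) := by
    have hc : HasDerivAt (fun s : ℝ => ((s, z.2.1, z.2.2) : Z d)) ((1:ℝ), (0 : E d), (0 : E d)) z.1 :=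
      (hasDerivAt_id _).prodMk ((hasDerivAt_const _ _).prodMk (hasDerivAt_const _ _))
    exact ((aux_diffAt hU hf hz).hasFDerivAt.comp_hasDerivAt z.1 hc).deriv
  have h2 : auxY z = ((1:ℝ), (0 : E d), (0 : E d)) + ∑ i, z.2.2 i • auxX i := by
    have h3 : z.2.2 = ∑ i, z.2.2 i • (EuclideanSpace.single i (1:ℝ) : E d) := by
      ext j
      simp [Finset.sum_apply, Pi.single_apply]
    refine Prod.ext ?_ (Prod.ext ?_ ?_)
    · simp [auxY, auxX, Prod.fst_sum]
    · simp only [auxY, auxX, Prod.fst_sum, Prod.snd_sum, Prod.snd_add, Prod.fst_add, Prod.smul_snd,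
        Prod.smul_fst, zero_add]
      exact h3
    · simp [auxY, auxX, Prod.snd_sum]
  rw [Yop, h1, h2, map_add, map_sum]
  congr 1
  refine Finset.sum_congr rfl fun i _ => ?_
  rw [aux_px hU hf hz, map_smul]; rfl

/-- differentiating the transport operator -/
lemma aux_DY {d : ℕ} {U : Set (Z d)} (hU : IsOpen U) {f : Z d → ℝ} 
    (hf : ContDiffOn ℝ 2 f U) {z : Z d} (hz : z ∈ U) (a : Z d) :
    auxD a (fun y => fderiv ℝ f y (auxY y)) z
      = fderiv ℝ (auxD a f) z (auxY z) + fderiv ℝ f z ((0:ℝ), a.2.2, (0:E d)) := by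
  have hY : HasFDerivAt (auxY (d := d)) ((0 : Z d →L[ℝ] ℝ).prod
      (((ContinuousLinearMap.snd ℝ (E d) (E d)).comp (ContinuousLinearMap.snd ℝ ℝ (E d × E d))).prod
        (0 : Z d →L[ℝ] E d))) z := by
    refine (hasFDerivAt_const _ _).prodMk (HasFDerivAt.prodMk ?_ (hasFDerivAt_const _ _))
    exact ((ContinuousLinearMap.snd ℝ (E d) (E d)).comp
      (ContinuousLinearMap.snd ℝ ℝ (E d × E d))).hasFDerivAt
  have h1 := (aux_diffAt' hU hf hz).hasFDerivAt.clm_apply hY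
  unfold auxD
  rw [h1.fderiv]
  have h2 := auxD_apply hU hf hz (auxY z) a
  unfold auxD at h2
  rw [h2, aux_symm hU hf hz]
  simp [add_comm]

lemma aux_eqs {d : ℕ} {U : Set (Z d)} (hU : IsOpen U) {S g : Z d → ℝ}
    (hS : ContDiffOn ℝ 1 S U) (hg : ContDiffOn ℝ 3 g U)
    (heq : ∀ z ∈ U, Yop g z = (∑ i, pvv g i i z) + S z) {z : Z d} (hz : z ∈ U) (a : Z d) :
    fderiv ℝ (auxD a g) z (auxY z) + fderiv ℝ g z ((0:ℝ), a.2.2, (0:E d))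
     = ∑ j, auxD (auxV j) (auxD (auxV j) (auxD a g)) z + auxD a S z := by
  have hg2 : ContDiffOn ℝ 2 g U := hg.of_le (by norm_num)
  have hg1 : ContDiffOn ℝ 1 g U := hg.of_le (by norm_num)
  rw [← aux_DY hU hg2 hz]
  have h1 : ∀ y ∈ U, fderiv ℝ g y (auxY y)
      = ∑ j, auxD (auxV j) (auxD (auxV j) g) y + S y := by
    intro y hy
    rw [← aux_Yop hU hg1 hy, heq y hy]
    congr 1
    exact Finset.sum_congr rfl fun j _ => aux_pvv hU hg2 hy j
  rw [auxD_congr hU h1 hz]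
  have hj : ∀ j : Fin d, ContDiffOn ℝ 2 (auxD (auxV j) g) U := fun j =>
    auxD_contDiffOn hU (by norm_num) hg _
  have hjj : ∀ j : Fin d, DifferentiableAt ℝ (auxD (auxV j) (auxD (auxV j) g)) z := fun j =>
    aux_diffAt hU (auxD_contDiffOn hU (by norm_num) (hj j) _) hz
  have h2 : auxD a (fun y => ∑ j, auxD (auxV j) (auxD (auxV j) g) y + S y) z
      = ∑ j, auxD a (auxD (auxV j) (auxD (auxV j) g)) z + auxD a S z := by
    have := (HasFDerivAt.fun_sum (u := Finset.univ) fun j _ => (hjj j).hasFDerivAt).add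
      (aux_diffAt hU hS hz).hasFDerivAt
    have h3 := this.fderiv
    unfold auxD at h3 ⊢
    erw [h3]
    simp
  rw [h2]
  congr 1
  refine Finset.sum_congr rfl fun j _ => ?_
  rw [auxD_comm hU (hj j) hz]
  exact auxD_congr hU (fun y hy => auxD_comm hU hg2 hy _ _) hz _

lemma aux_phi {d : ℕ} (z : Z d) (hz : z ∈ (Set.Icc (-1 : ℝ) 0 ×ˢ Metric.closedBall (0 : E d) 1 ×ˢ
            Metric.closedBall (0 : E d) 1)) : 
      -1 ≤ z.1 ∧ z.1 ≤ 0 ∧ ‖z.2.1‖ ≤ 1 ∧ ‖z.2.2‖ ≤ 1 := by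
  obtain ⟨h1, h2, h3⟩ := hz
  simp at h1 h2 h3
  exact ⟨h1.1, h1.2, h2, h3⟩

def auxF {d : ℕ} (z : Z d) : ℝ := (1 + z.1) * (1 - ‖z.2.1‖^2) * (1 - ‖z.2.2‖^2)

lemma auxF_V {d : ℕ} (z : Z d) (j : Fin d) (s : ℝ) :
    HasDerivAt (fun s : ℝ => auxF (z + s • auxV j))
      (-((1 + z.1) * (1 - ‖z.2.1‖^2)) * (2 * z.2.2 j + 2 * s)) s := by
  have h : (fun s : ℝ => auxF (z + s • auxV j)) = fun s =>
      (1 + z.1) * (1 - ‖z.2.1‖^2) * (1 - (‖z.2.2‖^2 + 2 * s * z.2.2 j + s^2)) := by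
    funext s
    simp only [auxF, auxV, Prod.fst_add, Prod.snd_add, Prod.smul_fst, Prod.smul_snd, smul_zero,
      add_zero]
    rw [norm_add_sq_real, inner_smul_right, norm_smul]
    simp [EuclideanSpace.inner_single_right, mul_pow]
    left; ring
  rw [h]
  have := (((((hasDerivAt_id s).const_mul 2).mul_const (z.2.2 j)).const_add (‖z.2.2‖^2)).add
    ((hasDerivAt_id s).pow 2)).const_sub 1 |>.const_mul ((1 + z.1) * (1 - ‖z.2.1‖^2))
  refine this.congr_deriv ?_
  simp
  ring

lemma auxF_VV {d : ℕ} (z : Z d) (j : Fin d) :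
    HasDerivAt (fun s : ℝ => -((1 + z.1) * (1 - ‖z.2.1‖^2)) * (2 * z.2.2 j + 2 * s))
      (-((1 + z.1) * (1 - ‖z.2.1‖^2)) * 2) 0 := by
  have := ((((hasDerivAt_id (0:ℝ)).const_mul 2).const_add (2 * z.2.2 j))).const_mul
    (-((1 + z.1) * (1 - ‖z.2.1‖^2)))
  exact this.congr_deriv (by simp)

lemma auxF_Y {d : ℕ} (z : Z d) :
    HasDerivAt (fun s : ℝ => auxF (z + s • auxY z))
      ((1 - ‖z.2.1‖^2) * (1 - ‖z.2.2‖^2) - (1 + z.1) * (2 * inner ℝ z.2.1 z.2.2) * (1 - ‖z.2.2‖^2))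
       0 := by
  have h : (fun s : ℝ => auxF (z + s • auxY z)) = fun s =>
      (1 + z.1 + s) * (1 - (‖z.2.1‖^2 + s * (2 * inner ℝ z.2.1 z.2.2) + s^2 * ‖z.2.2‖^2))
        * (1 - ‖z.2.2‖^2) := by
    funext s
    simp only [auxF, auxY, Prod.fst_add, Prod.snd_add, Prod.smul_fst, Prod.smul_snd, smul_zero,
      add_zero]
    rw [norm_add_sq_real, inner_smul_right, norm_smul]
    simp [mul_pow]
    left; ring
  rw [h]
  have := (((hasDerivAt_id (0:ℝ)).const_add (1 + z.1)).mul
    (((((hasDerivAt_id (0:ℝ)).mul_const (2 * inner ℝ z.2.1 z.2.2)).const_add (‖z.2.1‖^2)).add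
    (((hasDerivAt_id (0:ℝ)).pow 2).mul_const (‖z.2.2‖^2))).const_sub 1)).mul_const (1 - ‖z.2.2‖^2)
  refine this.congr_deriv ?_
  simp
  ring

lemma aux_mem_kCyl {d : ℕ} (z : Z d) :
    z ∈ kCyl 1 (zOrigin d) ↔ -1 < z.1 ∧ z.1 ≤ 0 ∧ ‖z.2.1‖ < 1 ∧ ‖z.2.2‖ < 1 := by
  simp [kCyl, zOrigin]

lemma aux_mem_cyl {d : ℕ} (z : Z d) :
    z ∈ (Set.Icc (-1 : ℝ) 0 ×ˢ Metric.closedBall (0 : E d) 1 ×ˢ Metric.closedBall (0 : E d) 1) ↔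
      -1 ≤ z.1 ∧ z.1 ≤ 0 ∧ ‖z.2.1‖ ≤ 1 ∧ ‖z.2.2‖ ≤ 1 := by
  simp [Set.mem_prod, and_assoc]

open Filter Topology in
lemma aux_closure {d : ℕ} {g : Z d → ℝ} {M : ℝ} {z : Z d} (hc : ContinuousAt g z)
    (hM : ∀ y ∈ kCyl 1 (zOrigin d), |g y| ≤ M)
    (hz : -1 ≤ z.1 ∧ z.1 ≤ 0 ∧ ‖z.2.1‖ ≤ 1 ∧ ‖z.2.2‖ ≤ 1) : |g z| ≤ M := by
  have h1 : Tendsto (fun s : ℝ => s • z) (𝓝[<] 1) (𝓝 z) := by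
    have : ContinuousAt (fun s : ℝ => s • z) 1 := by fun_prop
    have h2 := this.tendsto
    simp only [one_smul] at h2
    exact h2.mono_left nhdsWithin_le_nhds
  have h2 : Tendsto (fun s : ℝ => |g (s • z)|) (𝓝[<] 1) (𝓝 |g z|) := (hc.tendsto.comp h1).abs
  refine le_of_tendsto h2 ?_
  have h0 : ∀ᶠ s in 𝓝[<] (1:ℝ), 0 < s :=
    nhdsWithin_le_nhds (lt_mem_nhds one_pos)
  filter_upwards [self_mem_nhdsWithin, h0] with s hs hs0
  simp only [Set.mem_Iio] at hs
  apply hM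
  rw [aux_mem_kCyl]
  obtain ⟨a1, a2, a3, a4⟩ := hz
  simp only [Prod.smul_fst, Prod.smul_snd, norm_smul, smul_eq_mul, Real.norm_eq_abs,
    abs_of_pos hs0]
  refine ⟨by nlinarith, by nlinarith, ?_, ?_⟩
  · nlinarith [norm_nonneg z.2.1]
  · nlinarith [norm_nonneg z.2.2]

open Filter Topology in
lemma aux_key (d : ℕ) {e B A M : ℝ} (he : 0 < e) (hB : B = 2 * d + 4) (heB : 2400 * e * B ≤ 1)
    (hA : 100 * B ^ 2 + 8 / e ^ 2 ≤ A) (hM : 0 < M)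
    (U : Set (Z d)) (hU : IsOpen U)
    (hsub : (Set.Icc (-1 : ℝ) 0 ×ˢ Metric.closedBall (0 : E d) 1 ×ˢ
            Metric.closedBall (0 : E d) 1) ⊆ U)
    (S g : Z d → ℝ) (hS : ContDiffOn ℝ 1 S U) (hg : ContDiffOn ℝ 3 g U)
    (heq : ∀ z ∈ U, Yop g z = (∑ i, pvv g i i z) + S z) (i : Fin d)
    (bg : ∀ z ∈ kCyl 1 (zOrigin d), |g z| ≤ M)
    (bS : ∀ z ∈ kCyl 1 (zOrigin d), |S z| ≤ M)
    (bSx : ∀ z ∈ kCyl 1 (zOrigin d), |px S i z| ≤ M)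
    (bSv : ∀ z ∈ kCyl 1 (zOrigin d), |pv S i z| ≤ M) :
    (pv g i (zOrigin d)) ^ 2 + 2 * e^2 * px g i (zOrigin d) * pv g i (zOrigin d)
      + e^3 * (px g i (zOrigin d))^2 ≤ (3 * A + 21) * M ^ 2 := by
  have hB1 : 1 ≤ B := by rw [hB]; have : (0:ℝ) ≤ d := Nat.cast_nonneg d
                         linarith
  have hAp : 0 < A := by have : 0 < 8/e^2 := by positivity
                         nlinarith
  have hg2 : ContDiffOn ℝ 2 g U := hg.of_le (by norm_num)
  have hg1 : ContDiffOn ℝ 1 g U := hg.of_le (by norm_num)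
  set p := auxD (auxX i) g with hp
  set q := auxD (auxV i) g with hq
  have hp2 : ContDiffOn ℝ 2 p U := auxD_contDiffOn hU (by norm_num) hg _
  have hq2 : ContDiffOn ℝ 2 q U := auxD_contDiffOn hU (by norm_num) hg _
  have hp1 : ContDiffOn ℝ 1 p U := hp2.of_le (by norm_num)
  have hq1 : ContDiffOn ℝ 1 q U := hq2.of_le (by norm_num)
  set Q := (Set.Icc (-1 : ℝ) 0 ×ˢ Metric.closedBall (0 : E d) 1 ×ˢ
            Metric.closedBall (0 : E d) 1) with hQ
  have hQc : IsCompact Q :=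
    isCompact_Icc.prod ((isCompact_closedBall _ _).prod (isCompact_closedBall _ _))
  set K := (2 * A + 21) * M ^ 2 with hK
  set W : Z d → ℝ := fun z => A * g z ^ 2 + (auxF z * q z) ^ 2
    + 2 * e^2 * (auxF z ^ 3 * p z) * (auxF z * q z) + e^3 * (auxF z ^ 3 * p z) ^ 2 - K * z.1 with hW
  have hFc : Continuous (auxF (d := d)) := by unfold auxF; fun_prop
  have hWc : ContinuousOn W Q := by
    have c1 := hg.continuousOn.mono hsub
    have c2 := hp2.continuousOn.mono hsub
    have c3 := hq2.continuousOn.mono hsub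
    have c4 := hFc.continuousOn (s := Q)
    have c5 : ContinuousOn (fun z : Z d => z.1) Q := continuous_fst.continuousOn
    exact ((((continuousOn_const.mul (c1.pow 2)).add ((c4.mul c3).pow 2)).add
      ((continuousOn_const.mul ((c4.pow 3).mul c2)).mul (c4.mul c3))).add
      (continuousOn_const.mul (((c4.pow 3).mul c2).pow 2))).sub (continuousOn_const.mul c5)
  have h0Q : zOrigin d ∈ Q := by rw [hQ, aux_mem_cyl]; simp [zOrigin]
  obtain ⟨z, hzQ, hzmax⟩ := hQc.exists_isMaxOn ⟨_, h0Q⟩ hWc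
  have hz := (aux_mem_cyl z).1 hzQ
  have hzU := hsub hzQ
  have hW0 : W (zOrigin d) = A * g (zOrigin d) ^ 2 + ((pv g i (zOrigin d)) ^ 2 + 2 * e^2 * px g i (zOrigin d) * pv g i (zOrigin d)
      + e^3 * (px g i (zOrigin d))^2) := by
    rw [aux_px hU hg1 (hsub h0Q), aux_pv hU hg1 (hsub h0Q)]
    simp only [hW, ← hp, ← hq]
    have : auxF (zOrigin d) = 1 := by simp [auxF, zOrigin]
    rw [this]
    simp [zOrigin]; ring
  have hfin : W (zOrigin d) ≤ W z := hzmax h0Q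
  have hpos : 0 ≤ A * g (zOrigin d) ^ 2 := by positivity
  suffices hs : W z ≤ A * M^2 + K by rw [hK] at hs; linarith
  by_cases hF : auxF z = 0
  · have h1 : |g z| ≤ M := aux_closure (aux_diffAt hU hg1 hzU).continuousAt bg hz
    have h2 : g z ^ 2 ≤ M^2 := sq_le_sq' (by linarith [neg_abs_le (g z)]) (by linarith [le_abs_self (g z)])
    have h3 : A * g z ^2 ≤ A * M^2 := by gcongr
    have hKp : 0 ≤ K := by positivity
    have h4 : 0 ≤ K * (1 + z.1) := mul_nonneg hKp (by linarith [hz.1])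
    simp only [hW, hF]
    linarith
  exfalso
  obtain ⟨a1, a2, a3, a4⟩ := hz
  have b1 : -1 < z.1 := by
    refine lt_of_le_of_ne a1 fun h => hF ?_
    simp [auxF, ← h]
  have b3 : ‖z.2.1‖ < 1 := by
    refine lt_of_le_of_ne a3 fun h => hF ?_
    simp [auxF, h]
  have b4 : ‖z.2.2‖ < 1 := by
    refine lt_of_le_of_ne a4 fun h => hF ?_
    simp [auxF, h]
  have hzk : z ∈ kCyl 1 (zOrigin d) := (aux_mem_kCyl z).2 ⟨b1, a2, b3, b4⟩
  have cx0 : 0 ≤ 1 - ‖z.2.1‖^2 := by nlinarith [norm_nonneg z.2.1]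
  have cx1 : 1 - ‖z.2.1‖^2 ≤ 1 := by nlinarith [norm_nonneg z.2.1]
  have cv0 : 0 ≤ 1 - ‖z.2.2‖^2 := by nlinarith [norm_nonneg z.2.2]
  have cv1 : 1 - ‖z.2.2‖^2 ≤ 1 := by nlinarith [norm_nonneg z.2.2]
  have ct0 : 0 ≤ 1 + z.1 := by linarith
  have ct1 : 1 + z.1 ≤ 1 := by linarith
  have ctx0 : 0 ≤ (1 + z.1) * (1 - ‖z.2.1‖^2) := mul_nonneg ct0 cx0
  have ctx1 : (1 + z.1) * (1 - ‖z.2.1‖^2) ≤ 1 := mul_le_one₀ ct1 cx0 cx1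
  have hF0 : 0 ≤ auxF z := mul_nonneg ctx0 cv0
  have hF1 : auxF z ≤ 1 := mul_le_one₀ ctx1 cv0 cv1
  -- line neighborhoods
  have hline : ∀ a : Z d, ∀ᶠ s in 𝓝 (0:ℝ), z + s • a ∈ U := by
    intro a
    have : ContinuousAt (fun s : ℝ => z + s • a) 0 := by fun_prop
    exact this.eventually (by simpa using hU.mem_nhds hzU)
  have hd1 : ∀ {f : Z d → ℝ} (a : Z d), ContDiffOn ℝ 1 f U → ∀ᶠ s in 𝓝 (0:ℝ),
      HasDerivAt (fun s : ℝ => f (z + s • a)) (auxD a f (z + s • a)) s := by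
    intro f a hf
    filter_upwards [hline a] with s hs using aux_line (aux_diffAt hU hf hs)
  have hd2 : ∀ {f : Z d → ℝ} (a : Z d), ContDiffOn ℝ 1 f U →
      HasDerivAt (fun s : ℝ => f (z + s • a)) (auxD a f z) 0 := by
    intro f a hf
    simpa using (hd1 a hf).self_of_nhds
  -- directional second derivatives
  have hJ : ∀ j : Fin d, _ := fun j =>
    aux_second (A := A) (b := e^2) (c := e^3) (K := K) (t := z.1)
      (hd1 (auxV j) hg1) (hd1 (auxV j) hp1) (hd1 (auxV j) hq1)
      (Eventually.of_forall (auxF_V z j))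
      (hd2 (auxV j) (auxD_contDiffOn hU (by norm_num) hg2 _))
      (hd2 (auxV j) (auxD_contDiffOn hU (by norm_num) hp2 _))
      (hd2 (auxV j) (auxD_contDiffOn hU (by norm_num) hq2 _))
      (auxF_VV z j) (by
        have hn : ∀ᶠ s in 𝓝 (0:ℝ), ‖(z + s • auxV j).2.2‖ < 1 := by
          have : ContinuousAt (fun s : ℝ => ‖(z + s • auxV j).2.2‖) 0 := by fun_prop
          exact this.eventually (gt_mem_nhds (by simpa using b4))
        filter_upwards [hn] with s hs
        have hmem : z + s • auxV j ∈ Q := by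
          rw [hQ, aux_mem_cyl]
          refine ⟨?_, ?_, ?_, hs.le⟩ <;> simp [auxV] <;> assumption
        have := hzmax hmem
        simp only [Set.mem_setOf_eq, hW] at this
        simpa [auxV] using this)
  -- transport derivative
  have hY1 : HasDerivAt (fun s : ℝ => (z + s • auxY z).1) 1 0 := by
    simpa [auxY] using (hasDerivAt_id (0:ℝ)).const_add z.1
  have hY := aux_left_test (aux_first (A := A) (b := e^2) (c := e^3) (K := K)
      (hd2 (auxY z) hg1) (hd2 (auxY z) hp1) (hd2 (auxY z) hq1) (auxF_Y z) hY1) (by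
        have hn : ∀ᶠ s in 𝓝 (0:ℝ), ‖(z + s • auxY z).2.1‖ < 1 := by
          have : ContinuousAt (fun s : ℝ => ‖(z + s • auxY z).2.1‖) 0 := by fun_prop
          exact this.eventually (gt_mem_nhds (by simpa using b3))
        have hn2 : ∀ᶠ s in 𝓝 (0:ℝ), -1 < (z + s • auxY z).1 := by
          have : ContinuousAt (fun s : ℝ => (z + s • auxY z).1) 0 := by fun_prop
          exact this.eventually (lt_mem_nhds (by simpa using b1))
        filter_upwards [nhdsWithin_le_nhds hn, nhdsWithin_le_nhds hn2, self_mem_nhdsWithin]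
          with s hs hs2 hs0
        simp only [Set.mem_Iio] at hs0
        have hmem : z + s • auxY z ∈ Q := by
          rw [hQ, aux_mem_cyl]
          refine ⟨hs2.le, ?_, hs.le, ?_⟩ <;> simp [auxY] <;> linarith
        have := hzmax hmem
        simp only [Set.mem_setOf_eq, hW] at this
        simpa using this)
  simp only [zero_smul, add_zero, mul_zero] at hJ hY
  -- equations
  have eg : auxD (auxY z) g z = ∑ j, auxD (auxV j) (auxD (auxV j) g) z + S z := by
    have := heq z hzU
    rw [aux_Yop hU hg1 hzU] at this
    refine this.trans ?_
    congr 1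
    exact Finset.sum_congr rfl fun j _ => aux_pvv hU hg2 hzU j
  have ep : auxD (auxY z) p z = ∑ j, auxD (auxV j) (auxD (auxV j) p) z + px S i z := by
    have := aux_eqs hU hS hg heq hzU (auxX i)
    rw [← aux_px hU hS hzU] at this
    rw [← this]
    have h0 : (((0:ℝ), (auxX i : Z d).2.2, (0 : E d)) : Z d) = 0 := by simp [auxX]
    rw [h0, map_zero, add_zero]; rfl
  have eq : auxD (auxY z) q z = ∑ j, auxD (auxV j) (auxD (auxV j) q) z + pv S i z - p z := by
    have := aux_eqs hU hS hg heq hzU (auxV i)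
    rw [← aux_pv hU hS hzU] at this
    rw [← this]
    exact (add_sub_cancel_right _ _).symm
  have hvsum : ∑ j, z.2.2 j ^ 2 = ‖z.2.2‖^2 := by
    rw [EuclideanSpace.norm_sq_eq]; simp
  have hfin := aux_alg he hB1 heB hA hF0 hF1 hM (bg z hzk) (bS z hzk) (bSx z hzk) (bSv z hzk)
    (fj := fun j => -((1 + z.1) * (1 - ‖z.2.1‖^2)) * (2 * z.2.2 j))
    (fjj := fun j => -((1 + z.1) * (1 - ‖z.2.1‖^2)) * 2)
    (gj := fun j => auxD (auxV j) g z)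
    (pj := fun j => auxD (auxV j) p z)
    (qj := fun j => auxD (auxV j) q z)
    (yf := (1 - ‖z.2.1‖^2) * (1 - ‖z.2.2‖^2)
      - (1 + z.1) * (2 * inner ℝ z.2.1 z.2.2) * (1 - ‖z.2.2‖^2))
    (K := K)
    (by
      have hin : |inner ℝ z.2.1 z.2.2| ≤ 1 :=
        (abs_real_inner_le_norm _ _).trans (mul_le_one₀ a3 (norm_nonneg _) a4)
      have k1 : 0 ≤ (1 - ‖z.2.1‖^2) * (1 - ‖z.2.2‖^2) := mul_nonneg cx0 cv0
      have k2 : (1 - ‖z.2.1‖^2) * (1 - ‖z.2.2‖^2) ≤ 1 := mul_le_one₀ cx1 cv0 cv1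
      have k3 : 0 ≤ (1 + z.1) * (1 - ‖z.2.2‖^2) := mul_nonneg ct0 cv0
      have k4 : (1 + z.1) * (1 - ‖z.2.2‖^2) ≤ 1 := mul_le_one₀ ct1 cv0 cv1
      have k5 : |(1 + z.1) * (1 - ‖z.2.2‖^2) * inner ℝ z.2.1 z.2.2| ≤ 1 := by
        rw [abs_mul, abs_of_nonneg k3]
        exact mul_le_one₀ k4 (abs_nonneg _) hin
      have k6 := abs_le.1 k5
      simp only [Finset.sum_const, Finset.card_univ, Fintype.card_fin, nsmul_eq_mul]
      have hd0 : (0:ℝ) ≤ d := Nat.cast_nonneg d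
      have k7 : 0 ≤ (d:ℝ) * ((1 + z.1) * (1 - ‖z.2.1‖^2)) := mul_nonneg hd0 ctx0
      have k8 : (d:ℝ) * ((1 + z.1) * (1 - ‖z.2.1‖^2)) ≤ d * 1 := by gcongr
      rw [hB, abs_le]
      constructor <;> linarith)
    (by
      have : ∀ j, (-((1 + z.1) * (1 - ‖z.2.1‖^2)) * (2 * z.2.2 j))^2
          = 4 * ((1 + z.1) * (1 - ‖z.2.1‖^2))^2 * z.2.2 j ^2 := fun j => by ring
      simp only [this]
      rw [← Finset.mul_sum, hvsum]
      have k1 : ((1 + z.1) * (1 - ‖z.2.1‖^2))^2 ≤ 1 := pow_le_one₀ ctx0 ctx1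
      have k2 : ‖z.2.2‖^2 ≤ 1 := by linarith
      have k3 : ((1 + z.1) * (1 - ‖z.2.1‖^2))^2 * ‖z.2.2‖^2 ≤ 1 :=
        mul_le_one₀ k1 (by positivity) k2
      have hd0 : (0:ℝ) ≤ d := Nat.cast_nonneg d
      linarith)
    i rfl eg ep eq hY hJ
  rw [hK] at hfin
  have : 0 < M^2 := by positivity
  linarith

lemma aux_le_sup {d : ℕ} {Q : Set (Z d)} {h : Z d → ℝ} {T : ℝ≥0∞} (hT : T ≠ ⊤)
    (hle : supAbs Q h ≤ T) : ∀ z ∈ Q, |h z| ≤ T.toReal := by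
  intro z hz
  have h1 : ENNReal.ofReal |h z| ≤ T :=
    (le_iSup₂ (f := fun z (_ : z ∈ Q) => ENNReal.ofReal |h z|) z hz).trans hle
  exact (ENNReal.ofReal_le_iff_le_toReal hT).1 h1

lemma aux_sq {X N M : ℝ} (hN : 0 ≤ N) (hM : 0 < M) (h : X^2 ≤ N * M^2) : |X| ≤ (N+1) * M := by
  apply abs_le_of_sq_le_sq _ (by positivity)
  have : 0 ≤ M^2 := by positivity
  nlinarith [mul_nonneg hN this, mul_nonneg (mul_nonneg hN hN) this]

/-- **Gradient bound for the Kolmogorov equation**: if `(∂_t + v·∇_x) g = Δ_v g + S` on a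
neighbourhood of the closed unit kinetic cylinder, with `S` continuously differentiable
(with bounded derivatives on `Q₁`) and `g` of class `C³`, then
`|∂_{xᵢ} g(0)| + |∂_{vᵢ} g(0)| ≤ C (‖g‖_{L^∞(Q₁)} + ‖S‖_{L^∞(Q₁)} + ‖∂_{xᵢ}S‖_{L^∞(Q₁)}
+ ‖∂_{vᵢ}S‖_{L^∞(Q₁)})`, with `C = C(d)`. -/
theorem kolmogorov_gradient_bound (d : ℕ) (hd : 1 ≤ d) :
    ∃ C : ℝ, 0 < C ∧
      ∀ (U : Set (Z d)), IsOpen U →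
        (Set.Icc (-1 : ℝ) 0 ×ˢ Metric.closedBall (0 : E d) 1 ×ˢ
            Metric.closedBall (0 : E d) 1) ⊆ U →
        ∀ (S g : Z d → ℝ),
          ContDiffOn ℝ 1 S U →
          supAbs (kCyl 1 (zOrigin d)) S < ⊤ →
          (∀ i, supAbs (kCyl 1 (zOrigin d)) (px S i) < ⊤) →
          (∀ i, supAbs (kCyl 1 (zOrigin d)) (pv S i) < ⊤) →
          ContDiffOn ℝ 3 g U →
          (∀ z ∈ U, Yop g z = (∑ i, pvv g i i z) + S z) →
          ∀ i : Fin d,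
            ENNReal.ofReal (|px g i (zOrigin d)| + |pv g i (zOrigin d)|)
              ≤ ENNReal.ofReal C *
                (supAbs (kCyl 1 (zOrigin d)) g + supAbs (kCyl 1 (zOrigin d)) S
                  + supAbs (kCyl 1 (zOrigin d)) (px S i)
                  + supAbs (kCyl 1 (zOrigin d)) (pv S i)) := by
  obtain ⟨B, hB⟩ : ∃ B : ℝ, B = 2 * d + 4 := ⟨_, rfl⟩
  have hd0 : (0:ℝ) ≤ d := Nat.cast_nonneg d
  have hB1 : 1 ≤ B := by linarith
  obtain ⟨e, he⟩ : ∃ e : ℝ, e = 1 / (2400 * B) := ⟨_, rfl⟩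
  have he0 : 0 < e := by rw [he]; positivity
  have heB : 2400 * e * B ≤ 1 := by rw [he]; field_simp; exact le_rfl
  have he1 : 2400 * e ≤ 1 := by nlinarith
  obtain ⟨A, hA⟩ : ∃ A : ℝ, A = 100 * B ^ 2 + 8 / e ^ 2 := ⟨_, rfl⟩
  have hA0 : 0 < A := by rw [hA]; positivity
  obtain ⟨N, hN⟩ : ∃ N : ℝ, N = 2 * (3 * A + 21) / e ^ 3 := ⟨_, rfl⟩
  have hN0 : 0 < N := by rw [hN]; positivity
  have hNe : N * e ^ 3 = 2 * (3 * A + 21) := by rw [hN]; field_simp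
  refine ⟨2 * (N + 1), by positivity, ?_⟩
  intro U hU hsub S g hS _ _ _ hg heq i
  set T := supAbs (kCyl 1 (zOrigin d)) g + supAbs (kCyl 1 (zOrigin d)) S
                  + supAbs (kCyl 1 (zOrigin d)) (px S i)
                  + supAbs (kCyl 1 (zOrigin d)) (pv S i) with hT
  by_cases hTt : T = ⊤
  · rw [hTt, ENNReal.mul_top]
    · exact le_top
    · simp; positivity
  have l1 : supAbs (kCyl 1 (zOrigin d)) g ≤ T := by
    rw [hT, add_assoc, add_assoc]; exact le_self_add
  have l2 : supAbs (kCyl 1 (zOrigin d)) S ≤ T := by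
    rw [hT, add_assoc]; exact le_add_self.trans le_self_add
  have l3 : supAbs (kCyl 1 (zOrigin d)) (px S i) ≤ T := by
    rw [hT]; exact le_add_self.trans le_self_add
  have l4 : supAbs (kCyl 1 (zOrigin d)) (pv S i) ≤ T := by
    rw [hT]; exact le_add_self
  have b1 := aux_le_sup hTt l1
  have b2 := aux_le_sup hTt l2
  have b3 := aux_le_sup hTt l3
  have b4 := aux_le_sup hTt l4
  have hT0 : 0 ≤ T.toReal := ENNReal.toReal_nonneg
  have main : ∀ δ : ℝ, 0 < δ → |px g i (zOrigin d)| + |pv g i (zOrigin d)|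
      ≤ 2 * (N + 1) * T.toReal + δ := by
    intro δ hδ
    have hM : 0 < T.toReal + δ / (2 * (N + 1)) := by positivity
    obtain ⟨M, hMe⟩ : ∃ M : ℝ, M = T.toReal + δ / (2 * (N + 1)) := ⟨_, rfl⟩
    rw [← hMe] at hM
    have hTM : T.toReal ≤ M := by
      have : 0 < δ / (2 * (N + 1)) := by positivity
      linarith
    have k := aux_key d he0 hB heB hA.symm.le hM U hU hsub S g hS hg heq i
      (fun z hz => (b1 z hz).trans hTM) (fun z hz => (b2 z hz).trans hTM)
      (fun z hz => (b3 z hz).trans hTM) (fun z hz => (b4 z hz).trans hTM)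
    generalize px g i (zOrigin d) = p at k ⊢
    generalize pv g i (zOrigin d) = q at k ⊢
    have he3 : 0 < e ^ 3 := by positivity
    have j0 : e ^ 3 * p ^ 2 * (4 * e) ≤ e ^ 3 * p ^ 2 * 1 := by gcongr; linarith
    have j1 : q ^ 2 + e ^ 3 * p ^ 2 ≤ 2 * (3 * A + 21) * M ^ 2 := by
      nlinarith [sq_nonneg (q + 2 * e ^ 2 * p)]
    have j2 : p ^ 2 ≤ N * M ^ 2 := by
      have : e ^ 3 * p ^ 2 ≤ e ^ 3 * (N * M ^ 2) := by
        have : e ^ 3 * (N * M ^ 2) = 2 * (3 * A + 21) * M ^ 2 := by rw [← hNe]; ring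
        rw [this]; linarith [sq_nonneg q]
      exact le_of_mul_le_mul_left this he3
    have j3 : q ^ 2 ≤ N * M ^ 2 := by
      have e31 : e ^ 3 ≤ 1 := pow_le_one₀ he0.le (by linarith)
      have h1 : N * e ^ 3 * M ^ 2 ≤ N * 1 * M ^ 2 := by gcongr
      rw [hNe] at h1
      have h2 : 0 ≤ e ^ 3 * p ^ 2 := by positivity
      linarith
    have r1 := aux_sq hN0.le hM j2
    have r2 := aux_sq hN0.le hM j3
    have r3 : 2 * (N + 1) * M = 2 * (N + 1) * T.toReal + δ := by
      rw [hMe]; field_simp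
    linarith
  have fin := le_of_forall_pos_le_add main
  calc ENNReal.ofReal (|px g i (zOrigin d)| + |pv g i (zOrigin d)|)
      ≤ ENNReal.ofReal (2 * (N + 1) * T.toReal) := ENNReal.ofReal_le_ofReal fin
    _ = ENNReal.ofReal (2 * (N + 1)) * T := by
      rw [ENNReal.ofReal_mul (by positivity), ENNReal.ofReal_toReal hTt]
end
end

section
/- Let d ≥ 1, r > 0, n ∈ ℕ and multi-indices a, b ∈ ℕ^d. There exists a constant C depending only on d, n, a and b such that every function g which is infinitely differentiable on an open set containing the closure of Q_r := (−r²,0] × B_{r³} × B_r and satisfies (∂_t + v·∇_x) g = Δ_v g at every point of that open set obeys |∂_t^n ∂_x^a ∂_v^b g(0,0,0)| ≤ C ‖g‖_{L^∞(Q_r)} / r^{2n + 3|a| + |b|}. -/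
open Real MeasureTheory
open scoped BigOperators ENNReal

noncomputable section

variable {d : ℕ}

/-- Iterated time derivative `∂_t^n`. -/
def ptIter (n : ℕ) (g : Z d → ℝ) : Z d → ℝ := (fun h => pt h)^[n] g

/-- Iterated space derivative `∂_x^a` for a multi-index `a`. -/
def pxMulti (a : Fin d → ℕ) (g : Z d → ℝ) : Z d → ℝ :=
  ((List.ofFn fun i : Fin d => (fun h => px h i)^[a i]).foldr (· ∘ ·) id) g

/-- Iterated velocity derivative `∂_v^b` for a multi-index `b`. -/
def pvMulti (b : Fin d → ℕ) (g : Z d → ℝ) : Z d → ℝ :=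
  ((List.ofFn fun i : Fin d => (fun h => pv h i)^[b i]).foldr (· ∘ ·) id) g

/-- directional derivative -/
def DD (e : Z d) (f : Z d → ℝ) : Z d → ℝ := fun z => fderiv ℝ f z e

def eT : Z d := ((1 : ℝ), (0 : E d), (0 : E d))
def eX (i : Fin d) : Z d := ((0 : ℝ), EuclideanSpace.single i (1 : ℝ), (0 : E d))
def eV (i : Fin d) : Z d := ((0 : ℝ), (0 : E d), EuclideanSpace.single i (1 : ℝ))

def Sm (U : Set (Z d)) (f : Z d → ℝ) : Prop := ContDiffOn ℝ (⊤ : ℕ∞) f U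

def LL (f : Z d → ℝ) (z : Z d) : ℝ :=
  DD eT f z + ∑ i, z.2.2 i * DD (eX i) f z - ∑ i, DD (eV i) (DD (eV i) f) z

section basics
variable {U : Set (Z d)} {f h : Z d → ℝ} {e e' : Z d} {z : Z d}

lemma Sm.dd (hU : IsOpen U) (hf : Sm U f) (e : Z d) : Sm U (DD e f) :=
  (hf.fderiv_of_isOpen hU (by norm_cast)).clm_apply contDiffOn_const

lemma Sm.at (hU : IsOpen U) (hf : Sm U f) (hz : z ∈ U) : DifferentiableAt ℝ f z :=
  ((hf z hz).contDiffAt (hU.mem_nhds hz)).differentiableAt (by simp)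

lemma Sm.add (hf : Sm U f) (hh : Sm U h) : Sm U (fun z => f z + h z) := ContDiffOn.add hf hh
lemma Sm.mul (hf : Sm U f) (hh : Sm U h) : Sm U (fun z => f z * h z) := ContDiffOn.mul hf hh
lemma Sm.cmul (c : ℝ) (hf : Sm U f) : Sm U (fun z => c * f z) :=
  ContDiffOn.mul contDiffOn_const hf

lemma DD_congr (hU : IsOpen U) (hfh : Set.EqOn f h U) : Set.EqOn (DD e f) (DD e h) U := by
  intro z hz
  have : f =ᶠ[nhds z] h := Filter.eventuallyEq_of_mem (hU.mem_nhds hz) hfh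
  simp only [DD, this.fderiv_eq]

lemma Sm.congr' (hf : Sm U f) (hfh : Set.EqOn h f U) : Sm U h := ContDiffOn.congr hf hfh

lemma DD_comm (hU : IsOpen U) (hf : Sm U f) (hz : z ∈ U) :
    DD e (DD e' f) z = DD e' (DD e f) z := by
  have h1 : ContDiffAt ℝ (⊤ : ℕ∞) f z := (hf z hz).contDiffAt (hU.mem_nhds hz)
  have hs : IsSymmSndFDerivAt ℝ f z := h1.isSymmSndFDerivAt (by simp only [minSmoothness_of_isRCLikeNormedField]; exact WithTop.coe_le_coe.2 (le_top : (2 : ℕ∞) ≤ ⊤))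
  have hd : DifferentiableAt ℝ (fderiv ℝ f) z :=
    (h1.fderiv_right (m := 1) (by norm_cast)).differentiableAt (by simp)
  have key : ∀ a b : Z d, DD a (DD b f) z = fderiv ℝ (fderiv ℝ f) z a b := by
    intro a b
    have := (hd.hasFDerivAt.clm_apply (hasFDerivAt_const b z)).fderiv
    change fderiv ℝ (fun y => (fderiv ℝ f y) b) z a = _
    rw [this]
    simp
  rw [key, key, hs e e']

lemma DD_add (hU : IsOpen U) (hf : Sm U f) (hh : Sm U h) (hz : z ∈ U) :
    DD e (fun z => f z + h z) z = DD e f z + DD e h z := by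
  simp only [DD]
  rw [fderiv_fun_add (hf.at hU hz) (hh.at hU hz)]; simp

lemma DD_mul (hU : IsOpen U) (hf : Sm U f) (hh : Sm U h) (hz : z ∈ U) :
    DD e (fun z => f z * h z) z = f z * DD e h z + h z * DD e f z := by
  simp only [DD]
  rw [fderiv_fun_mul (hf.at hU hz) (hh.at hU hz)]; simp

lemma DD_const (c : ℝ) : DD e (fun _ : Z d => c) = fun _ => 0 := by
  funext z; simp [DD]

lemma DD_cmul (hU : IsOpen U) (c : ℝ) (hf : Sm U f) (hz : z ∈ U) :
    DD e (fun z => c * f z) z = c * DD e f z := by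
  have : Sm U (fun _ => c) := contDiffOn_const
  rw [DD_mul hU this hf hz, DD_const]; simp

lemma Sm.sum {ι : Type*} {s : Finset ι} {F : ι → Z d → ℝ} (hF : ∀ i, Sm U (F i)) :
    Sm U (fun z => ∑ i ∈ s, F i z) := ContDiffOn.sum fun i _ => hF i

lemma DD_sum {ι : Type*} {s : Finset ι} (hU : IsOpen U) {F : ι → Z d → ℝ} (hF : ∀ i, Sm U (F i))
    (hz : z ∈ U) : DD e (fun z => ∑ i ∈ s, F i z) z = ∑ i ∈ s, DD e (F i) z := by
  simp only [DD]
  rw [fderiv_fun_sum (fun i _ => (hF i).at hU hz)]; simp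

lemma Sm.vi (i : Fin d) : Sm U (fun z : Z d => z.2.2 i) := by
  unfold Sm; fun_prop

lemma DD_vi (i : Fin d) : DD e (fun z : Z d => z.2.2 i) z = e.2.2 i := by
  have : (fun z : Z d => z.2.2 i) = ((EuclideanSpace.proj i : E d →L[ℝ] ℝ).comp
    ((ContinuousLinearMap.snd ℝ (E d) (E d)).comp (ContinuousLinearMap.snd ℝ ℝ (E d × E d)))) := by
      funext z; simp
  simp only [DD, this, ContinuousLinearMap.fderiv]; simp

lemma Sm.tau : Sm U (fun z : Z d => z.1) := by
  unfold Sm; fun_prop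

lemma DD_tau : DD e (fun z : Z d => z.1) z = e.1 := by
  have : (fun z : Z d => z.1) = (ContinuousLinearMap.fst ℝ ℝ (E d × E d)) := by
      funext z; simp
  simp only [DD, this, ContinuousLinearMap.fderiv]; simp

lemma LL_mul (hU : IsOpen U) (hf : Sm U f) (hh : Sm U h) (hz : z ∈ U) :
    LL (fun z => f z * h z) z = f z * LL h z + h z * LL f z
      - 2 * ∑ i, DD (eV i) f z * DD (eV i) h z := by
  have key : ∀ i, DD (eV i) (DD (eV i) (fun z => f z * h z)) z
      = f z * DD (eV i) (DD (eV i) h) z + h z * DD (eV i) (DD (eV i) f) z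
        + 2 * (DD (eV i) f z * DD (eV i) h z) := by
    intro i
    have e1 : Set.EqOn (DD (eV i) (fun z => f z * h z))
      (fun z => (f z * DD (eV i) h z) + (h z * DD (eV i) f z)) U := fun y hy => DD_mul hU hf hh hy
    rw [DD_congr hU e1 hz, DD_add hU (hf.mul (hh.dd hU _)) (hh.mul (hf.dd hU _)) hz,
      DD_mul hU hf (hh.dd hU _) hz, DD_mul hU hh (hf.dd hU _) hz]
    ring
  simp only [LL, key, DD_mul hU hf hh hz, Finset.sum_add_distrib, mul_add, ← Finset.mul_sum,
    mul_left_comm _ (f z), mul_left_comm _ (h z)]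
  ring

lemma LL_add (hU : IsOpen U) (hf : Sm U f) (hh : Sm U h) (hz : z ∈ U) :
    LL (fun z => f z + h z) z = LL f z + LL h z := by
  have key : ∀ i, DD (eV i) (DD (eV i) (fun z => f z + h z)) z
      = DD (eV i) (DD (eV i) f) z + DD (eV i) (DD (eV i) h) z := by
    intro i
    have e1 : Set.EqOn (DD (eV i) (fun z => f z + h z))
      (fun z => (DD (eV i) f z) + (DD (eV i) h z)) U := fun y hy => DD_add hU hf hh hy
    rw [DD_congr hU e1 hz, DD_add hU (hf.dd hU _) (hh.dd hU _) hz]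
  simp only [LL, key, DD_add hU hf hh hz, Finset.sum_add_distrib, mul_add]
  ring

lemma LL_congr (hU : IsOpen U) (hfh : Set.EqOn f h U) : Set.EqOn (LL f) (LL h) U := by
  intro z hz
  simp only [LL, DD_congr hU hfh hz, DD_congr hU (DD_congr hU hfh) hz]

lemma LL_const (c : ℝ) : LL (fun _ : Z d => c) z = 0 := by
  simp [LL, DD_const]

lemma LL_cmul (hU : IsOpen U) (c : ℝ) (hf : Sm U f) (hz : z ∈ U) :
    LL (fun z => c * f z) z = c * LL f z := by
  have : Sm U (fun _ => c) := contDiffOn_const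
  rw [LL_mul hU this hf hz, LL_const]; simp [DD_const]

lemma LL_tau : LL (fun z : Z d => z.1) z = 1 := by
  have h1 : ∀ i : Fin d, DD (eV i) (fun z : Z d => z.1) = fun _ => 0 := by
    intro i; funext y; rw [DD_tau]; rfl
  simp only [LL, DD_tau, h1, DD_const]
  simp [eT, eX]

/-- commutator of `LL` with a constant-direction derivative -/
lemma LL_DD (hU : IsOpen U) (hf : Sm U f) (hz : z ∈ U) (e : Z d) :
    LL (DD e f) z = DD e (LL f) z - ∑ i, e.2.2 i * DD (eX i) f z := by
  have s1 : Sm U (fun z => ∑ i, z.2.2 i * DD (eX i) f z) :=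
    Sm.sum fun i => (Sm.vi i).mul (hf.dd hU _)
  have s2 : Sm U (fun z => ∑ i, DD (eV i) (DD (eV i) f) z) :=
    Sm.sum fun i => (hf.dd hU _).dd hU _
  have hL : LL f = fun z => (DD eT f z + ∑ i, z.2.2 i * DD (eX i) f z)
      + (-1) * ∑ i, DD (eV i) (DD (eV i) f) z := by
    funext y; simp only [LL]; ring
  rw [hL, DD_add hU ((hf.dd hU _).add s1) (s2.cmul _) hz, DD_add hU (hf.dd hU _) s1 hz,
    DD_cmul hU _ s2 hz, DD_sum hU (fun i => (Sm.vi i).mul (hf.dd hU _)) hz,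
    DD_sum hU (fun i => (hf.dd hU _).dd hU _) hz]
  have c1 : ∀ i, DD e (DD (eV i) (DD (eV i) f)) z = DD (eV i) (DD (eV i) (DD e f)) z := by
    intro i
    rw [DD_comm hU (hf.dd hU _) hz]
    exact DD_congr hU (fun y hy => DD_comm hU hf hy) hz
  have c2 : ∀ i, DD e (fun z => z.2.2 i * DD (eX i) f z) z
      = z.2.2 i * DD (eX i) (DD e f) z + e.2.2 i * DD (eX i) f z := by
    intro i
    rw [DD_mul hU (Sm.vi i) (hf.dd hU _) hz, DD_vi, DD_comm hU hf hz]; ring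
  simp only [c1, c2, Finset.sum_add_distrib, LL]
  rw [DD_comm hU hf hz]; ring

lemma LL_DD_zero (hU : IsOpen U) (hf : Sm U f) (h0 : ∀ z ∈ U, LL f z = 0) (hz : z ∈ U) (e : Z d) :
    LL (DD e f) z = - ∑ i, e.2.2 i * DD (eX i) f z := by
  have : DD e (LL f) z = 0 := by
    rw [DD_congr hU (h := fun _ => 0) (fun y hy => h0 y hy) hz, DD_const]
  rw [LL_DD hU hf hz, this]; ring

lemma LL_eT (hU : IsOpen U) (hf : Sm U f) (h0 : ∀ z ∈ U, LL f z = 0) (hz : z ∈ U) :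
    LL (DD eT f) z = 0 := by
  rw [LL_DD_zero hU hf h0 hz]; simp [eT]

lemma LL_eX (hU : IsOpen U) (hf : Sm U f) (h0 : ∀ z ∈ U, LL f z = 0) (hz : z ∈ U) (i : Fin d) :
    LL (DD (eX i) f) z = 0 := by
  rw [LL_DD_zero hU hf h0 hz]; simp [eX]

lemma LL_eV (hU : IsOpen U) (hf : Sm U f) (h0 : ∀ z ∈ U, LL f z = 0) (hz : z ∈ U) (i : Fin d) :
    LL (DD (eV i) f) z = - DD (eX i) f z := by
  rw [LL_DD_zero hU hf h0 hz]; simp [eV, PiLp.single_apply]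

/-- Galilean generator -/
def GG (i : Fin d) (f : Z d → ℝ) : Z d → ℝ := fun z => DD (eV i) f z + z.1 * DD (eX i) f z

lemma Sm.gg (hU : IsOpen U) (hf : Sm U f) (i : Fin d) : Sm U (GG i f) :=
  (hf.dd hU _).add (Sm.tau.mul (hf.dd hU _))

lemma LL_GG (hU : IsOpen U) (hf : Sm U f) (h0 : ∀ z ∈ U, LL f z = 0) (hz : z ∈ U) (i : Fin d) :
    LL (GG i f) z = 0 := by
  unfold GG
  rw [LL_add hU (hf.dd hU _) (Sm.tau.mul (hf.dd hU _)) hz, LL_mul hU Sm.tau (hf.dd hU _) hz,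
    LL_eV hU hf h0 hz, LL_eX hU hf h0 hz, LL_tau]
  simp [DD_tau, eV]

end basics

section bernstein
variable {U : Set (Z d)}

def KK (d : ℕ) (R : ℝ) : Set (Z d) :=
  Set.Icc (-R) 0 ×ˢ (Metric.closedBall (0 : E d) R ×ˢ Metric.closedBall (0 : E d) R)

lemma mem_KK {R : ℝ} {z : Z d} :
    z ∈ KK d R ↔ -R ≤ z.1 ∧ z.1 ≤ 0 ∧ ‖z.2.1‖ ≤ R ∧ ‖z.2.2‖ ≤ R := by
  simp [KK, Set.mem_prod, and_assoc]

lemma KK_compact (R : ℝ) : IsCompact (KK d R) :=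
  isCompact_Icc.prod ((isCompact_closedBall _ _).prod (isCompact_closedBall _ _))

lemma KK_mono {ρ R : ℝ} (h : ρ ≤ R) : KK d ρ ⊆ KK d R := by
  intro z hz
  rw [mem_KK] at *
  refine ⟨?_, hz.2.1, ?_, ?_⟩ <;> linarith [hz.1, hz.2.2.1, hz.2.2.2]

lemma hasDerivAt_line (hU : IsOpen U) {f : Z d → ℝ} (hf : Sm U f) {z e : Z d} {s : ℝ}
    (hz : z + s • e ∈ U) : HasDerivAt (fun s : ℝ => f (z + s • e)) (DD e f (z + s • e)) s := by
  have h1 : HasDerivAt (fun s : ℝ => z + s • e) e s := by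
    simpa using ((hasDerivAt_id s).smul_const e).const_add z
  exact (hf.at hU hz).hasFDerivAt.comp_hasDerivAt s h1

lemma deriv2_nonpos {φ : ℝ → ℝ} (hm : IsLocalMax φ 0) (hc : ContinuousAt φ 0) :
    deriv (deriv φ) 0 ≤ 0 := by
  by_contra hpos
  push Not at hpos
  have hmin : IsLocalMin φ 0 := isLocalMin_of_deriv_deriv_pos hpos hm.deriv_eq_zero hc
  have hconst : φ =ᶠ[nhds 0] fun _ => φ 0 := by
    filter_upwards [hm, hmin] with y h1 h2 using le_antisymm h1 h2
  have := hconst.deriv.deriv_eq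
  rw [this] at hpos
  simp at hpos

lemma line_nhds {V : Set (Z d)} {z : Z d} (hV : V ∈ nhds z) (e : Z d) :
    ∀ᶠ s : ℝ in nhds 0, z + s • e ∈ V := by
  have : Filter.Tendsto (fun s : ℝ => z + s • e) (nhds 0) (nhds z) := by
    have h : Continuous (fun s : ℝ => z + s • e) := by fun_prop
    simpa using h.tendsto 0
  exact this hV

lemma max_line1 (hU : IsOpen U) {f : Z d → ℝ} (hf : Sm U f) {z e : Z d} (hz : z ∈ U)
    (hm : IsLocalMax (fun s : ℝ => f (z + s • e)) 0) : DD e f z = 0 := by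
  have h := hasDerivAt_line hU hf (z := z) (e := e) (s := 0) (by simpa using hz)
  have := hm.hasDerivAt_eq_zero h
  simpa using this

lemma max_line2 (hU : IsOpen U) {f : Z d → ℝ} (hf : Sm U f) {z e : Z d} (hz : z ∈ U)
    (hm : IsLocalMax (fun s : ℝ => f (z + s • e)) 0) : DD e (DD e f) z ≤ 0 := by
  have h := hasDerivAt_line hU hf (z := z) (e := e) (s := 0) (by simpa using hz)
  have h2 := deriv2_nonpos hm h.continuousAt
  have h3 : deriv (fun s : ℝ => f (z + s • e)) =ᶠ[nhds 0] fun s => DD e f (z + s • e) := by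
    filter_upwards [line_nhds (hU.mem_nhds hz) e] with s hs
    exact (hasDerivAt_line hU hf hs).deriv
  rw [h3.deriv_eq, (hasDerivAt_line hU (hf.dd hU e) (z := z) (e := e) (s := 0)
    (by simpa using hz)).deriv] at h2
  simpa using h2

lemma max_principle (hU : IsOpen U) {f : Z d → ℝ} (hf : Sm U f) {R : ℝ} (hK : KK d R ⊆ U)
    {z : Z d} (hz : z ∈ KK d R) (hm : ∀ y ∈ KK d R, f y ≤ f z) (h1 : -R < z.1)
    (h2 : ‖z.2.1‖ < R) (h3 : ‖z.2.2‖ < R) : 0 ≤ LL f z := by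
  have hzU := hK hz
  obtain ⟨hz1, hz2, hz3, hz4⟩ := mem_KK.1 hz
  have hO : {y : Z d | -R < y.1 ∧ ‖y.2.1‖ < R ∧ ‖y.2.2‖ < R} ∈ nhds z := by
    have o1 : IsOpen {y : Z d | -R < y.1} := isOpen_lt continuous_const continuous_fst
    have o2 : IsOpen {y : Z d | ‖y.2.1‖ < R} := isOpen_lt (by fun_prop) continuous_const
    have o3 : IsOpen {y : Z d | ‖y.2.2‖ < R} := isOpen_lt (by fun_prop) continuous_const
    exact (o1.inter (o2.inter o3)).mem_nhds ⟨h1, h2, h3⟩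
  have loc : ∀ e : Z d, e.1 = 0 → IsLocalMax (fun s : ℝ => f (z + s • e)) 0 := by
    intro e he
    filter_upwards [line_nhds hO e] with s hs
    simp only [zero_smul, add_zero]
    apply hm
    refine mem_KK.2 ⟨hs.1.le, ?_, hs.2.1.le, hs.2.2.le⟩
    simpa [he] using hz2
  have hx : ∀ i, DD (eX i) f z = 0 := fun i => max_line1 hU hf hzU (loc _ rfl)
  have hv : ∀ i, DD (eV i) (DD (eV i) f) z ≤ 0 := fun i => max_line2 hU hf hzU (loc _ rfl)
  have ht : 0 ≤ DD eT f z := by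
    have h := hasDerivAt_line hU hf (z := z) (e := eT) (s := 0) (by simpa using hzU)
    simp only [zero_smul, add_zero] at h
    have hs := (hasDerivAt_iff_tendsto_slope_zero.1 h)
    have hs' := hs.mono_left (nhdsWithin_mono (0 : ℝ) (s := Set.Iio 0) (t := {0}ᶜ)
      (fun y hy => by simpa using (ne_of_lt hy)))
    refine ge_of_tendsto hs' ?_
    filter_upwards [self_mem_nhdsWithin, nhdsWithin_le_nhds (line_nhds hO eT)] with s hs hs2
    have hs : s < 0 := hs
    have : f (z + s • eT) ≤ f z := by
      apply hm
      refine mem_KK.2 ⟨hs2.1.le, ?_, hs2.2.1.le, hs2.2.2.le⟩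
      simp [eT]; linarith
    simp only [zero_add, zero_smul, add_zero, smul_eq_mul]
    exact mul_nonneg_of_nonpos_of_nonpos (inv_nonpos.2 hs.le) (by linarith)
  have hvs : ∑ i, DD (eV i) (DD (eV i) f) z ≤ 0 := Finset.sum_nonpos fun i _ => hv i
  simp only [LL, hx, mul_zero, Finset.sum_const_zero]
  linarith

lemma num_ineq {A c m K kS kR SS SR RR P Q GGs : ℝ} (hA : 1 ≤ A) (hc : 0 < c) (hcA : 204 * A * c = 1)
    (hm : |m| ≤ A) (hK : K ≤ A) (hK0 : 0 ≤ K) (hG : P ^ 2 ≤ GGs) 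
    (hS : ∀ s t : ℝ, 0 ≤ s ^ 2 * K + 2 * s * t * kS + t ^ 2 * SS)
    (hR : ∀ s t : ℝ, 0 ≤ s ^ 2 * K + 2 * s * t * kR + t ^ 2 * RR)
    (hSR : ∀ s t : ℝ, 0 ≤ s ^ 2 * SS + 2 * s * t * SR + t ^ 2 * RR)
    {a ν : ℝ} (ha : a = 1648 * A)
    (hν : ν = 10 * a * A + 14688 * A ^ 2 + (2 * a + 36 * A) ^ 2 + 1) :
    -2 * ν * GGs + a * (-2 * P * Q + 2 * m * P ^ 2 - 4 * P * kS + 4 * K * P ^ 2 - 2 * SS)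
      + 2 * (-Q ^ 2 + (4 * m + 14 * K) * P * Q - 6 * P * kR - 2 * Q * kS - 2 * SR)
      + c * (6 * m * Q ^ 2 + 24 * K * Q ^ 2 - 12 * Q * kR - 2 * RR) ≤ - (P ^ 2 + Q ^ 2) := by
  have ha0 : 0 < a := by rw [ha]; linarith
  have hν0 : 0 < ν := by rw [hν]; positivity
  obtain ⟨hm1, hm2⟩ := abs_le.1 hm
  have y1 : -12 * c * Q * kR ≤ c * (RR / 2 + 72 * K * Q ^ 2) := by
    have := mul_nonneg hc.le (hR (12 * Q) 1); linarith
  have y2 : -4 * SR ≤ c / 2 * RR + 1632 * A * SS := by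
    have h := mul_nonneg hc.le (hSR (816 * A) 1)
    have e : c * ((816 * A) ^ 2 * SS + 2 * (816 * A) * 1 * SR + 1 ^ 2 * RR)
      = (204 * A * c) * (3264 * A * SS) + (204 * A * c) * (8 * SR) + c * RR := by ring
    rw [e, hcA] at h; linarith
  have y3 : -12 * P * kR ≤ c / 2 * RR + 14688 * A * P ^ 2 * K := by
    have h := mul_nonneg hc.le (hR (2448 * A * P) 1)
    have e : c * ((2448 * A * P) ^ 2 * K + 2 * (2448 * A * P) * 1 * kR + 1 ^ 2 * RR)
      = (204 * A * c) * (29376 * A * P ^ 2 * K) + (204 * A * c) * (24 * P * kR) + c * RR := by ring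
    rw [e, hcA] at h; linarith
  have cK : c * K ≤ 1 / 204 := by nlinarith
  have hQ := sq_nonneg Q
  have hP := sq_nonneg P
  have cKQ : c * K * Q ^ 2 ≤ 1 / 204 * Q ^ 2 := mul_le_mul_of_nonneg_right cK hQ
  have cmQ : c * m * Q ^ 2 ≤ 1 / 204 * Q ^ 2 := by
    apply mul_le_mul_of_nonneg_right _ hQ; nlinarith
  have y4 : -4 * Q * kS ≤ 1 / 4 * Q ^ 2 + 16 * A * SS := by
    have h := mul_nonneg hc.le (hS Q (8 * A))
    have e : c * (Q ^ 2 * K + 2 * Q * (8 * A) * kS + (8 * A) ^ 2 * SS)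
      = c * K * Q ^ 2 + (204 * A * c) * (16 / 204 * Q * kS)
        + (204 * A * c) * (64 / 204 * A * SS) := by ring
    rw [e, hcA] at h; linarith
  have y5 : -4 * a * P * kS ≤ a * (SS + 4 * K * P ^ 2) := by
    have := mul_nonneg ha0.le (hS (2 * P) 1); linarith
  have KP : K * P ^ 2 ≤ A * P ^ 2 := mul_le_mul_of_nonneg_right hK hP
  have mP : m * P ^ 2 ≤ A * P ^ 2 := mul_le_mul_of_nonneg_right hm2 hP
  have aKP := mul_le_mul_of_nonneg_left KP ha0.le
  have amP := mul_le_mul_of_nonneg_left mP ha0.le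
  have AKP : A * (K * P ^ 2) ≤ A * (A * P ^ 2) := mul_le_mul_of_nonneg_left KP (by linarith)
  have y6 : (-2 * a + 2 * (4 * m + 14 * K)) * P * Q ≤ 1 / 4 * Q ^ 2 + (2 * a + 36 * A) ^ 2 * P ^ 2 := by
    set B := -2 * a + 2 * (4 * m + 14 * K) with hB
    have hB2 : B ^ 2 ≤ (2 * a + 36 * A) ^ 2 := by
      apply sq_le_sq' <;> linarith
    have := mul_le_mul_of_nonneg_right hB2 hP
    have := sq_nonneg (Q / 2 - B * P)
    linarith
  have y7 : -2 * ν * GGs ≤ -2 * ν * P ^ 2 := by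
    have := mul_le_mul_of_nonneg_left hG hν0.le; linarith
  have e7 : ν * P ^ 2 = 10 * (a * (A * P ^ 2)) + 14688 * (A * (A * P ^ 2))
      + (2 * a + 36 * A) ^ 2 * P ^ 2 + P ^ 2 := by rw [hν]; ring
  have e8 : a * SS = 1648 * A * SS := by rw [ha]
  have hνP : 0 ≤ ν * P ^ 2 := by positivity
  have hRR : 0 ≤ c * RR := mul_nonneg hc.le (by have := hR 0 1; linarith)
  linarith

end bernstein

section bernstein2
variable {U : Set (Z d)}

lemma quad_sum (k S : Fin d → ℝ) (s t : ℝ) :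
    0 ≤ s ^ 2 * ∑ j, k j ^ 2 + 2 * s * t * ∑ j, k j * S j + t ^ 2 * ∑ j, S j ^ 2 := by
  have : ∑ j, (s * k j + t * S j) ^ 2
      = s ^ 2 * ∑ j, k j ^ 2 + 2 * s * t * ∑ j, k j * S j + t ^ 2 * ∑ j, S j ^ 2 := by
    simp only [Finset.mul_sum, ← Finset.sum_add_distrib]
    exact Finset.sum_congr rfl fun j _ => by ring
  rw [← this]
  exact Finset.sum_nonneg fun j _ => sq_nonneg _

def WW (a c ν : ℝ) (χ p q g : Z d → ℝ) : Z d → ℝ := fun z =>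
  (ν * (g z * g z) + a * ((χ z * p z) * (χ z * p z)))
   + (2 * ((χ z * p z) * ((χ z * (χ z * χ z)) * q z))
   + c * (((χ z * (χ z * χ z)) * q z) * ((χ z * (χ z * χ z)) * q z)))

lemma Sm.ww {χ p q g : Z d → ℝ} (hχ : Sm U χ) (hp : Sm U p) (hq : Sm U q) (hg : Sm U g)
    (a c ν : ℝ) : Sm U (WW a c ν χ p q g) :=
  ((hg.mul hg).cmul ν |>.add (((hχ.mul hp).mul (hχ.mul hp)).cmul a)).add
    ((((hχ.mul hp).mul ((hχ.mul (hχ.mul hχ)).mul hq)).cmul 2).add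
      ((((hχ.mul (hχ.mul hχ)).mul hq).mul ((hχ.mul (hχ.mul hχ)).mul hq)).cmul c))

lemma bern_pt (hU : IsOpen U) {χ g : Z d → ℝ} (hχ : Sm U χ) (hg : Sm U g)
    (h0 : ∀ z ∈ U, LL g z = 0) {z : Z d} (hz : z ∈ U) (i : Fin d) {A c a ν : ℝ} (hA : 1 ≤ A)
    (hc : 0 < c) (hcA : 204 * A * c = 1) (ha : a = 1648 * A)
    (hν : ν = 10 * a * A + 14688 * A ^ 2 + (2 * a + 36 * A) ^ 2 + 1)
    (hm : |χ z * LL χ z| ≤ A) (hK : ∑ j, DD (eV j) χ z ^ 2 ≤ A) :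
    LL (WW a c ν χ (DD (eV i) g) (DD (eX i) g) g) z
      ≤ - (DD (eV i) g z ^ 2 + (χ z ^ 2 * DD (eX i) g z) ^ 2) := by
  set p := DD (eV i) g with hpdef
  set q := DD (eX i) g with hqdef
  have hp : Sm U p := hg.dd hU _
  have hq : Sm U q := hg.dd hU _
  have Lpz : LL p z = - q z := LL_eV hU hg h0 hz i
  have Lqz : LL q z = 0 := LL_eX hU hg h0 hz i
  have hχ2 := hχ.mul hχ
  have hχ3 := hχ.mul hχ2
  have hα := hχ.mul hp
  have hβ := hχ3.mul hq
  have d3 : ∀ j, DD (eV j) (fun z => χ z * (χ z * χ z)) z = 3 * χ z ^ 2 * DD (eV j) χ z := by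
    intro j; rw [DD_mul hU hχ hχ2 hz, DD_mul hU hχ hχ hz]; ring
  have L3 : LL (fun z => χ z * (χ z * χ z)) z
      = 3 * χ z ^ 2 * LL χ z - 6 * χ z * ∑ j, DD (eV j) χ z ^ 2 := by
    rw [LL_mul hU hχ hχ2 hz, LL_mul hU hχ hχ hz]
    have e1 : ∑ j, DD (eV j) χ z * DD (eV j) (fun z => χ z * χ z) z
        = 2 * χ z * ∑ j, DD (eV j) χ z ^ 2 := by
      rw [Finset.mul_sum]
      exact Finset.sum_congr rfl fun j _ => by rw [DD_mul hU hχ hχ hz]; ring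
    have e2 : ∑ j, DD (eV j) χ z * DD (eV j) χ z = ∑ j, DD (eV j) χ z ^ 2 :=
      Finset.sum_congr rfl fun j _ => by ring
    rw [e1, e2]; ring
  set K := ∑ j, DD (eV j) χ z ^ 2 with hKdef
  set α : Z d → ℝ := fun z => χ z * p z with hαdef
  set β : Z d → ℝ := fun z => (χ z * (χ z * χ z)) * q z with hβdef
  set kp := ∑ j, DD (eV j) χ z * DD (eV j) p z with hkp
  set kq := ∑ j, DD (eV j) χ z * DD (eV j) q z with hkq
  have Lα : LL α z = χ z * (- q z) + p z * LL χ z - 2 * kp := by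
    rw [hαdef, LL_mul hU hχ hp hz, Lpz]
  have Lβ : LL β z = q z * (3 * χ z ^ 2 * LL χ z - 6 * χ z * K) - 6 * χ z ^ 2 * kq := by
    rw [hβdef, LL_mul hU hχ3 hq hz, Lqz, L3]
    have : ∑ j, DD (eV j) (fun z => χ z * (χ z * χ z)) z * DD (eV j) q z = 3 * χ z ^ 2 * kq := by
      rw [hkq, Finset.mul_sum]
      exact Finset.sum_congr rfl fun j _ => by rw [d3]; ring
    rw [this]; ring
  have hkS : ∑ j, DD (eV j) χ z * DD (eV j) α z = χ z * kp + K * p z := by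
    rw [hkp, hKdef, Finset.mul_sum, Finset.sum_mul, ← Finset.sum_add_distrib]
    exact Finset.sum_congr rfl fun j _ => by rw [hαdef, DD_mul hU hχ hp hz]; ring
  have hkR : ∑ j, DD (eV j) χ z * DD (eV j) β z = χ z ^ 3 * kq + 3 * χ z ^ 2 * q z * K := by
    rw [hkq, hKdef, Finset.mul_sum, Finset.mul_sum, ← Finset.sum_add_distrib]
    exact Finset.sum_congr rfl fun j _ => by rw [hβdef, DD_mul hU hχ3 hq hz, d3]; ring
  have hG : p z ^ 2 ≤ ∑ j, DD (eV j) g z ^ 2 :=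
    Finset.single_le_sum (f := fun j => DD (eV j) g z ^ 2) (fun j _ => sq_nonneg _)
      (Finset.mem_univ i)
  have sqs : ∀ f : Z d → ℝ, ∑ j, DD (eV j) f z * DD (eV j) f z = ∑ j, DD (eV j) f z ^ 2 :=
    fun f => Finset.sum_congr rfl fun j _ => by ring
  have main := num_ineq (Q := χ z ^ 2 * q z) hA hc hcA hm hK
    (Finset.sum_nonneg fun j _ => sq_nonneg _) hG
    (quad_sum (fun j => DD (eV j) χ z) (fun j => DD (eV j) α z))
    (quad_sum (fun j => DD (eV j) χ z) (fun j => DD (eV j) β z))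
    (quad_sum (fun j => DD (eV j) α z) (fun j => DD (eV j) β z)) ha hν
  refine le_trans (le_of_eq ?_) main
  have hW : WW a c ν χ p q g = fun z => (ν * (g z * g z) + a * (α z * α z))
      + (2 * (α z * β z) + c * (β z * β z)) := rfl
  rw [hW, LL_add hU (((hg.mul hg).cmul ν).add ((hα.mul hα).cmul a))
    (((hα.mul hβ).cmul 2).add ((hβ.mul hβ).cmul c)) hz,
    LL_add hU ((hg.mul hg).cmul ν) ((hα.mul hα).cmul a) hz,
    LL_add hU ((hα.mul hβ).cmul 2) ((hβ.mul hβ).cmul c) hz,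
    LL_cmul hU _ (hg.mul hg) hz, LL_cmul hU _ (hα.mul hα) hz, LL_cmul hU _ (hα.mul hβ) hz,
    LL_cmul hU _ (hβ.mul hβ) hz, LL_mul hU hg hg hz, LL_mul hU hα hα hz, LL_mul hU hα hβ hz,
    LL_mul hU hβ hβ hz, h0 z hz, sqs, sqs, sqs, hkS, hkR, Lα, Lβ]
  simp only [hαdef, hβdef]
  ring

lemma Sm.ll (hU : IsOpen U) {f : Z d → ℝ} (hf : Sm U f) : Sm U (LL f) := by
  have s1 : Sm U (fun z => ∑ i, z.2.2 i * DD (eX i) f z) :=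
    Sm.sum fun i => (Sm.vi i).mul (hf.dd hU _)
  have s2 : Sm U (fun z => ∑ i, DD (eV i) (DD (eV i) f) z) :=
    Sm.sum fun i => (hf.dd hU _).dd hU _
  exact ContDiffOn.sub ((hf.dd hU _).add s1) s2

def chi (d : ℕ) (R : ℝ) : Z d → ℝ := fun z =>
  (z.1 + R) * ((R ^ 2 - ‖z.2.1‖ ^ 2) * (R ^ 2 - ‖z.2.2‖ ^ 2))

lemma chi_smooth (R : ℝ) : ContDiff ℝ (⊤ : ℕ∞) (chi d R) := by
  have h1 : ContDiff ℝ (⊤ : ℕ∞) (fun z : Z d => ‖z.2.1‖ ^ 2) :=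
    ContDiff.norm_sq ℝ (by fun_prop)
  have h2 : ContDiff ℝ (⊤ : ℕ∞) (fun z : Z d => ‖z.2.2‖ ^ 2) :=
    ContDiff.norm_sq ℝ (by fun_prop)
  unfold chi
  exact (contDiff_fst.add contDiff_const).mul ((contDiff_const.sub h1).mul (contDiff_const.sub h2))

set_option maxHeartbeats 1600000 in
lemma bern_main {ρ R : ℝ} (hρ : 0 < ρ) (hR : ρ < R) : ∃ C : ℝ, 0 < C ∧
    ∀ (U : Set (Z d)), IsOpen U → KK d R ⊆ U → ∀ g : Z d → ℝ, Sm U g → (∀ z ∈ U, LL g z = 0) →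
    ∀ M : ℝ, (∀ z ∈ KK d R, |g z| ≤ M) → ∀ z ∈ KK d ρ, ∀ i,
      |DD (eX i) g z| ≤ C * M ∧ |DD (eV i) g z| ≤ C * M := by
  have hχu : Sm (Set.univ) (chi d R) := (chi_smooth R).contDiffOn
  obtain ⟨A1, hA1⟩ := (KK_compact (d := d) R).exists_bound_of_continuousOn
    (f := fun z => chi d R z * LL (chi d R) z)
    ((hχu.mul (hχu.ll isOpen_univ)).continuousOn.mono (Set.subset_univ _))
  have sK : Sm Set.univ (fun z => ∑ j, DD (eV j) (chi d R) z ^ 2) :=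
    Sm.sum fun j => ContDiffOn.pow (hχu.dd isOpen_univ _) 2
  obtain ⟨A2, hA2⟩ := (KK_compact (d := d) R).exists_bound_of_continuousOn
    (f := fun z => ∑ j, DD (eV j) (chi d R) z ^ 2)
    (sK.continuousOn.mono (Set.subset_univ _))
  set A := max 1 (max A1 A2) with hAdef
  have hA : 1 ≤ A := le_max_left _ _
  have hA1' : A1 ≤ A := le_trans (le_max_left _ _) (le_max_right _ _)
  have hA2' : A2 ≤ A := le_trans (le_max_right _ _) (le_max_right _ _)
  have hA0 : 0 < A := by linarith
  obtain ⟨c, hc, hcA⟩ : ∃ c : ℝ, 0 < c ∧ 204 * A * c = 1 :=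
    ⟨1 / (204 * A), by positivity, by field_simp⟩
  obtain ⟨a, ha⟩ : ∃ a, a = 1648 * A := ⟨_, rfl⟩
  obtain ⟨ν, hν⟩ : ∃ ν, ν = 10 * a * A + 14688 * A ^ 2 + (2 * a + 36 * A) ^ 2 + 1 := ⟨_, rfl⟩
  have ha0 : 0 < a := by rw [ha]; linarith
  have hν0 : 0 < ν := by rw [hν]; positivity
  have hac : 4 ≤ a * c := by rw [ha]; linarith
  obtain ⟨x0, hx0⟩ : ∃ x0, x0 = (R - ρ) * ((R ^ 2 - ρ ^ 2) * (R ^ 2 - ρ ^ 2)) := ⟨_, rfl⟩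
  have hsq : 0 < R ^ 2 - ρ ^ 2 := by nlinarith
  have hx00 : 0 < x0 := by rw [hx0]; have : 0 < R - ρ := by linarith
                           positivity
  refine ⟨√(2 * ν / a) / x0 + √(2 * ν / c) / x0 ^ 3, by positivity, ?_⟩
  intro U hU hKU g hg h0 M hM z hz i
  have hM0 : 0 ≤ M := le_trans (abs_nonneg _) (hM z (KK_mono hR.le hz))
  have hχ : Sm U (chi d R) := (chi_smooth R).contDiffOn
  set W := WW a c ν (chi d R) (DD (eV i) g) (DD (eX i) g) g with hW
  have hWs : Sm U W := hχ.ww (hg.dd hU _) (hg.dd hU _) hg a c ν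
  have hWmax : ∀ y ∈ KK d R, W y ≤ ν * M ^ 2 := by
    obtain ⟨y0, hy0, hmax⟩ := (KK_compact (d := d) R).exists_isMaxOn ⟨z, KK_mono hR.le hz⟩
      (hWs.continuousOn.mono hKU)
    intro y hy
    refine le_trans (hmax hy) ?_
    have hgM : g y0 * g y0 ≤ M ^ 2 := by
      have := hM y0 hy0
      have := sq_le_sq' (abs_le.1 this).1 (abs_le.1 this).2
      nlinarith
    have hgM' := mul_le_mul_of_nonneg_left hgM hν0.le
    by_cases hχ0 : chi d R y0 = 0
    · have : W y0 = ν * (g y0 * g y0) := by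
        rw [hW]; simp only [WW, hχ0]; ring
      rw [this]; exact hgM'
    · obtain ⟨b1, b2, b3, b4⟩ := mem_KK.1 hy0
      have hne : -R < y0.1 ∧ ‖y0.2.1‖ < R ∧ ‖y0.2.2‖ < R := by
        refine ⟨lt_of_le_of_ne b1 ?_, lt_of_le_of_ne b3 ?_, lt_of_le_of_ne b4 ?_⟩ <;>
        · intro h; apply hχ0; simp [chi, ← h]
      have hLL := max_principle hU hWs hKU hy0 (fun y hy => hmax hy) hne.1 hne.2.1 hne.2.2
      have hb := bern_pt hU hχ hg h0 (hKU hy0) i hA hc hcA ha hν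
        (le_trans (hA1 y0 hy0) hA1') (le_trans (le_trans (le_abs_self _) (hA2 y0 hy0)) hA2')
      have e1 := sq_nonneg (DD (eV i) g y0)
      have e2 := sq_nonneg (chi d R y0 ^ 2 * DD (eX i) g y0)
      have e3 : DD (eV i) g y0 ^ 2 = 0 := by linarith
      have e4 : (chi d R y0 ^ 2 * DD (eX i) g y0) ^ 2 = 0 := by linarith
      have e3' : DD (eV i) g y0 = 0 := by simpa using e3
      have e4' : DD (eX i) g y0 = 0 := by simpa [hχ0] using e4
      have : W y0 = ν * (g y0 * g y0) := by
        rw [hW]; simp only [WW, e3', e4']; ring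
      rw [this]; exact hgM'
  have hWz := hWmax z (KK_mono hR.le hz)
  obtain ⟨b1, b2, b3, b4⟩ := mem_KK.1 hz
  have hχz : x0 ≤ chi d R z := by
    rw [hx0]; unfold chi
    have n1 : ‖z.2.1‖ ^ 2 ≤ ρ ^ 2 := pow_le_pow_left₀ (norm_nonneg _) b3 2
    have n2 : ‖z.2.2‖ ^ 2 ≤ ρ ^ 2 := pow_le_pow_left₀ (norm_nonneg _) b4 2
    have t1 : R - ρ ≤ z.1 + R := by linarith
    have t2 : R ^ 2 - ρ ^ 2 ≤ R ^ 2 - ‖z.2.1‖ ^ 2 := by linarith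
    have t3 : R ^ 2 - ρ ^ 2 ≤ R ^ 2 - ‖z.2.2‖ ^ 2 := by linarith
    have t0 : 0 ≤ R - ρ := by linarith
    gcongr
    all_goals nlinarith
  have gen : ∀ (k X Y : ℝ), 0 < k → 0 < Y → ∀ y : ℝ, Y ≤ X → k / 2 * (X * y) ^ 2 ≤ ν * M ^ 2 →
      |y| ≤ √(2 * ν / k) / Y * M := by
    intro k X Y hk hY y hXY h
    have h1 : (X * y) ^ 2 ≤ (2 * ν / k) * M ^ 2 := by
      rw [div_mul_eq_mul_div, le_div_iff₀ hk]; linarith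
    have h2 : |X * y| ≤ √(2 * ν / k) * M := by
      apply abs_le_of_sq_le_sq _ (by positivity)
      rw [mul_pow (√(2 * ν / k)), Real.sq_sqrt (by positivity)]; exact h1
    rw [div_mul_eq_mul_div, le_div_iff₀ hY]
    rw [abs_mul, abs_of_pos (by linarith : 0 < X)] at h2
    nlinarith [abs_nonneg y]
  set α := chi d R z * DD (eV i) g z with hα
  set β := chi d R z ^ 3 * DD (eX i) g z with hβ
  have hWe : W z = ν * g z ^ 2 + a * α ^ 2 + 2 * (α * β) + c * β ^ 2 := by
    rw [hW, hα, hβ]; simp only [WW]; ring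
  have hνg : 0 ≤ ν * g z ^ 2 := by positivity
  have hcross : 0 ≤ a / 2 * α ^ 2 + 2 * (α * β) + c / 2 * β ^ 2 := by
    have h1 : 0 ≤ (a * α + 2 * β) ^ 2 := sq_nonneg _
    have h2 : 4 * β ^ 2 ≤ a * c * β ^ 2 := mul_le_mul_of_nonneg_right hac (sq_nonneg _)
    have h3 : 0 ≤ a * (a / 2 * α ^ 2 + 2 * (α * β) + c / 2 * β ^ 2) := by nlinarith
    exact nonneg_of_mul_nonneg_right h3 ha0
  have hα2 : 0 ≤ a / 2 * α ^ 2 := by positivity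
  have hβ2 : 0 ≤ c / 2 * β ^ 2 := by positivity
  have r1 := gen a (chi d R z) x0 ha0 hx00 (DD (eV i) g z) hχz (by rw [← hα]; linarith)
  have r2 := gen c (chi d R z ^ 3) (x0 ^ 3) hc (by positivity) (DD (eX i) g z)
    (pow_le_pow_left₀ hx00.le hχz 3) (by rw [← hβ]; linarith)
  have p1 : 0 ≤ √(2 * ν / a) / x0 * M := by positivity
  have p2 : 0 ≤ √(2 * ν / c) / x0 ^ 3 * M := by positivity
  constructor <;> rw [add_mul] <;> linarith

end bernstein2

abbrev Op (d : ℕ) := (Z d → ℝ) → (Z d → ℝ)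

section ops

lemma iter_ind (P : Op d → Op d → ℕ → Prop) (h0 : P id id 0)
    (hc : ∀ S T S' T' m n, P S S' m → P T T' n → P (S ∘ T) (S' ∘ T') (m + n))
    {F F' : Op d} {w : ℕ} (hF : P F F' w) (n : ℕ) : P (F^[n]) (F'^[n]) (w * n) := by
  induction n with
  | zero => exact h0
  | succ n ih =>
    rw [Function.iterate_succ, Function.iterate_succ]
    exact hc _ _ _ _ _ _ ih hF

def multi (F : Fin d → Op d) (b : Fin d → ℕ) : Op d :=
  (List.ofFn fun i : Fin d => (F i)^[b i]).foldr (· ∘ ·) id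

lemma multi_ind (P : Op d → Op d → ℕ → Prop) (h0 : P id id 0)
    (hc : ∀ S T S' T' m n, P S S' m → P T T' n → P (S ∘ T) (S' ∘ T') (m + n))
    {F F' : Fin d → Op d} {w : ℕ} (hF : ∀ i, P (F i) (F' i) w) (b : Fin d → ℕ) :
    P (multi F b) (multi F' b) (w * ∑ i, b i) := by
  have key : ∀ l : List (Fin d), P ((l.map fun i => (F i)^[b i]).foldr (· ∘ ·) id)
      ((l.map fun i => (F' i)^[b i]).foldr (· ∘ ·) id) (w * (l.map b).sum) := by
    intro l
    induction l with
    | nil => simpa using h0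
    | cons i l ih =>
      simp only [List.map_cons, List.foldr_cons, List.sum_cons, mul_add]
      exact hc _ _ _ _ _ _ (iter_ind P h0 hc (hF i) (b i)) ih
  have := key (List.finRange d)
  unfold multi
  rw [← List.sum_ofFn, List.ofFn_eq_map, List.ofFn_eq_map, List.ofFn_eq_map]
  exact this

variable {U : Set (Z d)}

lemma px_eq (hU : IsOpen U) {f : Z d → ℝ} (hf : Sm U f) (i : Fin d) :
    Set.EqOn (px f i) (DD (eX i) f) U := by
  intro z hz
  have h := (hasDerivAt_line hU hf (z := z) (e := eX i) (s := 0) (by simpa using hz)).deriv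
  simp only [zero_smul, add_zero] at h
  rw [← h, px]
  congr 1
  funext s
  congr 1
  simp [eX, Prod.ext_iff]

lemma pv_eq (hU : IsOpen U) {f : Z d → ℝ} (hf : Sm U f) (i : Fin d) :
    Set.EqOn (pv f i) (DD (eV i) f) U := by
  intro z hz
  have h := (hasDerivAt_line hU hf (z := z) (e := eV i) (s := 0) (by simpa using hz)).deriv
  simp only [zero_smul, add_zero] at h
  rw [← h, pv]
  congr 1
  funext s
  congr 1
  simp [eV, Prod.ext_iff]

lemma pt_eq (hU : IsOpen U) {f : Z d → ℝ} (hf : Sm U f) :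
    Set.EqOn (pt f) (DD eT f) U := by
  intro z hz
  have h1 : HasDerivAt (fun s : ℝ => ((s, z.2.1, z.2.2) : Z d)) eT z.1 :=
    (hasDerivAt_id z.1).prodMk (hasDerivAt_const z.1 (z.2.1, z.2.2))
  exact ((hf.at hU (z := z) hz).hasFDerivAt.comp_hasDerivAt z.1 h1).deriv

/-- operators preserving smooth solutions with interior bounds -/
structure Good (T : Op d) : Prop where
  sm : ∀ U : Set (Z d), IsOpen U → ∀ g, Sm U g → Sm U (T g)
  sol : ∀ U : Set (Z d), IsOpen U → ∀ g, Sm U g → (∀ z ∈ U, LL g z = 0) → ∀ z ∈ U, LL (T g) z = 0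
  bd : ∀ ρ R : ℝ, 0 < ρ → ρ < R → ∃ C : ℝ, 0 < C ∧ ∀ U : Set (Z d), IsOpen U → KK d R ⊆ U →
    ∀ g, Sm U g → (∀ z ∈ U, LL g z = 0) → ∀ M : ℝ, (∀ z ∈ KK d R, |g z| ≤ M) →
      ∀ z ∈ KK d ρ, |T g z| ≤ C * M

lemma Good.one : Good (id : Op d) where
  sm := fun U _ g hg => hg
  sol := fun U _ g _ h => h
  bd := fun ρ R _ hR => ⟨1, one_pos, fun U _ _ g _ _ M hM z hz => by
    simpa using hM z (KK_mono hR.le hz)⟩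

lemma Good.comp {S T : Op d} (hS : Good S) (hT : Good T) : Good (S ∘ T) where
  sm := fun U hU g hg => hS.sm U hU _ (hT.sm U hU g hg)
  sol := fun U hU g hg h => hS.sol U hU _ (hT.sm U hU g hg) (hT.sol U hU g hg h)
  bd := by
    intro ρ R hρ hR
    obtain ⟨C1, h1, H1⟩ := hS.bd ρ ((ρ + R) / 2) hρ (by linarith)
    obtain ⟨C2, h2, H2⟩ := hT.bd ((ρ + R) / 2) R (by linarith) (by linarith)
    refine ⟨C1 * C2, by positivity, ?_⟩
    intro U hU hK g hg h0 M hM z hz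
    rw [mul_assoc]
    exact H1 U hU ((KK_mono (by linarith)).trans hK) (T g) (hT.sm U hU g hg)
      (hT.sol U hU g hg h0) (C2 * M) (H2 U hU hK g hg h0 M hM) z hz

lemma Good.px (i : Fin d) : Good (fun h : Z d → ℝ => px h i) where
  sm := fun U hU g hg => (hg.dd hU _).congr' (px_eq hU hg i)
  sol := fun U hU g hg h z hz => by
    rw [LL_congr hU (px_eq hU hg i) hz]; exact LL_eX hU hg h hz i
  bd := by
    intro ρ R hρ hR
    obtain ⟨C, hC, H⟩ := bern_main (d := d) hρ hR
    refine ⟨C, hC, ?_⟩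
    intro U hU hK g hg h0 M hM z hz
    rw [px_eq hU hg i (hK (KK_mono hR.le hz))]
    exact (H U hU hK g hg h0 M hM z hz i).1

lemma abs_t_le {R : ℝ} {z : Z d} (hz : z ∈ KK d R) : |z.1| ≤ R := by
  obtain ⟨h1, h2, -, -⟩ := mem_KK.1 hz
  rw [abs_le]; constructor <;> linarith

lemma Good.gg (i : Fin d) : Good (GG i) where
  sm := fun U hU g hg => hg.gg hU i
  sol := fun U hU g hg h z hz => LL_GG hU hg h hz i
  bd := by
    intro ρ R hρ hR
    obtain ⟨C, hC, H⟩ := bern_main (d := d) hρ hR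
    refine ⟨C + ρ * C, by positivity, ?_⟩
    intro U hU hK g hg h0 M hM z hz
    obtain ⟨h1, h2⟩ := H U hU hK g hg h0 M hM z hz i
    have h3 : |z.1 * DD (eX i) g z| ≤ ρ * (C * M) := by
      rw [abs_mul]
      exact mul_le_mul (abs_t_le hz) h1 (abs_nonneg _) hρ.le
    have := abs_add_le (DD (eV i) g z) (z.1 * DD (eX i) g z)
    unfold GG
    linarith

lemma Good.pt : Good (fun h : Z d → ℝ => pt h) where
  sm := fun U hU g hg => (hg.dd hU _).congr' (pt_eq hU hg)
  sol := fun U hU g hg h z hz => by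
    rw [LL_congr hU (pt_eq hU hg) hz]; exact LL_eT hU hg h hz
  bd := by
    intro ρ R hρ hR
    obtain ⟨C1, hC1, H1⟩ := bern_main (d := d) (ρ := ρ) (R := (ρ + R) / 2) hρ (by linarith)
    obtain ⟨C2, hC2, H2⟩ := bern_main (d := d) (ρ := (ρ + R) / 2) (R := R) (by linarith) (by linarith)
    have hRpos : 0 < R := by linarith
    refine ⟨d * (R * C2 + C1 * (C2 + R * C2) + R * (C1 * C2)) + 1, by positivity, ?_⟩
    intro U hU hK g hg h0 M hM z hz
    have hM0 : 0 ≤ M := le_trans (abs_nonneg _) (hM z (KK_mono hR.le hz))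
    have hzR := KK_mono hR.le hz
    have hzU := hK hzR
    have hK' : KK d ((ρ + R) / 2) ⊆ KK d R := KK_mono (by linarith)
    have B := H2 U hU hK g hg h0 M hM
    rw [pt_eq hU hg hzU]
    have hR0 : 0 ≤ R := by linarith
    have eq : DD eT g z = ∑ i, (DD (eV i) (DD (eV i) g) z - z.2.2 i * DD (eX i) g z) := by
      have := h0 z hzU
      simp only [LL] at this
      rw [Finset.sum_sub_distrib]; linarith
    have each : ∀ i, |DD (eV i) (DD (eV i) g) z - z.2.2 i * DD (eX i) g z|
        ≤ (R * C2 + C1 * (C2 + R * C2) + R * (C1 * C2)) * M := by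
      intro i
      have hx := hg.dd hU (eX i)
      have hgg := hg.gg hU i
      have e1 : DD (eV i) (DD (eV i) g) z
          = DD (eV i) (GG i g) z - z.1 * DD (eV i) (DD (eX i) g) z := by
        unfold GG
        rw [DD_add hU (hg.dd hU _) (Sm.tau.mul hx) hzU, DD_mul hU Sm.tau hx hzU, DD_tau]
        simp [eV]
      have b1 : |DD (eV i) (GG i g) z| ≤ C1 * ((C2 + R * C2) * M) := by
        refine (H1 U hU (hK'.trans hK) _ hgg (fun y hy => LL_GG hU hg h0 hy i) _ ?_ z hz i).2
        intro y hy
        obtain ⟨h1, h2⟩ := B y hy i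
        have h3 : |y.1 * DD (eX i) g y| ≤ R * (C2 * M) := by
          rw [abs_mul]
          exact mul_le_mul (abs_t_le (hK' hy)) h1 (abs_nonneg _) hR0
        have := abs_add_le (DD (eV i) g y) (y.1 * DD (eX i) g y)
        unfold GG
        linarith
      have b2 : |DD (eV i) (DD (eX i) g) z| ≤ C1 * (C2 * M) :=
        (H1 U hU (hK'.trans hK) _ hx (fun y hy => LL_eX hU hg h0 hy i) _
          (fun y hy => (B y hy i).1) z hz i).2
      have b2' : |z.1 * DD (eV i) (DD (eX i) g) z| ≤ R * (C1 * (C2 * M)) := by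
        rw [abs_mul]
        exact mul_le_mul (abs_t_le hzR) b2 (abs_nonneg _) hR0
      have b3 : |z.2.2 i * DD (eX i) g z| ≤ R * (C2 * M) := by
        rw [abs_mul]
        refine mul_le_mul ?_ (B z (KK_mono (by linarith) hz) i).1 (abs_nonneg _) hR0
        have := PiLp.norm_apply_le z.2.2 i
        rw [Real.norm_eq_abs] at this
        exact this.trans (mem_KK.1 hzR).2.2.2
      rw [e1]
      have t1 := abs_sub (DD (eV i) (GG i g) z - z.1 * DD (eV i) (DD (eX i) g) z)
        (z.2.2 i * DD (eX i) g z)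
      have t2 := abs_sub (DD (eV i) (GG i g) z) (z.1 * DD (eV i) (DD (eX i) g) z)
      linarith
    rw [eq]
    refine (Finset.abs_sum_le_sum_abs _ _).trans ((Finset.sum_le_sum fun i _ => each i).trans ?_)
    simp only [Finset.sum_const, Finset.card_univ, Fintype.card_fin, nsmul_eq_mul]
    linarith

end ops

section final
variable {U : Set (Z d)}

structure Nice (U : Set (Z d)) (T : Op d) : Prop where
  sm : ∀ g, Sm U g → Sm U (T g)
  congr : ∀ f h, Sm U f → Sm U h → Set.EqOn f h U → Set.EqOn (T f) (T h) U
  comm : ∀ e f, Sm U f → Set.EqOn (T (DD e f)) (DD e (T f)) U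

lemma Nice.one : Nice U (id : Op d) :=
  ⟨fun _ h => h, fun _ _ _ _ h => h, fun _ _ _ _ _ => rfl⟩

lemma Nice.comp (hU : IsOpen U) {S T : Op d} (hS : Nice U S) (hT : Nice U T) : Nice U (S ∘ T) where
  sm := fun g hg => hS.sm _ (hT.sm g hg)
  congr := fun f h hf hh hfh => hS.congr _ _ (hT.sm f hf) (hT.sm h hh) (hT.congr f h hf hh hfh)
  comm := fun e f hf => (hS.congr _ _ (hT.sm _ (hf.dd hU e)) ((hT.sm _ hf).dd hU e)
    (hT.comm e f hf)).trans (hS.comm e _ (hT.sm f hf))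

lemma Nice.base (hU : IsOpen U) {T : Op d} (e : Z d) (hT : ∀ f, Sm U f → Set.EqOn (T f) (DD e f) U) :
    Nice U T where
  sm := fun g hg => (hg.dd hU e).congr' (hT g hg)
  congr := fun f h hf hh hfh => (hT f hf).trans ((DD_congr hU hfh).trans (hT h hh).symm)
  comm := fun e' f hf => (hT _ (hf.dd hU e')).trans
    (fun z hz => by rw [DD_comm hU hf hz]; exact (DD_congr hU (hT f hf) hz).symm)

/-- `pt^n px^a` -/
def AA (n : ℕ) (a : Fin d → ℕ) : Op d := (fun h => pt h)^[n] ∘ multi (fun i h => px h i) a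

lemma AA_nice (hU : IsOpen U) (n : ℕ) (a : Fin d → ℕ) : Nice U (AA n a) := by
  have h0 : Nice U (id : Op d) := Nice.one
  have hc : ∀ (S T S' T' : Op d) (m n : ℕ), Nice U S → Nice U T → Nice U (S ∘ T) :=
    fun S T _ _ _ _ h1 h2 => h1.comp hU h2
  refine Nice.comp hU ?_ ?_
  · exact iter_ind (fun T _ _ => Nice U T) h0 hc (F := fun h => pt h) (F' := id) (w := 0)
      (Nice.base hU eT fun f hf => pt_eq hU hf) n
  · exact multi_ind (fun T _ _ => Nice U T) h0 hc (F := fun i h => px h i) (F' := fun _ => id)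
      (w := 0) (fun i => Nice.base hU (eX i) fun f hf => px_eq hU hf i) a

lemma AA_good (n : ℕ) (a : Fin d → ℕ) : Good (AA n a) := by
  have hc : ∀ (S T S' T' : Op d) (m n : ℕ), Good S → Good T → Good (S ∘ T) :=
    fun S T _ _ _ _ h1 h2 => h1.comp h2
  refine Good.comp ?_ ?_
  · exact iter_ind (fun T _ _ => Good T) Good.one hc (F := fun h => pt h) (F' := id) (w := 0)
      Good.pt n
  · exact multi_ind (fun T _ _ => Good T) Good.one hc (F := fun i h => px h i) (F' := fun _ => id)
      (w := 0) Good.px a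

lemma GM_good (b : Fin d → ℕ) : Good (multi GG b) :=
  multi_ind (fun T _ _ => Good T) Good.one
    (fun S T _ _ _ _ h1 h2 => h1.comp h2) (F' := fun _ => id) (w := 0) Good.gg b

lemma comm_AB (hU : IsOpen U) {A : Op d} (hA : Nice U A) (b : Fin d → ℕ) {g : Z d → ℝ}
    (hg : Sm U g) :
    Set.EqOn (A (multi (fun i h => pv h i) b g)) (multi (fun i h => pv h i) b (A g)) U := by
  have := multi_ind (fun B _ _ => Nice U B ∧ ∀ f, Sm U f → Set.EqOn (A (B f)) (B (A f)) U)
    ⟨Nice.one, fun f _ z _ => rfl⟩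
    (by
      rintro S T _ _ _ _ ⟨n1, h1⟩ ⟨n2, h2⟩
      refine ⟨n1.comp hU n2, fun f hf => (h1 _ (n2.sm f hf)).trans ?_⟩
      exact n1.congr _ _ (hA.sm _ (n2.sm f hf)) (n2.sm _ (hA.sm f hf)) (h2 f hf))
    (F := fun i h => pv h i) (F' := fun _ => id) (w := 0)
    (by
      intro i
      have hn : Nice U (fun h => pv h i) := Nice.base hU (eV i) fun f hf => pv_eq hU hf i
      refine ⟨hn, fun f hf => ?_⟩
      exact (hA.congr _ _ (hn.sm f hf) (hf.dd hU _) (pv_eq hU hf i)).trans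
        ((hA.comm _ f hf).trans (pv_eq hU (hA.sm f hf) i).symm)) b
  exact this.2 g hg

lemma slice (hU : IsOpen U) (b : Fin d → ℕ) {g : Z d → ℝ} (hg : Sm U g) {z : Z d} (hz : z ∈ U)
    (hz0 : z.1 = 0) : multi (fun i h => pv h i) b g z = multi GG b g z := by
  have := multi_ind (fun B B' _ => ∀ f h, Sm U f → Sm U h → (∀ z ∈ U, z.1 = 0 → f z = h z) →
      Sm U (B f) ∧ Sm U (B' h) ∧ ∀ z ∈ U, z.1 = 0 → B f z = B' h z)
    (fun f h hf hh hfh => ⟨hf, hh, hfh⟩)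
    (by
      intro S T S' T' _ _ h1 h2 f h hf hh hfh
      obtain ⟨a1, a2, a3⟩ := h2 f h hf hh hfh
      exact h1 _ _ a1 a2 a3)
    (F := fun i h => pv h i) (F' := GG) (w := 0)
    (by
      intro i f h hf hh hfh
      refine ⟨(hf.dd hU _).congr' (pv_eq hU hf i), hh.gg hU i, ?_⟩
      intro z hz hz0
      have e : pv f i z = pv h i z := by
        unfold pv
        apply Filter.EventuallyEq.deriv_eq
        filter_upwards [line_nhds (hU.mem_nhds hz) (eV i)] with s hs
        have : z + s • eV i = (z.1, z.2.1, z.2.2 + s • EuclideanSpace.single i (1 : ℝ)) := by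
          simp [eV, Prod.ext_iff]
        rw [this] at hs
        exact hfh _ hs hz0
      change pv f i z = _
      rw [e, pv_eq hU hh i hz]
      simp [GG, hz0]) b
  exact (this g g hg hg fun _ _ _ => rfl).2.2 z hz hz0

def dil (r : ℝ) (z : Z d) : Z d := (r ^ 2 * z.1, r ^ 3 • z.2.1, r • z.2.2)

def Wt (r : ℝ) (T : Op d) (w : ℕ) : Prop :=
  ∀ (c : ℝ) (g : Z d → ℝ), T (fun z => c * g (dil r z)) = fun z => c * r ^ w * T g (dil r z)

lemma Wt.one (r : ℝ) : Wt r (id : Op d) 0 := by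
  intro c g; funext z; simp

lemma Wt.comp {r : ℝ} {S T : Op d} {m n : ℕ} (hS : Wt r S m) (hT : Wt r T n) :
    Wt r (S ∘ T) (m + n) := by
  intro c g
  simp only [Function.comp, hT c g, hS (c * r ^ n) (T g)]
  funext z; ring

lemma Wt.pt (r : ℝ) : Wt (d := d) r (fun h => pt h) 2 := by
  intro c g
  funext z
  simp only [_root_.pt, dil]
  rw [deriv_const_mul_field, deriv_comp_mul_left (r ^ 2) (fun s => g (s, r ^ 3 • z.2.1, r • z.2.2)) z.1]
  simp [mul_assoc]

lemma Wt.px (r : ℝ) (i : Fin d) : Wt (d := d) r (fun h => px h i) 3 := by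
  intro c g
  funext z
  simp only [_root_.px, dil]
  have := deriv_comp_mul_left (r ^ 3) (fun s : ℝ => g (r ^ 2 * z.1, r ^ 3 • z.2.1 +
    s • EuclideanSpace.single i (1 : ℝ), r • z.2.2)) 0
  rw [deriv_const_mul_field]
  simp only [smul_add, smul_smul]
  rw [this]
  simp [mul_assoc]

lemma Wt.pv (r : ℝ) (i : Fin d) : Wt (d := d) r (fun h => pv h i) 1 := by
  intro c g
  funext z
  simp only [_root_.pv, dil]
  have := deriv_comp_mul_left r (fun s : ℝ => g (r ^ 2 * z.1, r ^ 3 • z.2.1,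
    r • z.2.2 + s • EuclideanSpace.single i (1 : ℝ))) 0
  rw [deriv_const_mul_field]
  simp only [smul_add, smul_smul]
  rw [this]
  simp [mul_assoc]

lemma Wt.all (r : ℝ) (n : ℕ) (a b : Fin d → ℕ) :
    Wt r (AA n a ∘ multi (fun i h => _root_.pv h i) b) (2 * n + 3 * (∑ i, a i) + ∑ i, b i) := by
  have hc : ∀ (S T S' T' : Op d) (m n : ℕ), Wt r S m → Wt r T n → Wt r (S ∘ T) (m + n) :=
    fun S T _ _ _ _ h1 h2 => h1.comp h2
  have h1 := iter_ind (fun T _ k => Wt r T k) (Wt.one r) hc (F := fun h : Z d → ℝ => _root_.pt h)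
    (F' := id) (Wt.pt r) n
  have h2 := multi_ind (fun T _ k => Wt r T k) (Wt.one r) hc
    (F := fun i (h : Z d → ℝ) => _root_.px h i) (F' := fun _ => id) (Wt.px r) a
  have h3 := multi_ind (fun T _ k => Wt r T k) (Wt.one r) hc
    (F := fun i (h : Z d → ℝ) => _root_.pv h i) (F' := fun _ => id) (Wt.pv r) b
  have := (h1.comp h2).comp h3
  rw [one_mul] at this
  exact this

lemma LL_of (hU : IsOpen U) {g : Z d → ℝ} (hg : Sm U g) {z : Z d} (hz : z ∈ U)
    (h : Yop g z = ∑ i, pvv g i i z) : LL g z = 0 := by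
  have e1 : ∀ i, pvv g i i z = DD (eV i) (DD (eV i) g) z := by
    intro i
    have hs : Sm U (pv g i) := (hg.dd hU _).congr' (pv_eq hU hg i)
    unfold pvv
    rw [pv_eq hU hs i hz]
    exact DD_congr hU (pv_eq hU hg i) hz
  simp only [Yop, pt_eq hU hg hz, px_eq hU hg _ hz, e1] at h
  simp only [LL]; linarith

lemma eq_dil {r : ℝ} {g : Z d → ℝ} {z : Z d}
    (h : Yop g (dil r z) = ∑ i, pvv g i i (dil r z)) :
    Yop (fun z => g (dil r z)) z = ∑ i, pvv (fun z => g (dil r z)) i i z := by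
  have e0 : (fun z => g (dil r z)) = fun z => 1 * g (dil r z) := by simp
  have e1 : pt (fun z => g (dil r z)) z = r ^ 2 * pt g (dil r z) := by
    have := congrFun (Wt.pt r 1 g) z
    simp only [one_mul] at this
    exact this
  have e2 : ∀ i, px (fun z => g (dil r z)) i z = r ^ 3 * px g i (dil r z) := by
    intro i
    have := congrFun (Wt.px r i 1 g) z
    simp only [one_mul] at this
    exact this
  have e3 : ∀ i, pvv (fun z => g (dil r z)) i i z = r ^ 2 * pvv g i i (dil r z) := by
    intro i
    have := congrFun (((Wt.pv r i).comp (Wt.pv r i)) 1 g) z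
    simp only [Function.comp] at this
    rw [e0]; unfold pvv; rw [this]; simp
  simp only [e3, ← Finset.mul_sum, ← h, Yop, e1, e2, mul_add]
  congr 1
  rw [Finset.mul_sum]
  refine Finset.sum_congr rfl fun i _ => ?_
  simp [dil]; ring

end final

/-- **Bounds on arbitrary derivatives at the origin** for solutions of the Kolmogorov
equation `(∂_t + v·∇_x) g = Δ_v g` on a neighbourhood of the closure of `Q_r`:
`|∂_t^n ∂_x^a ∂_v^b g(0)| ≤ C ‖g‖_{L^∞(Q_r)} / r^{2n+3|a|+|b|}` with
`C = C(d, n, a, b)`. -/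
theorem kolmogorov_derivative_bounds
    (d : ℕ) (hd : 1 ≤ d) (n : ℕ) (a b : Fin d → ℕ) :
    ∃ C : ℝ, 0 < C ∧
      ∀ (r : ℝ), 0 < r →
        ∀ (g : Z d → ℝ) (U : Set (Z d)), IsOpen U →
          closure (kCyl r (zOrigin d)) ⊆ U →
          ContDiffOn ℝ (⊤ : ℕ∞) g U →
          (∀ z ∈ U, Yop g z = ∑ i, pvv g i i z) →
          ENNReal.ofReal |ptIter n (pxMulti a (pvMulti b g)) (zOrigin d)|
            ≤ ENNReal.ofReal C * supAbs (kCyl r (zOrigin d)) g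
              / ENNReal.ofReal (r ^ (2 * n + 3 * (∑ i, a i) + ∑ i, b i)) := by
  obtain ⟨C, hC, H⟩ := ((GM_good b).comp (AA_good n a)).bd (1 / 4) (1 / 2) (by norm_num) (by norm_num)
  refine ⟨C, hC, ?_⟩
  intro r hr g U hU hcl hg heq
  set k := 2 * n + 3 * (∑ i, a i) + ∑ i, b i with hk
  have hrk : 0 < r ^ k := pow_pos hr k
  by_cases htop : supAbs (kCyl r (zOrigin d)) g = ⊤
  · rw [htop, ENNReal.mul_top (by simpa using hC), ENNReal.top_div_of_ne_top ENNReal.ofReal_ne_top]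
    exact le_top
  set M := (supAbs (kCyl r (zOrigin d)) g).toReal with hMdef
  have hMe : supAbs (kCyl r (zOrigin d)) g = ENNReal.ofReal M := (ENNReal.ofReal_toReal htop).symm
  have hM0 : 0 ≤ M := ENNReal.toReal_nonneg
  have hM : ∀ z ∈ kCyl r (zOrigin d), |g z| ≤ M := by
    intro z hz
    have : ENNReal.ofReal |g z| ≤ ENNReal.ofReal M := by
      rw [← hMe]; exact le_iSup₂_of_le z hz le_rfl
    exact (ENNReal.ofReal_le_ofReal_iff hM0).1 this
  have hdil : ContDiff ℝ (⊤ : ℕ∞) (dil (d := d) r) := by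
    unfold dil; fun_prop
  set U' : Set (Z d) := dil r ⁻¹' U with hU'
  have hU'o : IsOpen U' := hU.preimage hdil.continuous
  have hmem : ∀ z ∈ KK d (1 / 2), dil r z ∈ kCyl r (zOrigin d) := by
    intro z hz
    obtain ⟨h1, h2, h3, h4⟩ := mem_KK.1 hz
    have r2 : 0 < r ^ 2 := by positivity
    have r3 : 0 < r ^ 3 := by positivity
    refine ⟨?_, ?_, ?_, ?_⟩
    · simp only [dil, zOrigin]; nlinarith
    · simp only [dil, zOrigin]; nlinarith
    · simp only [dil, zOrigin, sub_zero, smul_zero, norm_smul, Real.norm_eq_abs, abs_of_pos r3]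
      nlinarith
    · simp only [dil, zOrigin, sub_zero, norm_smul, Real.norm_eq_abs, abs_of_pos hr]
      nlinarith
  have hKU : KK d (1 / 2) ⊆ U' := fun z hz => hcl (subset_closure (hmem z hz))
  have hg' : Sm U' (fun z => g (dil r z)) := ContDiffOn.comp hg hdil.contDiffOn (fun z hz => hz)
  have hsol : ∀ z ∈ U', LL (fun z => g (dil r z)) z = 0 :=
    fun z hz => LL_of hU'o hg' hz (eq_dil (heq _ hz))
  have h0K : zOrigin d ∈ KK d (1 / 4) := by
    rw [mem_KK]; simp [zOrigin]
  have h0U : zOrigin d ∈ U' := hKU (KK_mono (by norm_num) h0K)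
  have bd := H U' hU'o hKU _ hg' hsol M (fun z hz => hM _ (hmem z hz)) _ h0K
  have hAn := AA_nice hU'o n a
  have e1 : multi GG b (AA n a (fun z => g (dil r z))) (zOrigin d)
      = r ^ k * ptIter n (pxMulti a (pvMulti b g)) (zOrigin d) := by
    rw [← slice hU'o b (hAn.sm _ hg') h0U rfl, ← comm_AB hU'o hAn b hg' h0U]
    have h := congrFun (Wt.all r n a b 1 g) (zOrigin d)
    have hd0 : dil r (zOrigin d) = zOrigin d := by simp [dil, zOrigin]
    rw [hd0] at h
    simp only [one_mul] at h
    exact h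
  simp only [Function.comp] at bd
  rw [e1, abs_mul, abs_of_pos hrk] at bd
  rw [hMe, ← ENNReal.ofReal_mul hC.le, ← ENNReal.ofReal_div_of_pos hrk]
  apply ENNReal.ofReal_le_ofReal
  rw [le_div_iff₀ hrk]
  linarith
end
end
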